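/- arXiv:1908.06794 — 4 statements merged into one kernel-verified Lean document; each statement's English description precedes it below -/
import Mathlib

section
/- Let n ≥ 2, 1 < k ≤ n, and let a ∈ ℝ^{n+1} with |a| > 1. Suppose f₁ and f₂ are continuous functions on S^n satisfying the functional equation f_i(x) = (W_a f_i)(x) for all x ∈ S^n (i = 1, 2), and suppose that ∫_{S^n ∩ τ} f₁ dH^{k−1} = ∫_{S^n ∩ τ} f₂ dH^{k−1} for every k-dimensional affine plane τ passing through a and meeting the open unit ball B^{n+1}. Then f₁ = f₂ on S^n. -/
open MeasureTheory Metric Matrix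
open scoped InnerProductSpace ENNReal

/-- `Euc m` is the Euclidean space `ℝ^m`. -/
abbrev Euc (m : ℕ) : Type := EuclideanSpace ℝ (Fin m)

/-- The Möbius transformation `φ_b x = (b − P_b x − s_b Q_b x)/(1 − x·b)`,
where `P_b x = ((b·x)/|b|²) b`, `Q_b x = x − P_b x`, `s_b = √(1 − |b|²)`. -/
noncomputable def phiMap {n : ℕ} (b x : Euc (n + 1)) : Euc (n + 1) :=
  (1 - ⟪x, b⟫_ℝ)⁻¹ •
    (b - (⟪b, x⟫_ℝ / ‖b‖ ^ 2) • b -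
      Real.sqrt (1 - ‖b‖ ^ 2) • (x - (⟪b, x⟫_ℝ / ‖b‖ ^ 2) • b))

/-- `a* = a/|a|²`, the inversion of `a` in the unit sphere. -/
noncomputable def aStar {n : ℕ} (a : Euc (n + 1)) : Euc (n + 1) := (‖a‖ ^ 2)⁻¹ • a

/-- `s_{a*} = √(1 − |a*|²)`. -/
noncomputable def sStar {n : ℕ} (a : Euc (n + 1)) : ℝ := Real.sqrt (1 - ‖aStar a‖ ^ 2)

/-- The reflection `R_a x = x − 2((x·a)/|a|²) a` in the hyperplane `a^⊥`. -/
noncomputable def reflMap {n : ℕ} (a x : Euc (n + 1)) : Euc (n + 1) :=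
  x - ((2 * ⟪x, a⟫_ℝ) / ‖a‖ ^ 2) • a

/-- `τ_a x = ((|a|² − 1) x + 2(1 − x·a) a)/|x − a|²`, the second point at which the
line through `a` and `x` meets the unit sphere. -/
noncomputable def tauMap {n : ℕ} (a x : Euc (n + 1)) : Euc (n + 1) :=
  (‖x - a‖ ^ 2)⁻¹ • ((‖a‖ ^ 2 - 1) • x + (2 * (1 - ⟪x, a⟫_ℝ)) • a)

/-- `(W_a f)(x) = ρ_{a*}(x) f(τ_a x)` with `ρ_{a*}(x) = ((|a|²−1)/|a−x|²)^{k−1}`. -/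
noncomputable def Wop {n : ℕ} (k : ℕ) (a : Euc (n + 1)) (f : Euc (n + 1) → ℝ)
    (x : Euc (n + 1)) : ℝ :=
  ((‖a‖ ^ 2 - 1) / ‖a - x‖ ^ 2) ^ (k - 1) * f (tauMap a x)

/-!
Let `R = √(‖a‖ ^ 2 - 1)`. The inversion with center `a` and radius `R` preserves the unit sphere and
every plane through `a`, and `τ_a` is its restriction to the sphere. It exchanges the parts of a
section inside and outside of `closedBall a R`, so for `f = W_a f` the change of variables gives
both parts the same integral, and it suffices to recover `f` from the integrals over the near parts.

Write `a = α • e` with `‖e‖ = 1`. A Lorentz boost is a projective map of the ball, conformal on the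
sphere, which sends the point at infinity in the direction `e` to `a`. It carries the upper
hemisphere with pole `e` to the near part of the sphere, and half-sections by planes parallel to `e`
to near parts of sections through `a`. Projected vertically to the equatorial disc, these become
the slices of the disc by affine subspaces of dimension `k - 1`, and the surface measure of a slice
of radius `r` has there the density `r / √(1 - ‖y‖ ^ 2)`, in which the dependence on the slice
splits off. The hypothesis thus says that a single integrable function on the disc has vanishing
integral over each slice, so its Fourier transform vanishes.
-/

open Set Filter Topology Module
open scoped NNReal

section DensityComparison

variable {X : Type*} [MeasurableSpace X] {μ ν ρ : Measure X} {φ : X → ℝ≥0}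

theorem measure_le_measure_of_density_bounds (hφ : Measurable φ)
    (hν : ∀ A, MeasurableSet A → ∀ c : ℝ≥0, (∀ x ∈ A, φ x ≤ c) → ν A ≤ c * μ A)
    (hρ : ∀ A, MeasurableSet A → ∀ c : ℝ≥0, (∀ x ∈ A, c ≤ φ x) → c * μ A ≤ ρ A) : ν ≤ ρ := by
  refine Measure.le_iff.2 fun s hs ↦ ?_
  set ψ : X → ℝ≥0∞ := fun x ↦ φ x
  have hψ : Measurable ψ := hφ.coe_nnreal_ennreal
  have slices : ∀ t : ℝ≥0, 1 < t → ν s ≤ t * ρ s := by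
    intro t ht
    have ht₀ : t ≠ 0 := (zero_lt_one.trans ht).ne'
    have slice (n : ℤ) : ν (s ∩ ψ ⁻¹' Ico ((t : ℝ≥0∞) ^ n) ((t : ℝ≥0∞) ^ (n + 1))) ≤
        t * ρ (s ∩ ψ ⁻¹' Ico ((t : ℝ≥0∞) ^ n) ((t : ℝ≥0∞) ^ (n + 1))) := by
      set A := s ∩ ψ ⁻¹' Ico ((t : ℝ≥0∞) ^ n) ((t : ℝ≥0∞) ^ (n + 1))
      have hA : MeasurableSet A := hs.inter (hψ measurableSet_Ico)
      have lower : ∀ x ∈ A, t ^ n ≤ φ x := fun x hx ↦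
        ENNReal.coe_le_coe.1 ((ENNReal.coe_zpow ht₀ n).trans_le hx.2.1)
      have upper : ∀ x ∈ A, φ x ≤ t ^ (n + 1) := fun x hx ↦
        ENNReal.coe_le_coe.1 (hx.2.2.le.trans_eq (ENNReal.coe_zpow ht₀ (n + 1)).symm)
      calc ν A ≤ (t ^ (n + 1) : ℝ≥0) * μ A := hν A hA _ upper
        _ = t * ((t ^ n : ℝ≥0) * μ A) := by
          rw [zpow_add_one₀ ht₀, mul_comm (_ ^ n), ENNReal.coe_mul, mul_assoc]
        _ ≤ t * ρ A := by gcongr; exact hρ A hA _ lower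
    have zero : ν (s ∩ ψ ⁻¹' {0}) = 0 := by
      have hA := hs.inter (hψ (measurableSet_singleton 0))
      simpa using hν _ hA 0 fun x hx ↦ (ENNReal.coe_eq_zero.1 hx.2).le
    have top : s ∩ ψ ⁻¹' {∞} = ∅ := by ext; simp [ψ]
    rw [measure_eq_measure_preimage_add_measure_tsum_Ico_zpow ν hψ hs ht, zero, top,
      measure_empty, add_zero, zero_add,
      measure_eq_measure_preimage_add_measure_tsum_Ico_zpow ρ hψ hs ht, mul_add,
      ← ENNReal.tsum_mul_left]
    exact (ENNReal.tsum_le_tsum slice).trans le_add_self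
  have lim : Tendsto (fun t : ℝ≥0 ↦ (t : ℝ≥0∞) * ρ s) (𝓝[>] 1) (𝓝 (1 * ρ s)) := by
    refine ENNReal.Tendsto.mul_const ?_ (.inl one_ne_zero)
    exact (ENNReal.tendsto_coe.2 tendsto_id).mono_left nhdsWithin_le_nhds
  rw [one_mul] at lim
  exact ge_of_tendsto lim (eventually_nhdsWithin_of_forall slices)

theorem eq_withDensity_of_density_bounds (hφ : Measurable φ)
    (hle : ∀ A, MeasurableSet A → ∀ c : ℝ≥0, (∀ x ∈ A, φ x ≤ c) → ν A ≤ c * μ A)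
    (hge : ∀ A, MeasurableSet A → ∀ c : ℝ≥0, (∀ x ∈ A, c ≤ φ x) → c * μ A ≤ ν A) :
    ν = μ.withDensity fun x ↦ φ x := by
  refine le_antisymm (measure_le_measure_of_density_bounds hφ hle fun A hA c h ↦ ?_)
    (measure_le_measure_of_density_bounds hφ (fun A hA c h ↦ ?_) hge)
  · rw [withDensity_apply _ hA, ← setLIntegral_const]
    exact setLIntegral_mono hφ.coe_nnreal_ennreal fun x hx ↦ by exact_mod_cast h x hx
  · rw [withDensity_apply _ hA, ← setLIntegral_const]
    exact setLIntegral_mono measurable_const fun x hx ↦ by exact_mod_cast h x hx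

end DensityComparison

/-- `f` is a Möbius map on `s` with conformal factor `J`: it scales the distance of `x` and `y` by
the geometric mean of `J x` and `J y`. Inversions, stereographic projections and their compositions
have this property, which replaces differential calculus in the change of variables below. -/
structure IsMobiusOn {X Y : Type*} [PseudoMetricSpace X] [PseudoMetricSpace Y]
    (f : X → Y) (J : X → ℝ) (s : Set X) : Prop where
  continuousOn_factor : ContinuousOn J s
  pos : ∀ x ∈ s, 0 < J x
  dist_sq : ∀ x ∈ s, ∀ y ∈ s, dist (f x) (f y) ^ 2 = J x * J y * dist x y ^ 2

namespace IsMobiusOn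

section Basic

variable {X Y Z : Type*} [PseudoMetricSpace X] [PseudoMetricSpace Y] [PseudoMetricSpace Z]
  {f : X → Y} {J : X → ℝ} {s t : Set X}

theorem mono (h : IsMobiusOn f J s) (hts : t ⊆ s) : IsMobiusOn f J t :=
  ⟨h.continuousOn_factor.mono hts, fun x hx ↦ h.pos x (hts hx),
    fun x hx y hy ↦ h.dist_sq x (hts hx) y (hts hy)⟩

theorem of_isometry (hf : Isometry f) : IsMobiusOn f (fun _ ↦ 1) s :=
  ⟨continuousOn_const, fun _ _ ↦ one_pos, fun x _ y _ ↦ by rw [hf.dist_eq, one_mul, one_mul]⟩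

theorem dist_le (h : IsMobiusOn f J s) {c : ℝ≥0} {x y : X} (hx : x ∈ s) (hy : y ∈ s)
    (hxc : J x ≤ c) (hyc : J y ≤ c) : dist (f x) (f y) ≤ c * dist x y := by
  refine le_of_sq_le_sq ?_ (by positivity)
  rw [h.dist_sq x hx y hy, mul_pow, sq (c : ℝ)]
  gcongr
  exact (h.pos y hy).le

theorem le_dist (h : IsMobiusOn f J s) {c : ℝ≥0} {x y : X} (hx : x ∈ s) (hy : y ∈ s)
    (hxc : c ≤ J x) (hyc : c ≤ J y) : c * dist x y ≤ dist (f x) (f y) := by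
  refine le_of_sq_le_sq ?_ dist_nonneg
  rw [h.dist_sq x hx y hy, mul_pow, sq (c : ℝ)]
  gcongr
  exact (h.pos x hx).le

theorem lipschitzOnWith (h : IsMobiusOn f J s) {c : ℝ≥0} (hc : ∀ x ∈ s, J x ≤ c) :
    LipschitzOnWith c f s :=
  .of_dist_le_mul fun x hx y hy ↦ h.dist_le hx hy (hc x hx) (hc y hy)

theorem exists_lipschitzOnWith (h : IsMobiusOn f J s) (hs : IsCompact s) :
    ∃ c, LipschitzOnWith c f s := by
  obtain ⟨M, hM⟩ := hs.bddAbove_image h.continuousOn_factor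
  exact ⟨M.toNNReal, h.lipschitzOnWith fun x hx ↦
    (hM (mem_image_of_mem J hx)).trans (Real.le_coe_toNNReal M)⟩

theorem continuousOn (h : IsMobiusOn f J s) : ContinuousOn f s := by
  intro x hx
  have lim : Tendsto (fun y ↦ √(J y * J x * dist y x ^ 2)) (𝓝[s] x) (𝓝 0) := by
    have : ContinuousWithinAt (fun y ↦ √(J y * J x * dist y x ^ 2)) s x :=
      (((h.continuousOn_factor x hx).mul_const _).mul (by fun_prop)).sqrt
    simpa [ContinuousWithinAt] using this
  refine tendsto_iff_dist_tendsto_zero.2 (lim.congr' ?_)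
  filter_upwards [self_mem_nhdsWithin] with y hy
  rw [← h.dist_sq y hy x hx, Real.sqrt_sq dist_nonneg]

theorem comp {g : Y → Z} {K : Y → ℝ} {t : Set Y} (hg : IsMobiusOn g K t) (hf : IsMobiusOn f J s)
    (hst : MapsTo f s t) : IsMobiusOn (g ∘ f) (fun x ↦ K (f x) * J x) s where
  continuousOn_factor :=
    (hg.continuousOn_factor.comp hf.continuousOn hst).mul hf.continuousOn_factor
  pos x hx := mul_pos (hg.pos _ (hst hx)) (hf.pos x hx)
  dist_sq x hx y hy := by
    rw [Function.comp_apply, Function.comp_apply, hg.dist_sq _ (hst hx) _ (hst hy),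
      hf.dist_sq x hx y hy]
    ring

end Basic

section Measure

variable {X Y : Type*} [MetricSpace X] [MetricSpace Y] {f : X → Y} {J : X → ℝ} {s : Set X} {d : ℝ}

theorem injOn (h : IsMobiusOn f J s) : InjOn f s := by
  intro x hx y hy hxy
  have := h.dist_sq x hx y hy
  rw [hxy, dist_self, zero_pow two_ne_zero, eq_comm, mul_eq_zero] at this
  exact dist_eq_zero.1 (pow_eq_zero_iff two_ne_zero |>.1
    (this.resolve_left (mul_pos (h.pos x hx) (h.pos y hy)).ne'))

variable [MeasurableSpace X] [BorelSpace X] [MeasurableSpace Y] [BorelSpace Y]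

theorem hausdorffMeasure_image_le (h : IsMobiusOn f J s) (hd : 0 ≤ d) {c : ℝ≥0}
    (hc : ∀ x ∈ s, J x ≤ c) : μH[d] (f '' s) ≤ (c : ℝ≥0∞) ^ d * μH[d] s :=
  (h.lipschitzOnWith hc).hausdorffMeasure_image_le hd

theorem le_hausdorffMeasure_image (h : IsMobiusOn f J s) (hd : 0 < d) {c : ℝ≥0}
    (hc : ∀ x ∈ s, c ≤ J x) : (c : ℝ≥0∞) ^ d * μH[d] s ≤ μH[d] (f '' s) := by
  obtain rfl | hc₀ := eq_or_ne c 0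
  · simp [hd]
  have anti : AntilipschitzWith c⁻¹ (s.domRestrict f) := .of_le_mul_dist fun x y ↦ by
    rw [NNReal.coe_inv, ← div_eq_inv_mul, le_div_iff₀' (by positivity)]
    exact h.le_dist x.2 y.2 (hc x x.2) (hc y y.2)
  have bound := anti.le_hausdorffMeasure_image hd.le univ
  rw [image_univ, range_domRestrict, ← isometry_subtype_coe.hausdorffMeasure_image (.inl hd.le),
    image_univ, Subtype.range_coe, ENNReal.coe_inv hc₀, ENNReal.inv_rpow,
    ← ENNReal.div_eq_inv_mul] at bound
  exact (mul_comm _ _).trans_le (ENNReal.mul_le_of_le_div bound)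

theorem measurableEmbedding [CompactSpace X] (h : IsMobiusOn f J univ) : MeasurableEmbedding f :=
  ((continuousOn_univ.1 h.continuousOn).isClosedEmbedding
    (injOn_univ.1 h.injOn)).measurableEmbedding

theorem comap_hausdorffMeasure [CompactSpace X] (h : IsMobiusOn f J univ) (hd : 0 < d) :
    Measure.comap f μH[d] = (μH[d]).withDensity fun x ↦ ((J x).toNNReal ^ d : ℝ≥0) := by
  have hJ : Continuous J := continuousOn_univ.1 h.continuousOn_factor
  have root (c : ℝ≥0) : ∃ b : ℝ≥0, b ^ d = c := ⟨c ^ d⁻¹, NNReal.rpow_inv_rpow hd.ne' c⟩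
  refine eq_withDensity_of_density_bounds (by fun_prop) (fun A _ c hc ↦ ?_) fun A _ c hc ↦ ?_ <;>
  obtain ⟨b, rfl⟩ := root c <;>
  simp only [NNReal.rpow_le_rpow_iff hd] at hc <;>
  rw [h.measurableEmbedding.comap_apply, ENNReal.coe_rpow_of_nonneg _ hd.le]
  · exact (h.mono (subset_univ A)).hausdorffMeasure_image_le hd.le fun x hx ↦
      Real.toNNReal_le_iff_le_coe.1 (hc x hx)
  · exact (h.mono (subset_univ A)).le_hausdorffMeasure_image hd fun x hx ↦
      (Real.le_toNNReal_iff_coe_le (h.pos x trivial).le).1 (hc x hx)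

theorem setIntegral_image {F : Type*} [NormedAddCommGroup F] [NormedSpace ℝ F]
    (h : IsMobiusOn f J s) (hs : IsCompact s) (hd : 0 < d) (g : Y → F) :
    ∫ y in f '' s, g y ∂μH[d] = ∫ x in s, J x ^ d • g (f x) ∂μH[d] := by
  have : CompactSpace s := isCompact_iff_compactSpace.1 hs
  have hsub : IsMobiusOn (s.domRestrict f) (fun x ↦ J x * 1) univ :=
    h.comp (of_isometry isometry_subtype_coe) fun x _ ↦ x.2
  have hJ : Continuous fun x : s ↦ J x * 1 := continuousOn_univ.1 hsub.continuousOn_factor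
  calc ∫ y in f '' s, g y ∂μH[d]
      = ∫ y, g y ∂Measure.map (s.domRestrict f) (Measure.comap (s.domRestrict f) μH[d]) := by
        rw [hsub.measurableEmbedding.map_comap, range_domRestrict]
    _ = ∫ x : s, (J x * 1) ^ d • g (f x) ∂μH[d] := by
        rw [hsub.measurableEmbedding.integral_map, hsub.comap_hausdorffMeasure hd,
          integral_withDensity_eq_integral_smul (hJ.measurable.real_toNNReal.pow_const d)]
        refine integral_congr_ae (.of_forall fun x ↦ ?_)
        simp only [NNReal.smul_def, NNReal.coe_rpow, Real.coe_toNNReal _ (hsub.pos x trivial).le,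
          domRestrict_apply]
    _ = ∫ x in s, J x ^ d • g (f x) ∂μH[d] := by
        simp only [mul_one]
        rw [← (MeasurableEmbedding.subtype_coe hs.measurableSet).integral_map
            fun x ↦ J x ^ d • g (f x),
          isometry_subtype_coe.map_hausdorffMeasure (.inl hd.le), Subtype.range_coe]

end Measure
end IsMobiusOn

section Inversion

open EuclideanGeometry

variable {E : Type*} [NormedAddCommGroup E] [InnerProductSpace ℝ E] {a x : E} {R : ℝ} {d : ℕ}

theorem isMobiusOn_inversion (hR : R ≠ 0) :
    IsMobiusOn (inversion a R) (fun x ↦ R ^ 2 / dist x a ^ 2) {a}ᶜ where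
  continuousOn_factor :=
    continuousOn_const.div (by fun_prop) fun x hx ↦ pow_ne_zero 2 (dist_ne_zero.2 hx)
  pos x hx := by have := dist_pos.2 hx; positivity
  dist_sq x hx y hy := by rw [dist_inversion_inversion hx hy]; ring

theorem inversion_mem_affineSubspace {τ : AffineSubspace ℝ E} (ha : a ∈ τ) (hx : x ∈ τ) :
    inversion a R x ∈ τ :=
  inversion_eq_lineMap a R x ▸ AffineMap.lineMap_mem _ ha hx

theorem inversion_mem_sphere_of_orthogonal {r : ℝ} (h : ‖a‖ ^ 2 = R ^ 2 + r ^ 2) (hxa : x ≠ a)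
    (hx : x ∈ sphere 0 r) : inversion a R x ∈ sphere 0 r := by
  have hxr : ‖x‖ = r := mem_sphere_zero_iff_norm.1 hx
  set c := (R / dist x a) ^ 2 with hc
  have hcR : c * ‖x - a‖ ^ 2 = R ^ 2 := by
    rw [hc, dist_eq_norm, div_pow, div_mul_cancel₀]
    exact pow_ne_zero 2 (norm_ne_zero_iff.2 (sub_ne_zero.2 hxa))
  have hinner : 2 * ⟪x - a, a⟫_ℝ = r ^ 2 - ‖a‖ ^ 2 - ‖x - a‖ ^ 2 := by
    rw [norm_sub_sq_real, inner_sub_left, real_inner_self_eq_norm_sq, hxr]; ring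
  rw [mem_sphere_zero_iff_norm, ← sq_eq_sq₀ (norm_nonneg _) (hxr ▸ norm_nonneg x), inversion,
    ← hc, vsub_eq_sub, vadd_eq_add, norm_add_sq_real, norm_smul, mul_pow, real_inner_smul_left,
    Real.norm_of_nonneg (by positivity)]
  linear_combination (c - 1) * hcR + c * hinner + (1 - c) * h

theorem inter_closedBall_union_inversion_image {T : Set E} (hR : 0 < R)
    (hinv : MapsTo (inversion a R) T T) :
    T ∩ closedBall a R ∪ inversion a R '' (T ∩ closedBall a R) = T := by
  refine Subset.antisymm
    (union_subset inter_subset_left (hinv.mono_left inter_subset_left).image_subset) fun x hx ↦ ?_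
  rcases le_total (dist x a) R with h | h
  · exact .inl ⟨hx, h⟩
  · refine .inr ⟨inversion a R x, ⟨hinv hx, ?_⟩, inversion_inversion a hR.ne' x⟩
    rw [mem_closedBall, dist_inversion_center, sq]
    exact div_le_of_le_mul₀ dist_nonneg hR.le (by gcongr)

/-- The Kelvin-type transform `f ↦ J ^ d • f ∘ I` of order `d`, where `I` is the inversion with
center `a` and radius `R` and `J` is its conformal factor. -/
noncomputable def kelvinTransform (d : ℕ) (a : E) (R : ℝ) (f : E → ℝ) (x : E) : ℝ :=
  (R ^ 2 / dist x a ^ 2) ^ d * f (inversion a R x)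

theorem kelvinTransform_sub (f g : E → ℝ) :
    kelvinTransform d a R (f - g) x = kelvinTransform d a R f x - kelvinTransform d a R g x := by
  rw [kelvinTransform, Pi.sub_apply, mul_sub, kelvinTransform, kelvinTransform]

variable [MeasurableSpace E] [BorelSpace E]

theorem hausdorffMeasure_ne_top_of_mapsTo_inversion {T : Set E} (hR : 0 < R) (hT : IsCompact T)
    (haT : a ∉ T) (hinv : MapsTo (inversion a R) T T)
    (hfin : μH[d] (T ∩ closedBall a R) ≠ ∞) : μH[d] T ≠ ∞ := by
  obtain ⟨c, hc⟩ := ((isMobiusOn_inversion (a := a) hR.ne').mono fun x hx ↦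
    ne_of_mem_of_not_mem hx.1 haT).exists_lipschitzOnWith (hT.inter_right isClosed_closedBall)
  have hfar := hc.hausdorffMeasure_image_le d.cast_nonneg
  rw [← inter_closedBall_union_inversion_image hR hinv]
  refine measure_union_ne_top hfin (ne_top_of_le_ne_top ?_ hfar)
  finiteness

theorem setIntegral_eq_two_mul_of_kelvinTransform_eq {T : Set E} {g : E → ℝ} (hR : 0 < R)
    (hd : 0 < d) (hT : IsCompact T) (haT : a ∉ T) (hinv : MapsTo (inversion a R) T T)
    (hnull : μH[d] (T ∩ sphere a R) = 0) (hg : IntegrableOn g T μH[d])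
    (hK : EqOn (kelvinTransform d a R g) g T) :
    ∫ x in T, g x ∂μH[d] = 2 * ∫ x in T ∩ closedBall a R, g x ∂μH[d] := by
  set N := T ∩ closedBall a R
  have hNT : N ⊆ T := inter_subset_left
  have hNc : IsCompact N := hT.inter_right isClosed_closedBall
  have hmob : IsMobiusOn (inversion a R) (fun x ↦ R ^ 2 / dist x a ^ 2) N :=
    (isMobiusOn_inversion hR.ne').mono fun x hx ↦ ne_of_mem_of_not_mem (hNT hx) haT
  have hoverlap : N ∩ inversion a R '' N ⊆ T ∩ sphere a R := by
    rintro _ ⟨⟨hxT, hx⟩, y, ⟨hyT, hy⟩, rfl⟩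
    refine ⟨hxT, le_antisymm hx ?_⟩
    have hpos : 0 < dist y a := dist_pos.2 (ne_of_mem_of_not_mem hyT haT)
    rw [dist_inversion_center, le_div_iff₀ hpos, sq]
    exact mul_le_mul_of_nonneg_left hy hR.le
  have hfar : ∫ x in inversion a R '' N, g x ∂μH[d] = ∫ x in N, g x ∂μH[d] := by
    rw [hmob.setIntegral_image hNc (by exact_mod_cast hd)]
    refine setIntegral_congr_fun hNc.measurableSet fun x hx ↦ ?_
    simpa only [kelvinTransform, Real.rpow_natCast, smul_eq_mul] using hK (hNT hx)
  have hfarc : IsCompact (inversion a R '' N) := hNc.image_of_continuousOn hmob.continuousOn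
  conv_lhs => rw [← inter_closedBall_union_inversion_image hR hinv]
  rw [setIntegral_union₀ (measure_mono_null hoverlap hnull) hfarc.measurableSet.nullMeasurableSet
    (hg.mono_set hNT) (hg.mono_set (hinv.mono_left hNT).image_subset), hfar, two_mul]

end Inversion

/-- The Lorentz boost in the direction `e` acting on the ball by projective maps: it is the linear
map of `E × ℝ` with matrix `(α, 1; 1, α)` on `ℝ ∙ e × ℝ` and `√(α ^ 2 - 1) • id` on the orthogonal
complement, read in the affine chart. It sends the point at infinity of the direction `e` to
`α • e`, hence the chords parallel to `e` to the chords through `α • e`. -/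
noncomputable def boost {E : Type*} [NormedAddCommGroup E] [InnerProductSpace ℝ E] (e : E) (α : ℝ)
    (x : E) : E :=
  (α + ⟪x, e⟫_ℝ)⁻¹ • (√(α ^ 2 - 1) • (x - ⟪x, e⟫_ℝ • e) + (α * ⟪x, e⟫_ℝ + 1) • e)

section Boost

variable {E : Type*} [NormedAddCommGroup E] [InnerProductSpace ℝ E] {e x y : E} {α : ℝ}

theorem sqrt_sq_sub_one_pos (hα : 1 < α) : 0 < √(α ^ 2 - 1) :=
  Real.sqrt_pos.2 (sub_pos.2 (one_lt_pow₀ hα two_ne_zero))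

theorem add_inner_pos (he : ‖e‖ = 1) (hα : 1 < α) (hx : ‖x‖ ≤ 1) : 0 < α + ⟪x, e⟫_ℝ := by
  have := neg_le_of_abs_le ((abs_real_inner_le_norm x e).trans_eq (by rw [he, mul_one]))
  linarith

theorem inner_boost_right (he : ‖e‖ = 1) :
    ⟪boost e α x, e⟫_ℝ = (α * ⟪x, e⟫_ℝ + 1) / (α + ⟪x, e⟫_ℝ) := by
  simp only [boost, inner_add_left, inner_sub_left, real_inner_smul_left,
    inner_self_eq_one_of_norm_eq_one he]
  ring

theorem one_sub_inner_boost_boost (he : ‖e‖ = 1) (hα : 1 < α) (hx : α + ⟪x, e⟫_ℝ ≠ 0)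
    (hy : α + ⟪y, e⟫_ℝ ≠ 0) :
    1 - ⟪boost e α x, boost e α y⟫_ℝ =
      (α ^ 2 - 1) * (1 - ⟪x, y⟫_ℝ) / ((α + ⟪x, e⟫_ℝ) * (α + ⟪y, e⟫_ℝ)) := by
  have hR : √(α ^ 2 - 1) ^ 2 = α ^ 2 - 1 := Real.sq_sqrt (by nlinarith)
  simp only [boost, inner_add_left, inner_sub_left, real_inner_smul_left, inner_add_right,
    inner_sub_right, real_inner_smul_right, real_inner_comm y e,
    inner_self_eq_one_of_norm_eq_one he]
  field_simp
  linear_combination (⟪x, e⟫_ℝ * ⟪y, e⟫_ℝ - ⟪x, y⟫_ℝ) * hR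

theorem norm_boost_eq_one (he : ‖e‖ = 1) (hα : 1 < α) (hx : ‖x‖ = 1) : ‖boost e α x‖ = 1 := by
  have h := (add_inner_pos he hα hx.le).ne'
  have := one_sub_inner_boost_boost he hα h h
  rw [real_inner_self_eq_norm_sq, real_inner_self_eq_norm_sq, hx, one_pow, sub_self, mul_zero,
    zero_div, sub_eq_zero] at this
  exact (sq_eq_sq₀ (norm_nonneg _) zero_le_one).1 (this.symm.trans (one_pow 2).symm)

theorem dist_sq_of_norm_eq_one (hx : ‖x‖ = 1) (hy : ‖y‖ = 1) :
    dist x y ^ 2 = 2 * (1 - ⟪x, y⟫_ℝ) := by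
  rw [dist_eq_norm, norm_sub_sq_real, hx, hy]
  ring

theorem isMobiusOn_boost (he : ‖e‖ = 1) (hα : 1 < α) :
    IsMobiusOn (boost e α) (fun x ↦ √(α ^ 2 - 1) / (α + ⟪x, e⟫_ℝ)) (sphere 0 1) where
  continuousOn_factor := continuousOn_const.div (by fun_prop) fun x hx ↦
    (add_inner_pos he hα (mem_sphere_zero_iff_norm.1 hx).le).ne'
  pos x hx := div_pos (sqrt_sq_sub_one_pos hα)
    (add_inner_pos he hα (mem_sphere_zero_iff_norm.1 hx).le)
  dist_sq x hx y hy := by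
    rw [mem_sphere_zero_iff_norm] at hx hy
    rw [dist_sq_of_norm_eq_one (norm_boost_eq_one he hα hx) (norm_boost_eq_one he hα hy),
      dist_sq_of_norm_eq_one hx hy, one_sub_inner_boost_boost he hα
        (add_inner_pos he hα hx.le).ne' (add_inner_pos he hα hy.le).ne', div_mul_div_comm,
      Real.mul_self_sqrt (by nlinarith)]
    ring

theorem boost_sub_smul (hx : α + ⟪x, e⟫_ℝ ≠ 0) (hα : 1 < α) :
    boost e α x - α • e =
      (√(α ^ 2 - 1) / (α + ⟪x, e⟫_ℝ)) • (x - (⟪x, e⟫_ℝ + √(α ^ 2 - 1)) • e) := by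
  have hR : √(α ^ 2 - 1) * √(α ^ 2 - 1) = α ^ 2 - 1 := Real.mul_self_sqrt (by nlinarith)
  rw [boost]
  match_scalars <;> field_simp
  linear_combination hR

theorem boost_neg_boost (he : ‖e‖ = 1) (hα : 1 < α) (hx : α + ⟪x, e⟫_ℝ ≠ 0) :
    boost (-e) α (boost e α x) = x := by
  have hα₀ : α ^ 2 - 1 ≠ 0 := by nlinarith
  have hR : √(α ^ 2 - 1) ^ 2 = α ^ 2 - 1 := Real.sq_sqrt (by nlinarith)
  have hden : α + -((α * ⟪x, e⟫_ℝ + 1) / (α + ⟪x, e⟫_ℝ)) = (α ^ 2 - 1) / (α + ⟪x, e⟫_ℝ) := by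
    field_simp
    ring
  rw [boost, inner_neg_right, inner_boost_right he, hden, boost]
  match_scalars <;> field_simp
  · exact hR
  · linear_combination -⟪x, e⟫_ℝ * hR

theorem dist_boost_smul_sq (he : ‖e‖ = 1) (hα : 1 < α) (hx : ‖x‖ = 1) :
    dist (boost e α x) (α • e) ^ 2 = (α ^ 2 - 1) * ((α - ⟪x, e⟫_ℝ) / (α + ⟪x, e⟫_ℝ)) := by
  have hpos := add_inner_pos he hα hx.le
  rw [dist_eq_norm, norm_sub_sq_real, norm_boost_eq_one he hα hx, real_inner_smul_right,
    inner_boost_right he, norm_smul, he, mul_one, Real.norm_eq_abs, sq_abs]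
  field_simp
  ring

theorem dist_boost_smul_le_iff (he : ‖e‖ = 1) (hα : 1 < α) (hx : ‖x‖ = 1) :
    dist (boost e α x) (α • e) ≤ √(α ^ 2 - 1) ↔ 0 ≤ ⟪x, e⟫_ℝ := by
  have hα₀ : 0 < α ^ 2 - 1 := by nlinarith
  rw [Real.le_sqrt dist_nonneg hα₀.le, dist_boost_smul_sq he hα hx, mul_le_iff_le_one_right hα₀,
    div_le_one (add_inner_pos he hα hx.le)]
  constructor <;> intro h <;> linarith

theorem dist_boost_smul_eq_iff (he : ‖e‖ = 1) (hα : 1 < α) (hx : ‖x‖ = 1) :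
    dist (boost e α x) (α • e) = √(α ^ 2 - 1) ↔ ⟪x, e⟫_ℝ = 0 := by
  have hα₀ : 0 < α ^ 2 - 1 := by nlinarith
  rw [eq_comm, Real.sqrt_eq_iff_mul_self_eq hα₀.le dist_nonneg, ← sq, dist_boost_smul_sq he hα hx,
    eq_comm, mul_eq_left₀ hα₀.ne', div_eq_one_iff_eq (add_inner_pos he hα hx.le).ne']
  constructor <;> intro h <;> linarith

end Boost

section DiscModels

variable {V : Type*} [NormedAddCommGroup V] {u v : V}

theorem one_sub_norm_sq_pos (hu : ‖u‖ < 1) : 0 < 1 - ‖u‖ ^ 2 :=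
  sub_pos.2 (pow_lt_one₀ (norm_nonneg u) hu two_ne_zero)

theorem sqrt_one_sub_norm_sq_pos (hu : ‖u‖ < 1) : 0 < √(1 - ‖u‖ ^ 2) :=
  Real.sqrt_pos.2 (one_sub_norm_sq_pos hu)

/-- The map from the Poincaré model to the Klein model of hyperbolic space: inverse stereographic
projection from the south pole followed by the vertical projection of the sphere. -/
noncomputable def poincareToKlein [NormedSpace ℝ V] (v : V) : V := (2 / (1 + ‖v‖ ^ 2)) • v

/-- The inverse of `poincareToKlein` on the closed unit ball. -/
noncomputable def kleinToPoincare [NormedSpace ℝ V] (u : V) : V := (1 + √(1 - ‖u‖ ^ 2))⁻¹ • u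

section NormedSpace

variable [NormedSpace ℝ V]

theorem one_sub_norm_poincareToKlein_sq (v : V) :
    1 - ‖poincareToKlein v‖ ^ 2 = ((1 - ‖v‖ ^ 2) / (1 + ‖v‖ ^ 2)) ^ 2 := by
  rw [poincareToKlein, norm_smul, Real.norm_of_nonneg (by positivity)]
  field_simp
  ring

theorem sqrt_one_sub_norm_poincareToKlein_sq (hv : ‖v‖ ≤ 1) :
    √(1 - ‖poincareToKlein v‖ ^ 2) = (1 - ‖v‖ ^ 2) / (1 + ‖v‖ ^ 2) := by
  rw [one_sub_norm_poincareToKlein_sq, Real.sqrt_sq]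
  have : ‖v‖ ^ 2 ≤ 1 := pow_le_one₀ (norm_nonneg v) hv
  exact div_nonneg (by linarith) (by positivity)

theorem norm_poincareToKlein_le (v : V) : ‖poincareToKlein v‖ ≤ 1 := by
  rw [← sq_le_one_iff₀ (norm_nonneg _), ← sub_nonneg, one_sub_norm_poincareToKlein_sq]
  positivity

theorem norm_poincareToKlein_lt (hv : ‖v‖ < 1) : ‖poincareToKlein v‖ < 1 := by
  rw [← sq_lt_one_iff₀ (norm_nonneg _), ← sub_pos, one_sub_norm_poincareToKlein_sq]
  have : 0 < 1 - ‖v‖ ^ 2 := one_sub_norm_sq_pos hv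
  positivity

theorem one_sub_norm_kleinToPoincare_sq (hu : ‖u‖ ≤ 1) :
    1 - ‖kleinToPoincare u‖ ^ 2 = 2 * √(1 - ‖u‖ ^ 2) / (1 + √(1 - ‖u‖ ^ 2)) := by
  have hsq : √(1 - ‖u‖ ^ 2) ^ 2 = 1 - ‖u‖ ^ 2 :=
    Real.sq_sqrt (sub_nonneg.2 (pow_le_one₀ (norm_nonneg u) hu))
  rw [kleinToPoincare, norm_smul, Real.norm_of_nonneg (by positivity)]
  field_simp
  linear_combination -hsq

theorem norm_kleinToPoincare_le (hu : ‖u‖ ≤ 1) : ‖kleinToPoincare u‖ ≤ 1 := by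
  rw [← sq_le_one_iff₀ (norm_nonneg _), ← sub_nonneg, one_sub_norm_kleinToPoincare_sq hu]
  positivity

theorem norm_kleinToPoincare_lt (hu : ‖u‖ < 1) : ‖kleinToPoincare u‖ < 1 := by
  rw [← sq_lt_one_iff₀ (norm_nonneg _), ← sub_pos, one_sub_norm_kleinToPoincare_sq hu.le]
  have : 0 < √(1 - ‖u‖ ^ 2) := sqrt_one_sub_norm_sq_pos hu
  positivity

theorem kleinToPoincare_poincareToKlein (hv : ‖v‖ ≤ 1) :
    kleinToPoincare (poincareToKlein v) = v := by
  rw [kleinToPoincare, sqrt_one_sub_norm_poincareToKlein_sq hv, poincareToKlein, smul_smul]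
  convert one_smul ℝ v using 2
  field_simp
  ring

theorem poincareToKlein_kleinToPoincare (hu : ‖u‖ ≤ 1) :
    poincareToKlein (kleinToPoincare u) = u := by
  have hden : 1 + ‖kleinToPoincare u‖ ^ 2 = 2 * (1 + √(1 - ‖u‖ ^ 2))⁻¹ := by
    have := one_sub_norm_kleinToPoincare_sq hu
    field_simp at this ⊢
    linear_combination -this
  rw [poincareToKlein, hden, kleinToPoincare, smul_smul]
  convert one_smul ℝ u using 2
  field_simp

theorem bijOn_poincareToKlein_ball : BijOn (poincareToKlein : V → V) (ball 0 1) (ball 0 1) := by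
  refine BijOn.mk (fun v hv ↦ ?_) (fun v hv v' hv' h ↦ ?_) fun u hu ↦ ?_
  · exact mem_ball_zero_iff.2 (norm_poincareToKlein_lt (mem_ball_zero_iff.1 hv))
  · rw [← kleinToPoincare_poincareToKlein (mem_ball_zero_iff.1 hv).le, h,
      kleinToPoincare_poincareToKlein (mem_ball_zero_iff.1 hv').le]
  · rw [mem_ball_zero_iff] at hu
    exact ⟨kleinToPoincare u, mem_ball_zero_iff.2 (norm_kleinToPoincare_lt hu),
      poincareToKlein_kleinToPoincare hu.le⟩

end NormedSpace

variable [InnerProductSpace ℝ V]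

theorem hasFDerivAt_poincareToKlein (v : V) :
    HasFDerivAt poincareToKlein ((2 / (1 + ‖v‖ ^ 2)) • (ContinuousLinearMap.id ℝ V +
      (-(2 / (1 + ‖v‖ ^ 2)) • innerSL ℝ v).smulRight v)) v := by
  have hden : 1 + ‖v‖ ^ 2 ≠ 0 := by positivity
  have hscalar : HasFDerivAt (fun v : V ↦ 2 / (1 + ‖v‖ ^ 2))
      (-(2 / (1 + ‖v‖ ^ 2)) ^ 2 • innerSL ℝ v) v := by
    have hderiv := ((hasDerivAt_id (‖v‖ ^ 2)).const_add 1).fun_inv hden |>.const_mul (2 : ℝ)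
    refine (hderiv.comp_hasFDerivAt v (hasStrictFDerivAt_norm_sq v).hasFDerivAt).congr_fderiv ?_
    ext x
    simp only [id_eq, _root_.smul_apply, coe_innerSL_apply, nsmul_eq_mul, Nat.cast_ofNat,
      smul_eq_mul]
    field_simp
  refine (hscalar.smul (hasFDerivAt_id v)).congr_fderiv ?_
  ext x
  simp only [id_eq, _root_.add_apply, _root_.smul_apply, ContinuousLinearMap.id_apply,
    ContinuousLinearMap.smulRight_apply, coe_innerSL_apply, smul_eq_mul]
  module

theorem hasFDerivWithinAt_fderiv_poincareToKlein {s : Set V} (v : V) :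
    HasFDerivWithinAt poincareToKlein (fderiv ℝ poincareToKlein v) s v :=
  (hasFDerivAt_poincareToKlein v).differentiableAt.hasFDerivAt.hasFDerivWithinAt

variable [FiniteDimensional ℝ V]

theorem det_fderiv_poincareToKlein (v : V) :
    (fderiv ℝ poincareToKlein v).det =
      (2 / (1 + ‖v‖ ^ 2)) ^ finrank ℝ V * ((1 - ‖v‖ ^ 2) / (1 + ‖v‖ ^ 2)) := by
  have htrans : (fderiv ℝ poincareToKlein v : V →ₗ[ℝ] V) = (2 / (1 + ‖v‖ ^ 2)) •
      LinearMap.transvection (-(2 / (1 + ‖v‖ ^ 2)) • innerₛₗ ℝ v) v := by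
    rw [(hasFDerivAt_poincareToKlein v).fderiv]
    ext x
    simp [LinearMap.transvection]
  rw [ContinuousLinearMap.det, htrans, LinearMap.det_smul, LinearMap.transvection.det]
  congr 1
  simp only [LinearMap.smul_apply, innerₛₗ_apply_apply, real_inner_self_eq_norm_sq, smul_eq_mul]
  field_simp
  ring

theorem abs_det_fderiv_poincareToKlein (hv : ‖v‖ < 1) :
    |(fderiv ℝ poincareToKlein v).det| =
      (2 / (1 + ‖v‖ ^ 2)) ^ finrank ℝ V * √(1 - ‖poincareToKlein v‖ ^ 2) := by
  rw [det_fderiv_poincareToKlein, ← sqrt_one_sub_norm_poincareToKlein_sq hv.le,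
    abs_of_nonneg (by positivity)]

theorem abs_det_fderiv_poincareToKlein_smul (F : V → ℝ) (hv : v ∈ ball 0 1) :
    |(fderiv ℝ poincareToKlein v).det| •
        ((√(1 - ‖poincareToKlein v‖ ^ 2))⁻¹ * F (poincareToKlein v)) =
      (2 / (1 + ‖v‖ ^ 2)) ^ finrank ℝ V * F (poincareToKlein v) := by
  have hv : ‖v‖ < 1 := mem_ball_zero_iff.1 hv
  have hpos : 0 < √(1 - ‖poincareToKlein v‖ ^ 2) :=
    sqrt_one_sub_norm_sq_pos (norm_poincareToKlein_lt hv)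
  rw [abs_det_fderiv_poincareToKlein hv, smul_eq_mul, mul_assoc, mul_inv_cancel_left₀ hpos.ne']

variable [MeasurableSpace V] [BorelSpace V] (μ : Measure V) [μ.IsAddHaarMeasure]

theorem setIntegral_poincareToKlein (F : V → ℝ) :
    ∫ v in ball 0 1, (2 / (1 + ‖v‖ ^ 2)) ^ finrank ℝ V * F (poincareToKlein v) ∂μ =
      ∫ u in ball 0 1, (√(1 - ‖u‖ ^ 2))⁻¹ * F u ∂μ := by
  conv_rhs => rw [← bijOn_poincareToKlein_ball.image_eq,
    integral_image_eq_integral_abs_det_fderiv_smul μ measurableSet_ball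
      (fun v _ ↦ hasFDerivWithinAt_fderiv_poincareToKlein v) bijOn_poincareToKlein_ball.injOn]
  exact setIntegral_congr_fun measurableSet_ball fun v hv ↦
    (abs_det_fderiv_poincareToKlein_smul F hv).symm

theorem integrableOn_inv_sqrt_one_sub_norm_sq :
    IntegrableOn (fun u : V ↦ (√(1 - ‖u‖ ^ 2))⁻¹) (ball 0 1) μ := by
  have hdensity : IntegrableOn (fun v : V ↦ (2 / (1 + ‖v‖ ^ 2)) ^ finrank ℝ V) (ball 0 1) μ := by
    have : Continuous fun v : V ↦ (2 / (1 + ‖v‖ ^ 2)) ^ finrank ℝ V := by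
      fun_prop (disch := intro; positivity)
    exact (this.continuousOn.integrableOn_compact (isCompact_closedBall 0 1)).mono_set
      ball_subset_closedBall
  rw [← bijOn_poincareToKlein_ball.image_eq,
    integrableOn_image_iff_integrableOn_abs_det_fderiv_smul μ measurableSet_ball
      (fun v _ ↦ hasFDerivWithinAt_fderiv_poincareToKlein v) bijOn_poincareToKlein_ball.injOn]
  refine hdensity.congr_fun (fun v hv ↦ ?_) measurableSet_ball
  simpa using (abs_det_fderiv_poincareToKlein_smul (fun _ ↦ 1) hv).symm

end DiscModels

section Chords

variable {E : Type*} [NormedAddCommGroup E] [InnerProductSpace ℝ E] {e w x y z : E} {α : ℝ}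

/-- The point of the unit hemisphere with pole `e` lying above the point `y` of the equatorial
disc. -/
noncomputable def hemisphereLift (e y : E) : E := y + √(1 - ‖y‖ ^ 2) • e

/-- The endpoint closest to `α • e` of the chord of the unit ball which passes through `α • e` and
which the boost makes from the chord with direction `e` through `y ∈ (ℝ ∙ e)ᗮ`. -/
noncomputable def nearPoint (e : E) (α : ℝ) (y : E) : E := boost e α (hemisphereLift e y)

theorem inner_hemisphereLift_right (he : ‖e‖ = 1) (hy : ⟪y, e⟫_ℝ = 0) :
    ⟪hemisphereLift e y, e⟫_ℝ = √(1 - ‖y‖ ^ 2) := by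
  rw [hemisphereLift, inner_add_left, real_inner_smul_left, inner_self_eq_one_of_norm_eq_one he, hy]
  ring

theorem inner_hemisphereLift (he : ‖e‖ = 1) (hx : ⟪x, e⟫_ℝ = 0) (hy : ⟪y, e⟫_ℝ = 0) :
    ⟪hemisphereLift e x, hemisphereLift e y⟫_ℝ =
      ⟪x, y⟫_ℝ + √(1 - ‖x‖ ^ 2) * √(1 - ‖y‖ ^ 2) := by
  rw [hemisphereLift, inner_add_left, real_inner_smul_left, real_inner_comm _ e,
    inner_hemisphereLift_right he hy, hemisphereLift, inner_add_right, real_inner_smul_right, hx]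
  ring

theorem norm_hemisphereLift (he : ‖e‖ = 1) (hy : ⟪y, e⟫_ℝ = 0) (hy₁ : ‖y‖ ≤ 1) :
    ‖hemisphereLift e y‖ = 1 := by
  rw [← sq_eq_sq₀ (norm_nonneg _) zero_le_one, ← real_inner_self_eq_norm_sq,
    inner_hemisphereLift he hy hy, Real.mul_self_sqrt, real_inner_self_eq_norm_sq]
  · ring
  · exact sub_nonneg.2 (pow_le_one₀ (norm_nonneg y) hy₁)

theorem hemisphereLift_sub_inner_smul (he : ‖e‖ = 1) (hz : ‖z‖ = 1) (hz₀ : 0 ≤ ⟪z, e⟫_ℝ) :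
    hemisphereLift e (z - ⟪z, e⟫_ℝ • e) = z := by
  have : 1 - ‖z - ⟪z, e⟫_ℝ • e‖ ^ 2 = ⟪z, e⟫_ℝ ^ 2 := by
    rw [norm_sub_sq_real, norm_smul, real_inner_smul_right, hz, he, Real.norm_of_nonneg hz₀]
    ring
  rw [hemisphereLift, this, Real.sqrt_sq hz₀, sub_add_cancel]

theorem continuous_hemisphereLift : Continuous (hemisphereLift e) := by
  unfold hemisphereLift
  fun_prop

theorem norm_nearPoint (he : ‖e‖ = 1) (hα : 1 < α) (hy : ⟪y, e⟫_ℝ = 0) (hy₁ : ‖y‖ ≤ 1) :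
    ‖nearPoint e α y‖ = 1 :=
  norm_boost_eq_one he hα (norm_hemisphereLift he hy hy₁)

theorem exists_nearPoint_eq (he : ‖e‖ = 1) (hα : 1 < α) (hx : ‖x‖ = 1)
    (hdist : dist x (α • e) ≤ √(α ^ 2 - 1)) :
    ∃ y, ⟪y, e⟫_ℝ = 0 ∧ ‖y‖ ≤ 1 ∧ nearPoint e α y = x := by
  have hne : ‖-e‖ = 1 := norm_neg e ▸ he
  set z := boost (-e) α x
  have hz : ‖z‖ = 1 := norm_boost_eq_one hne hα hx
  have hzx : boost e α z = x := by
    simpa only [neg_neg] using boost_neg_boost hne hα (add_inner_pos hne hα hx.le).ne'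
  have hz₀ : 0 ≤ ⟪z, e⟫_ℝ := (dist_boost_smul_le_iff he hα hz).1 (hzx ▸ hdist)
  refine ⟨z - ⟪z, e⟫_ℝ • e, ?_, ?_, ?_⟩
  · rw [inner_sub_left, real_inner_smul_left, inner_self_eq_one_of_norm_eq_one he, mul_one,
      sub_self]
  · rw [← sq_le_one_iff₀ (norm_nonneg _), norm_sub_sq_real, norm_smul, real_inner_smul_right, hz,
      he, Real.norm_of_nonneg hz₀]
    nlinarith
  · rw [nearPoint, hemisphereLift_sub_inner_smul he hz hz₀, hzx]

/-- The affine plane through `α • e` made of the images under the boost of the lines with direction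
`e` which meet `w + U`. -/
noncomputable def sectionPlane (e : E) (α : ℝ) (U : Submodule ℝ E) (w : E) : AffineSubspace ℝ E :=
  AffineSubspace.mk' (α • e) (U ⊔ ℝ ∙ (w - √(α ^ 2 - 1) • e))

variable {U : Submodule ℝ E}

theorem self_mem_sectionPlane : α • e ∈ sectionPlane e α U w := AffineSubspace.self_mem_mk' _ _

theorem boost_mem_sectionPlane_iff (he : ‖e‖ = 1) (hα : 1 < α) (hU : ∀ u ∈ U, ⟪u, e⟫_ℝ = 0)
    (hw : ⟪w, e⟫_ℝ = 0) (hz : ‖z‖ ≤ 1) :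
    boost e α z ∈ sectionPlane e α U w ↔ z - ⟪z, e⟫_ℝ • e - w ∈ U := by
  have hR : 0 < √(α ^ 2 - 1) := sqrt_sq_sub_one_pos hα
  have hpos := add_inner_pos he hα hz
  rw [sectionPlane, AffineSubspace.mem_mk', vsub_eq_sub, boost_sub_smul hpos.ne' hα,
    Submodule.smul_mem_iff _ (div_pos hR hpos).ne', Submodule.mem_sup]
  simp only [Submodule.mem_span_singleton, exists_exists_eq_and]
  constructor
  · rintro ⟨u, hu, c, h⟩
    have hc : c = 1 := by
      have := congrArg (⟪·, e⟫_ℝ) h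
      simp only [inner_add_left, inner_sub_left, real_inner_smul_left, hU u hu, hw,
        inner_self_eq_one_of_norm_eq_one he] at this
      exact mul_right_cancel₀ hR.ne' (by linarith)
    rw [hc, one_smul] at h
    convert hu using 1
    rw [eq_sub_of_add_eq h]
    module
  · exact fun h ↦ ⟨_, h, 1, by module⟩

theorem finrank_direction_sectionPlane [FiniteDimensional ℝ U] (he : ‖e‖ = 1) (hα : 1 < α)
    (hU : ∀ u ∈ U, ⟪u, e⟫_ℝ = 0) (hw : ⟪w, e⟫_ℝ = 0) :
    finrank ℝ (sectionPlane e α U w).direction = finrank ℝ U + 1 := by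
  have hR : 0 < √(α ^ 2 - 1) := sqrt_sq_sub_one_pos hα
  have hb : ⟪w - √(α ^ 2 - 1) • e, e⟫_ℝ ≠ 0 := by
    rw [inner_sub_left, hw, real_inner_smul_left, inner_self_eq_one_of_norm_eq_one he]
    linarith
  have hb₀ : w - √(α ^ 2 - 1) • e ≠ 0 := fun h ↦ hb (by rw [h, inner_zero_left])
  have hdisj : U ⊓ ℝ ∙ (w - √(α ^ 2 - 1) • e) = ⊥ :=
    ((Submodule.disjoint_span_singleton' hb₀).2 fun h ↦ hb (hU _ h)).eq_bot
  have := Submodule.finrank_sup_add_finrank_inf_eq U (ℝ ∙ (w - √(α ^ 2 - 1) • e))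
  rwa [hdisj, finrank_bot, add_zero, finrank_span_singleton hb₀,
    ← AffineSubspace.direction_mk' (α • e) (U ⊔ _)] at this

theorem exists_mem_sectionPlane_norm_lt_one (he : ‖e‖ = 1) (hα : 1 < α)
    (hU : ∀ u ∈ U, ⟪u, e⟫_ℝ = 0) (hw : ⟪w, e⟫_ℝ = 0) (hw₁ : ‖w‖ < 1) :
    ∃ x ∈ sectionPlane e α U w, ‖x‖ < 1 := by
  refine ⟨boost e α w, (boost_mem_sectionPlane_iff he hα hU hw hw₁.le).2 (by simp [hw]), ?_⟩
  have hpos := add_inner_pos he hα hw₁.le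
  have := one_sub_inner_boost_boost he hα hpos.ne' hpos.ne'
  rw [real_inner_self_eq_norm_sq, real_inner_self_eq_norm_sq] at this
  rw [← sq_lt_one_iff₀ (norm_nonneg _), ← sub_pos, this]
  have : 0 < α ^ 2 - 1 := by nlinarith
  have : 0 < 1 - ‖w‖ ^ 2 := one_sub_norm_sq_pos hw₁
  positivity

theorem sphere_inter_sectionPlane_inter_closedBall (he : ‖e‖ = 1) (hα : 1 < α)
    (hU : ∀ u ∈ U, ⟪u, e⟫_ℝ = 0) (hw : ⟪w, e⟫_ℝ = 0) :
    sphere 0 1 ∩ sectionPlane e α U w ∩ closedBall (α • e) √(α ^ 2 - 1) =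
      nearPoint e α '' {y | y - w ∈ U ∧ ‖y‖ ≤ 1} := by
  have hmem {y : E} (hy : ⟪y, e⟫_ℝ = 0) (hy₁ : ‖y‖ ≤ 1) :
      nearPoint e α y ∈ sectionPlane e α U w ↔ y - w ∈ U := by
    rw [nearPoint, boost_mem_sectionPlane_iff he hα hU hw (norm_hemisphereLift he hy hy₁).le,
      inner_hemisphereLift_right he hy, hemisphereLift, add_sub_cancel_right]
  ext x
  constructor
  · rintro ⟨⟨hx, hxτ⟩, hdist⟩
    obtain ⟨y, hy, hy₁, rfl⟩ := exists_nearPoint_eq he hα (mem_sphere_zero_iff_norm.1 hx) hdist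
    exact ⟨y, ⟨(hmem hy hy₁).1 hxτ, hy₁⟩, rfl⟩
  · rintro ⟨y, ⟨hyU, hy₁⟩, rfl⟩
    have hy : ⟪y, e⟫_ℝ = 0 := by simpa [inner_sub_left, hw] using hU _ hyU
    refine ⟨⟨mem_sphere_zero_iff_norm.2 (norm_nearPoint he hα hy hy₁), (hmem hy hy₁).2 hyU⟩, ?_⟩
    rw [mem_closedBall, nearPoint, dist_boost_smul_le_iff he hα (norm_hemisphereLift he hy hy₁),
      inner_hemisphereLift_right he hy]
    positivity

end Chords

section SectionChart

variable {E V : Type*} [NormedAddCommGroup E] [InnerProductSpace ℝ E] [NormedAddCommGroup V]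
  [InnerProductSpace ℝ V] {e w : E} {α : ℝ} {j : V →ₗᵢ[ℝ] E} {u v : V}

/-- For `w` orthogonal to the range of `j`, the affine map which sends the unit ball of `V` onto the
section of the unit ball of `E` by the plane through `w` parallel to the range of `j`. -/
noncomputable def discSlice (w : E) (j : V →ₗᵢ[ℝ] E) (u : V) : E := w + √(1 - ‖w‖ ^ 2) • j u

theorem inner_discSlice (hj : ∀ v, ⟪w, j v⟫_ℝ = 0) (hw₁ : ‖w‖ ≤ 1) (u v : V) :
    ⟪discSlice w j u, discSlice w j v⟫_ℝ = ‖w‖ ^ 2 + (1 - ‖w‖ ^ 2) * ⟪u, v⟫_ℝ := by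
  have hr : √(1 - ‖w‖ ^ 2) ^ 2 = 1 - ‖w‖ ^ 2 :=
    Real.sq_sqrt (sub_nonneg.2 (pow_le_one₀ (norm_nonneg w) hw₁))
  simp only [discSlice, inner_add_left, inner_add_right, real_inner_smul_left,
    real_inner_smul_right, hj, real_inner_comm w, j.inner_map_map, real_inner_self_eq_norm_sq]
  linear_combination ⟪u, v⟫_ℝ * hr

theorem one_sub_norm_discSlice_sq (hj : ∀ v, ⟪w, j v⟫_ℝ = 0) (hw₁ : ‖w‖ ≤ 1) (u : V) :
    1 - ‖discSlice w j u‖ ^ 2 = (1 - ‖w‖ ^ 2) * (1 - ‖u‖ ^ 2) := by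
  rw [← real_inner_self_eq_norm_sq, inner_discSlice hj hw₁, real_inner_self_eq_norm_sq]
  ring

theorem norm_discSlice_le_one_iff (hj : ∀ v, ⟪w, j v⟫_ℝ = 0) (hw₁ : ‖w‖ < 1) :
    ‖discSlice w j u‖ ≤ 1 ↔ ‖u‖ ≤ 1 := by
  have hr : 0 < 1 - ‖w‖ ^ 2 := one_sub_norm_sq_pos hw₁
  rw [← sq_le_one_iff₀ (norm_nonneg _), ← sub_nonneg, one_sub_norm_discSlice_sq hj hw₁.le,
    mul_nonneg_iff_of_pos_left hr, sub_nonneg, sq_le_one_iff₀ (norm_nonneg u)]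

theorem norm_discSlice_lt_one_iff (hj : ∀ v, ⟪w, j v⟫_ℝ = 0) (hw₁ : ‖w‖ < 1) :
    ‖discSlice w j u‖ < 1 ↔ ‖u‖ < 1 := by
  have hr : 0 < 1 - ‖w‖ ^ 2 := one_sub_norm_sq_pos hw₁
  rw [← sq_lt_one_iff₀ (norm_nonneg _), ← sub_pos, one_sub_norm_discSlice_sq hj hw₁.le,
    mul_pos_iff_of_pos_left hr, sub_pos, sq_lt_one_iff₀ (norm_nonneg u)]

theorem sqrt_one_sub_norm_discSlice_sq (hj : ∀ v, ⟪w, j v⟫_ℝ = 0) (hw₁ : ‖w‖ ≤ 1) (u : V) :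
    √(1 - ‖discSlice w j u‖ ^ 2) = √(1 - ‖w‖ ^ 2) * √(1 - ‖u‖ ^ 2) := by
  rw [one_sub_norm_discSlice_sq hj hw₁,
    Real.sqrt_mul (sub_nonneg.2 (pow_le_one₀ (norm_nonneg w) hw₁))]

theorem inner_discSlice_right (hw : ⟪w, e⟫_ℝ = 0) (hje : ∀ v, ⟪j v, e⟫_ℝ = 0) (u : V) :
    ⟪discSlice w j u, e⟫_ℝ = 0 := by
  rw [discSlice, inner_add_left, real_inner_smul_left, hw, hje, mul_zero, add_zero]

theorem discSlice_comp_poincareToKlein_image_closedBall (hj : ∀ v, ⟪w, j v⟫_ℝ = 0)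
    (hw₁ : ‖w‖ < 1) :
    (discSlice w j ∘ poincareToKlein) '' closedBall 0 1 =
      {y | y - w ∈ LinearMap.range j.toLinearMap ∧ ‖y‖ ≤ 1} := by
  have hr : √(1 - ‖w‖ ^ 2) ≠ 0 := (sqrt_one_sub_norm_sq_pos hw₁).ne'
  ext y
  constructor
  · rintro ⟨v, -, rfl⟩
    exact ⟨⟨√(1 - ‖w‖ ^ 2) • poincareToKlein v, by simp [discSlice]⟩,
      (norm_discSlice_le_one_iff hj hw₁).2 (norm_poincareToKlein_le v)⟩
  · rintro ⟨⟨v, hv⟩, hy₁⟩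
    have hy : discSlice w j ((√(1 - ‖w‖ ^ 2))⁻¹ • v) = y := by
      rw [discSlice, map_smul, smul_inv_smul₀ hr]
      exact add_eq_of_eq_sub' hv
    have hu := (norm_discSlice_le_one_iff hj hw₁).1 (hy ▸ hy₁)
    exact ⟨_, mem_closedBall_zero_iff.2 (norm_kleinToPoincare_le hu), by
      rw [Function.comp_apply, poincareToKlein_kleinToPoincare hu, hy]⟩

theorem isMobiusOn_hemisphereLift_discSlice (he : ‖e‖ = 1) (hw : ⟪w, e⟫_ℝ = 0)
    (hje : ∀ v, ⟪j v, e⟫_ℝ = 0) (hj : ∀ v, ⟪w, j v⟫_ℝ = 0) (hw₁ : ‖w‖ < 1) :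
    IsMobiusOn (fun v ↦ hemisphereLift e (discSlice w j (poincareToKlein v)))
      (fun v ↦ √(1 - ‖w‖ ^ 2) * (2 / (1 + ‖v‖ ^ 2))) (closedBall 0 1) where
  continuousOn_factor := by fun_prop (disch := intros; positivity)
  pos v _ := by
    have : 0 < √(1 - ‖w‖ ^ 2) := sqrt_one_sub_norm_sq_pos hw₁
    positivity
  dist_sq u hu v hv := by
    rw [mem_closedBall_zero_iff] at hu hv
    have hnorm (v : V) : ‖hemisphereLift e (discSlice w j (poincareToKlein v))‖ = 1 :=
      norm_hemisphereLift he (inner_discSlice_right hw hje _)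
        ((norm_discSlice_le_one_iff hj hw₁).2 (norm_poincareToKlein_le v))
    have hr : √(1 - ‖w‖ ^ 2) ^ 2 = 1 - ‖w‖ ^ 2 :=
      Real.sq_sqrt (sub_nonneg.2 (pow_le_one₀ (norm_nonneg w) hw₁.le))
    rw [dist_sq_of_norm_eq_one (hnorm u) (hnorm v), inner_hemisphereLift he
      (inner_discSlice_right hw hje _) (inner_discSlice_right hw hje _), inner_discSlice hj hw₁.le,
      sqrt_one_sub_norm_discSlice_sq hj hw₁.le, sqrt_one_sub_norm_discSlice_sq hj hw₁.le,
      sqrt_one_sub_norm_poincareToKlein_sq hu, sqrt_one_sub_norm_poincareToKlein_sq hv,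
      poincareToKlein, poincareToKlein, real_inner_smul_left, real_inner_smul_right, dist_eq_norm,
      norm_sub_sq_real]
    set r := √(1 - ‖w‖ ^ 2)
    rw [← hr, show ‖w‖ ^ 2 = 1 - r ^ 2 by rw [hr]; ring]
    field_simp
    ring

theorem isMobiusOn_nearPoint_discSlice (he : ‖e‖ = 1) (hα : 1 < α) (hw : ⟪w, e⟫_ℝ = 0)
    (hje : ∀ v, ⟪j v, e⟫_ℝ = 0) (hj : ∀ v, ⟪w, j v⟫_ℝ = 0) (hw₁ : ‖w‖ < 1) :
    IsMobiusOn (nearPoint e α ∘ discSlice w j ∘ poincareToKlein)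
      (fun v ↦ √(α ^ 2 - 1) / (α + √(1 - ‖discSlice w j (poincareToKlein v)‖ ^ 2)) *
        (√(1 - ‖w‖ ^ 2) * (2 / (1 + ‖v‖ ^ 2)))) (closedBall 0 1) := by
  have := (isMobiusOn_boost he hα).comp (isMobiusOn_hemisphereLift_discSlice he hw hje hj hw₁)
    fun v _ ↦ mem_sphere_zero_iff_norm.2 (norm_hemisphereLift he (inner_discSlice_right hw hje _)
      ((norm_discSlice_le_one_iff hj hw₁).2 (norm_poincareToKlein_le v)))
  simp only [inner_hemisphereLift_right he (inner_discSlice_right hw hje _)] at this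
  exact this

theorem range_inner_eq_zero (hje : ∀ v, ⟪j v, e⟫_ℝ = 0) :
    ∀ u ∈ LinearMap.range j.toLinearMap, ⟪u, e⟫_ℝ = 0 := by
  rintro _ ⟨v, rfl⟩
  exact hje v

theorem nearPoint_discSlice_image_closedBall (he : ‖e‖ = 1) (hα : 1 < α) (hw : ⟪w, e⟫_ℝ = 0)
    (hje : ∀ v, ⟪j v, e⟫_ℝ = 0) (hj : ∀ v, ⟪w, j v⟫_ℝ = 0) (hw₁ : ‖w‖ < 1) :
    (nearPoint e α ∘ discSlice w j ∘ poincareToKlein) '' closedBall 0 1 =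
      sphere 0 1 ∩ sectionPlane e α (LinearMap.range j.toLinearMap) w ∩
        closedBall (α • e) √(α ^ 2 - 1) := by
  rw [sphere_inter_sectionPlane_inter_closedBall he hα (range_inner_eq_zero hje) hw, image_comp,
    discSlice_comp_poincareToKlein_image_closedBall hj hw₁]

end SectionChart

theorem ball_ae_eq_closedBall {V : Type*} [NormedAddCommGroup V] [NormedSpace ℝ V]
    [FiniteDimensional ℝ V] [Nontrivial V] [MeasurableSpace V] [BorelSpace V] (μ : Measure V)
    [μ.IsAddHaarMeasure] (x : V) (r : ℝ) : ball x r =ᵐ[μ] closedBall x r :=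
  ae_eq_of_subset_of_measure_ge ball_subset_closedBall
    (Measure.addHaar_closedBall_eq_addHaar_ball μ x r).le measurableSet_ball.nullMeasurableSet
    measure_closedBall_lt_top.ne

section SectionMeasure

variable {E V : Type*} [NormedAddCommGroup E] [InnerProductSpace ℝ E] [NormedAddCommGroup V]
  [InnerProductSpace ℝ V] {e w : E} {α : ℝ} {j : V →ₗᵢ[ℝ] E}

theorem isCompact_inter_affineSubspace {s : Set E} (hs : IsClosed s) (hb : Bornology.IsBounded s)
    (τ : AffineSubspace ℝ E) [FiniteDimensional ℝ τ.direction] : IsCompact (s ∩ τ) := by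
  obtain hτ | ⟨p, hp⟩ := (τ : Set E).eq_empty_or_nonempty
  · simp [hτ]
  have hisom : Isometry fun v : τ.direction ↦ (v : E) + p :=
    (isometry_add_right p).comp isometry_subtype_coe
  have hrange : range (fun v : τ.direction ↦ (v : E) + p) = τ := by
    ext x
    constructor
    · rintro ⟨v, rfl⟩
      exact τ.vadd_mem_of_mem_direction v.2 hp
    · exact fun hx ↦ ⟨⟨x - p, τ.vsub_mem_direction hx hp⟩, sub_add_cancel x p⟩
  rw [← hrange, ← image_preimage_eq_inter_range]
  exact (isCompact_of_isClosed_isBounded (hs.preimage hisom.continuous)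
    (hisom.antilipschitz.isBounded_preimage hb)).image hisom.continuous

/-- The density on the equatorial disc whose integrals over the plane slices of the disc are, up to
a factor, the integrals of `g` over the near halves of the sections of the sphere. -/
noncomputable def sliceDensity (e : E) (α : ℝ) (d : ℕ) (g : E → ℝ) : E → ℝ :=
  indicator (ball 0 1) fun y ↦ (√(1 - ‖y‖ ^ 2))⁻¹ *
    ((√(α ^ 2 - 1) / (α + √(1 - ‖y‖ ^ 2))) ^ d * g (nearPoint e α y))

theorem sqrt_mul_sliceDensity_discSlice (hj : ∀ v, ⟪w, j v⟫_ℝ = 0) (hw₁ : ‖w‖ < 1) (d : ℕ)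
    (g : E → ℝ) (u : V) :
    √(1 - ‖w‖ ^ 2) * sliceDensity e α d g (discSlice w j u) =
      (ball 0 1).indicator (fun u ↦ (√(1 - ‖u‖ ^ 2))⁻¹ *
        ((√(α ^ 2 - 1) / (α + √(1 - ‖discSlice w j u‖ ^ 2))) ^ d *
          g (nearPoint e α (discSlice w j u)))) u := by
  have hr : √(1 - ‖w‖ ^ 2) ≠ 0 := (sqrt_one_sub_norm_sq_pos hw₁).ne'
  by_cases hu : ‖u‖ < 1
  · rw [indicator_of_mem (mem_ball_zero_iff.2 hu), sliceDensity, indicator_of_mem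
      (mem_ball_zero_iff.2 ((norm_discSlice_lt_one_iff hj hw₁).2 hu)),
      sqrt_one_sub_norm_discSlice_sq hj hw₁.le, mul_inv, mul_assoc, mul_inv_cancel_left₀ hr]
  · rw [indicator_of_notMem (mt mem_ball_zero_iff.1 hu), sliceDensity, indicator_of_notMem
      (mt mem_ball_zero_iff.1 (mt (norm_discSlice_lt_one_iff hj hw₁).1 hu)), mul_zero]

variable [MeasurableSpace E] [BorelSpace E] [FiniteDimensional ℝ V]

theorem hausdorffMeasure_sphere_inter_sectionPlane_inter_closedBall_ne_top (he : ‖e‖ = 1)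
    (hα : 1 < α) (hw : ⟪w, e⟫_ℝ = 0) (hje : ∀ v, ⟪j v, e⟫_ℝ = 0) (hj : ∀ v, ⟪w, j v⟫_ℝ = 0)
    (hw₁ : ‖w‖ < 1) :
    μH[finrank ℝ V] (sphere 0 1 ∩ sectionPlane e α (LinearMap.range j.toLinearMap) w ∩
      closedBall (α • e) √(α ^ 2 - 1)) ≠ ∞ := by
  borelize V
  obtain ⟨c, hc⟩ := (isMobiusOn_nearPoint_discSlice he hα hw hje hj hw₁).exists_lipschitzOnWith
    (isCompact_closedBall 0 1)
  rw [← nearPoint_discSlice_image_closedBall he hα hw hje hj hw₁]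
  refine ne_top_of_le_ne_top ?_ (hc.hausdorffMeasure_image_le (Nat.cast_nonneg _))
  have : μH[finrank ℝ V] (closedBall (0 : V) 1) ≠ ∞ := measure_closedBall_lt_top.ne
  finiteness

theorem hausdorffMeasure_sphere_inter_sectionPlane_inter_sphere [Nontrivial V] (he : ‖e‖ = 1)
    (hα : 1 < α) (hw : ⟪w, e⟫_ℝ = 0) (hje : ∀ v, ⟪j v, e⟫_ℝ = 0) (hj : ∀ v, ⟪w, j v⟫_ℝ = 0)
    (hw₁ : ‖w‖ < 1) :
    μH[finrank ℝ V] (sphere 0 1 ∩ sectionPlane e α (LinearMap.range j.toLinearMap) w ∩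
      sphere (α • e) √(α ^ 2 - 1)) = 0 := by
  borelize V
  have hmob := isMobiusOn_nearPoint_discSlice he hα hw hje hj hw₁
  obtain ⟨c, hc⟩ := (hmob.mono sphere_subset_closedBall).exists_lipschitzOnWith
    (isCompact_sphere 0 1)
  have hnull : μH[finrank ℝ V] (sphere (0 : V) 1) = 0 := Measure.addHaar_sphere _ 0 1
  have hsub : sphere 0 1 ∩ sectionPlane e α (LinearMap.range j.toLinearMap) w ∩
      sphere (α • e) √(α ^ 2 - 1) ⊆
        (nearPoint e α ∘ discSlice w j ∘ poincareToKlein) '' sphere 0 1 := by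
    rintro x ⟨hx, hdist⟩
    have hx' : x ∈ (nearPoint e α ∘ discSlice w j ∘ poincareToKlein) '' closedBall 0 1 :=
      nearPoint_discSlice_image_closedBall he hα hw hje hj hw₁ ▸
        ⟨hx, sphere_subset_closedBall hdist⟩
    obtain ⟨v, hv, rfl⟩ := hx'
    refine ⟨v, mem_sphere_zero_iff_norm.2 ?_, rfl⟩
    have hr : √(1 - ‖w‖ ^ 2) ≠ 0 := (sqrt_one_sub_norm_sq_pos hw₁).ne'
    have hy := inner_discSlice_right hw hje (poincareToKlein v)
    have hy₁ := (norm_discSlice_le_one_iff hj hw₁).2 (norm_poincareToKlein_le v)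
    have hequator := (dist_boost_smul_eq_iff he hα (norm_hemisphereLift he hy hy₁)).1 hdist
    rw [inner_hemisphereLift_right he hy, sqrt_one_sub_norm_discSlice_sq hj hw₁.le,
      sqrt_one_sub_norm_poincareToKlein_sq (mem_closedBall_zero_iff.1 hv),
      mul_eq_zero_iff_left hr, div_eq_zero_iff, or_iff_left (by positivity), sub_eq_zero, eq_comm,
      pow_eq_one_iff_of_nonneg (norm_nonneg v) two_ne_zero] at hequator
    exact hequator
  refine measure_mono_null hsub (le_antisymm ?_ bot_le)
  exact (hc.hausdorffMeasure_image_le (Nat.cast_nonneg _)).trans_eq (by rw [hnull, mul_zero])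

theorem setIntegral_sphere_inter_sectionPlane_inter_closedBall [Nontrivial V] [MeasurableSpace V]
    [BorelSpace V] (he : ‖e‖ = 1) (hα : 1 < α) (hw : ⟪w, e⟫_ℝ = 0) (hje : ∀ v, ⟪j v, e⟫_ℝ = 0)
    (hj : ∀ v, ⟪w, j v⟫_ℝ = 0) (hw₁ : ‖w‖ < 1) (g : E → ℝ) :
    ∫ x in sphere 0 1 ∩ sectionPlane e α (LinearMap.range j.toLinearMap) w ∩
        closedBall (α • e) √(α ^ 2 - 1), g x ∂μH[finrank ℝ V] =
      √(1 - ‖w‖ ^ 2) * ∫ v, sliceDensity e α (finrank ℝ V) g (w + j v) ∂μH[finrank ℝ V] := by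
  set r := √(1 - ‖w‖ ^ 2)
  have hr : 0 < r := sqrt_one_sub_norm_sq_pos hw₁
  set F : V → ℝ := fun u ↦ (√(α ^ 2 - 1) / (α + √(1 - ‖discSlice w j u‖ ^ 2))) ^ finrank ℝ V *
    g (nearPoint e α (discSlice w j u)) with hF
  calc ∫ x in sphere 0 1 ∩ sectionPlane e α (LinearMap.range j.toLinearMap) w ∩
        closedBall (α • e) √(α ^ 2 - 1), g x ∂μH[finrank ℝ V]
      = ∫ v in closedBall (0 : V) 1, r ^ finrank ℝ V *
          ((2 / (1 + ‖v‖ ^ 2)) ^ finrank ℝ V * F (poincareToKlein v)) ∂μH[finrank ℝ V] := by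
        rw [← nearPoint_discSlice_image_closedBall he hα hw hje hj hw₁,
          (isMobiusOn_nearPoint_discSlice he hα hw hje hj hw₁).setIntegral_image
            (isCompact_closedBall 0 1) (Nat.cast_pos.2 finrank_pos)]
        refine integral_congr_ae (.of_forall fun v ↦ ?_)
        simp only [Real.rpow_natCast, mul_pow, smul_eq_mul, hF, Function.comp_apply, r]
        ring
    _ = r ^ finrank ℝ V * ∫ u in ball (0 : V) 1, (√(1 - ‖u‖ ^ 2))⁻¹ * F u ∂μH[finrank ℝ V] := by
        rw [integral_const_mul, ← setIntegral_congr_set (ball_ae_eq_closedBall μH[finrank ℝ V] 0 1),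
          setIntegral_poincareToKlein]
    _ = r ^ finrank ℝ V *
          ∫ u, r * sliceDensity e α (finrank ℝ V) g (w + j (r • u)) ∂μH[finrank ℝ V] := by
        rw [← integral_indicator measurableSet_ball]
        refine congrArg _ (integral_congr_ae (.of_forall fun u ↦ ?_))
        simp only [map_smul]
        exact (sqrt_mul_sliceDensity_discSlice hj hw₁ _ g u).symm
    _ = r * ∫ v, sliceDensity e α (finrank ℝ V) g (w + j v) ∂μH[finrank ℝ V] := by
        rw [integral_const_mul, Measure.integral_comp_smul_of_nonneg μH[finrank ℝ V]
          (fun v ↦ sliceDensity e α (finrank ℝ V) g (w + j v)) r (hR := hr.le), smul_eq_mul]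
        field_simp

end SectionMeasure

section Radon

open FourierTransform

variable {H : Type*} [NormedAddCommGroup H] [InnerProductSpace ℝ H] [FiniteDimensional ℝ H]

theorem exists_submodule_le_finrank_eq {K M : Type*} [DivisionRing K] [AddCommGroup M] [Module K M]
    {W : Submodule K M} {d : ℕ} (hd : d ≤ Module.rank K W) : ∃ V ≤ W, finrank K V = d := by
  obtain ⟨b, hb⟩ := exists_linearIndependent_of_le_rank hd
  refine ⟨(Submodule.span K (range b)).map W.subtype, Submodule.map_subtype_le _ _, ?_⟩
  rw [Submodule.finrank_map_subtype_eq, finrank_span_eq_card hb, Fintype.card_fin]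

variable [MeasurableSpace H] [BorelSpace H] {F : Type*} [NormedAddCommGroup F]

theorem integral_eq_integral_integral_orthogonal [NormedSpace ℝ F] (V : Submodule ℝ H) {f : H → F}
    (hf : Integrable f) : ∫ x, f x = ∫ w : Vᗮ, ∫ u : V, f (w + u) := by
  let decomp : V × Vᗮ ≃ᵐ H := (MeasurableEquiv.toLp 2 _).trans
    V.orthogonalDecomposition.symm.toHomeomorph.toMeasurableEquiv
  have hdecomp : MeasurePreserving decomp :=
    V.orthogonalDecomposition.symm.measurePreserving.comp (WithLp.volume_preserving_toLp V Vᗮ)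
  have happly (p : V × Vᗮ) : decomp p = p.2 + p.1 := by simp [decomp, add_comm]
  rw [← hdecomp.integral_comp' f, Measure.volume_eq_prod, integral_prod_symm]
  · simp only [happly]
  · exact hdecomp.integrable_comp_of_integrable hf

variable [NormedSpace ℂ F] {f : H → F}

theorem fourier_eq_zero_of_integral_slices_eq_zero {V : Submodule ℝ H} {ξ : H} (hf : Integrable f)
    (hV : V ≤ (ℝ ∙ ξ)ᗮ) (h : ∀ w ∈ Vᗮ, ∫ u : V, f (w + u) = 0) : 𝓕 f ξ = 0 := by
  have hint : Integrable fun x ↦ Real.fourierChar (-⟪x, ξ⟫_ℝ) • f x := by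
    simpa using (Real.fourierIntegral_convergent_iff ξ).2 hf
  rw [Real.fourier_eq, integral_eq_integral_integral_orthogonal V hint]
  refine integral_eq_zero_of_ae (.of_forall fun w ↦ ?_)
  have hphase (u : V) : ⟪(w + u : H), ξ⟫_ℝ = ⟪(w : H), ξ⟫_ℝ := by
    rw [inner_add_left, Submodule.mem_orthogonal_singleton_iff_inner_left.1 (hV u.2), add_zero]
  simp only [hphase, Circle.smul_def, integral_smul, h w w.2, smul_zero, Pi.zero_apply]

theorem eq_zero_of_integral_slices_eq_zero [CompleteSpace F] {d : ℕ} (hd : d < finrank ℝ H)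
    (hf : Integrable f)
    (h : ∀ V : Submodule ℝ H, finrank ℝ V = d → ∀ w ∈ Vᗮ, ∫ u : V, f (w + u) = 0) {y : H}
    (hy : ContinuousAt f y) : f y = 0 := by
  have hfourier : 𝓕 f = 0 := by
    ext ξ
    have hspan : finrank ℝ (ℝ ∙ ξ) ≤ 1 := (finrank_span_le_card {ξ}).trans (by simp)
    have hsum := (ℝ ∙ ξ).finrank_add_finrank_orthogonal
    obtain ⟨V, hVξ, hV⟩ := exists_submodule_le_finrank_eq (d := d) (W := (ℝ ∙ ξ)ᗮ)
      (by rw [← finrank_eq_rank]; norm_cast; lia)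
    exact fourier_eq_zero_of_integral_slices_eq_zero hf hVξ (h V hV)
  have hint : Integrable (𝓕 f) := hfourier ▸ integrable_zero _ _ _
  rw [← hf.fourierInv_fourier_eq hint hy, hfourier, Real.fourierInv_eq]
  simp

end Radon

section Injectivity

variable {E : Type*} [NormedAddCommGroup E] [InnerProductSpace ℝ E] {e y : E} {α : ℝ} {d : ℕ}
  {g : E → ℝ}

theorem exists_finiteDimensional_le_orthogonal_span_singleton (hd : d < Module.rank ℝ E)
    (hy : ⟪y, e⟫_ℝ = 0) :
    ∃ H ≤ (ℝ ∙ e)ᗮ, FiniteDimensional ℝ H ∧ y ∈ H ∧ d ≤ finrank ℝ H := by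
  obtain ⟨W, -, hW⟩ := exists_submodule_le_finrank_eq (W := (⊤ : Submodule ℝ E)) (d := d + 1)
    (by rw [rank_top]; exact_mod_cast Cardinal.add_one_le_of_lt hd)
  have : FiniteDimensional ℝ W := .of_finrank_pos (by lia)
  set G := W ⊔ (ℝ ∙ e ⊔ ℝ ∙ y)
  have hspan : finrank ℝ (ℝ ∙ e) ≤ 1 := (finrank_span_le_card {e}).trans (by simp)
  have hsum := Submodule.finrank_add_inf_finrank_orthogonal
    (le_sup_left.trans le_sup_right : ℝ ∙ e ≤ G)
  have hWG : finrank ℝ W ≤ finrank ℝ G := Submodule.finrank_mono le_sup_left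
  exact ⟨(ℝ ∙ e)ᗮ ⊓ G, inf_le_left, inferInstance,
    ⟨Submodule.mem_orthogonal_singleton_iff_inner_left.2 hy,
      (le_sup_right.trans le_sup_right : ℝ ∙ y ≤ G) (Submodule.mem_span_singleton_self y)⟩, by lia⟩

theorem continuousOn_nearPoint (he : ‖e‖ = 1) (hα : 1 < α) :
    ContinuousOn (nearPoint e α) {y | ⟪y, e⟫_ℝ = 0 ∧ ‖y‖ ≤ 1} :=
  (isMobiusOn_boost he hα).continuousOn.comp continuous_hemisphereLift.continuousOn fun _ hy ↦
    mem_sphere_zero_iff_norm.2 (norm_hemisphereLift he hy.1 hy.2)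

variable {H : Type*} [NormedAddCommGroup H] [InnerProductSpace ℝ H] {i : H →ₗᵢ[ℝ] E}

theorem continuousOn_comp_nearPoint (he : ‖e‖ = 1) (hα : 1 < α) (hi : ∀ y, ⟪i y, e⟫_ℝ = 0)
    (hg : ContinuousOn g (sphere 0 1)) :
    ContinuousOn (fun y : H ↦ g (nearPoint e α (i y))) (closedBall 0 1) := by
  have hmaps : MapsTo i (closedBall 0 1) {y | ⟪y, e⟫_ℝ = 0 ∧ ‖y‖ ≤ 1} := fun y hy ↦
    ⟨hi y, (i.norm_map y).trans_le (mem_closedBall_zero_iff.1 hy)⟩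
  exact hg.comp ((continuousOn_nearPoint he hα).comp i.continuous.continuousOn hmaps)
    fun y hy ↦ mem_sphere_zero_iff_norm.2 (norm_nearPoint he hα (hmaps hy).1 (hmaps hy).2)

theorem sliceDensity_map (y : H) : sliceDensity e α d g (i y) =
    (ball 0 1).indicator (fun y : H ↦ (√(1 - ‖y‖ ^ 2))⁻¹ *
      ((√(α ^ 2 - 1) / (α + √(1 - ‖y‖ ^ 2))) ^ d * g (nearPoint e α (i y)))) y := by
  simp only [sliceDensity, indicator, mem_ball_zero_iff, i.norm_map]

theorem continuousOn_factor_mul_comp_nearPoint (he : ‖e‖ = 1) (hα : 1 < α)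
    (hi : ∀ y, ⟪i y, e⟫_ℝ = 0) (hg : ContinuousOn g (sphere 0 1)) :
    ContinuousOn (fun y : H ↦ (√(α ^ 2 - 1) / (α + √(1 - ‖y‖ ^ 2))) ^ d * g (nearPoint e α (i y)))
      (closedBall 0 1) :=
  .mul (by fun_prop (disch := intros; positivity)) (continuousOn_comp_nearPoint he hα hi hg)

theorem continuousAt_sliceDensity (he : ‖e‖ = 1) (hα : 1 < α) (hi : ∀ y, ⟪i y, e⟫_ℝ = 0)
    (hg : ContinuousOn g (sphere 0 1)) {y : H} (hy : ‖y‖ < 1) :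
    ContinuousAt (fun y : H ↦ sliceDensity e α d g (i y)) y := by
  have hball : ball (0 : H) 1 ∈ 𝓝 y := isOpen_ball.mem_nhds (mem_ball_zero_iff.2 hy)
  have hpos : √(1 - ‖y‖ ^ 2) ≠ 0 := (sqrt_one_sub_norm_sq_pos hy).ne'
  have hfactor := (continuousOn_factor_mul_comp_nearPoint (d := d) he hα hi hg).continuousAt
    (mem_of_superset hball ball_subset_closedBall)
  have hinv : ContinuousAt (fun y : H ↦ (√(1 - ‖y‖ ^ 2))⁻¹) y := .inv₀ (by fun_prop) hpos
  refine (hinv.mul hfactor).congr ?_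
  filter_upwards [hball] with z hz
  rw [sliceDensity_map, indicator_of_mem hz]
  rfl

theorem eq_zero_of_sliceDensity_eq_zero (he : ‖e‖ = 1) (hα : 1 < α) (hi : ∀ y, ⟪i y, e⟫_ℝ = 0)
    (hg : ContinuousOn g (sphere 0 1))
    (h : ∀ y : H, ‖y‖ < 1 → sliceDensity e α d g (i y) = 0) {y : H} (hy : ‖y‖ ≤ 1) :
    g (nearPoint e α (i y)) = 0 := by
  have hball : EqOn (fun y : H ↦ g (nearPoint e α (i y))) 0 (ball 0 1) := fun z hz ↦ by
    have hz₁ := mem_ball_zero_iff.1 hz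
    have hpos : 0 < √(1 - ‖z‖ ^ 2) := sqrt_one_sub_norm_sq_pos hz₁
    have hR : 0 < √(α ^ 2 - 1) := sqrt_sq_sub_one_pos hα
    have := h z hz₁
    rw [sliceDensity_map, indicator_of_mem hz, mul_eq_zero_iff_left (by positivity),
      mul_eq_zero_iff_left (by positivity)] at this
    exact this
  exact hball.of_subset_closure (continuousOn_comp_nearPoint he hα hi hg) continuousOn_const
    ball_subset_closedBall (closure_ball (0 : H) one_ne_zero).ge (mem_closedBall_zero_iff.2 hy)

theorem integrable_sliceDensity [FiniteDimensional ℝ H] [MeasurableSpace H] [BorelSpace H]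
    (he : ‖e‖ = 1) (hα : 1 < α) (hi : ∀ y, ⟪i y, e⟫_ℝ = 0) (hg : ContinuousOn g (sphere 0 1)) :
    Integrable fun y : H ↦ sliceDensity e α d g (i y) := by
  simp only [sliceDensity_map]
  exact ((integrableOn_inv_sqrt_one_sub_norm_sq volume).mul_continuousOn_of_subset
    (continuousOn_factor_mul_comp_nearPoint he hα hi hg) measurableSet_ball
    (isCompact_closedBall 0 1) ball_subset_closedBall).integrable_indicator measurableSet_ball

end Injectivity

section Sections

open EuclideanGeometry

variable {E : Type*} [NormedAddCommGroup E] [InnerProductSpace ℝ E] {e w x : E} {α : ℝ}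
  {U : Submodule ℝ E} {g : E → ℝ}

theorem smul_notMem_sphere (he : ‖e‖ = 1) (hα : 1 < α) : α • e ∉ sphere (0 : E) 1 := by
  rw [mem_sphere_zero_iff_norm, norm_smul, he, Real.norm_of_nonneg (by positivity), mul_one]
  exact hα.ne'

theorem inversion_smul_mem_sphere (he : ‖e‖ = 1) (hα : 1 < α) (hx : x ∈ sphere 0 1) :
    inversion (α • e) √(α ^ 2 - 1) x ∈ sphere 0 1 := by
  refine inversion_mem_sphere_of_orthogonal ?_
    (ne_of_mem_of_not_mem hx (smul_notMem_sphere he hα)) hx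
  rw [norm_smul, he, Real.norm_of_nonneg (by positivity), Real.sq_sqrt (by nlinarith)]
  ring

theorem mapsTo_inversion_sphere_inter_sectionPlane (he : ‖e‖ = 1) (hα : 1 < α) :
    MapsTo (inversion (α • e) √(α ^ 2 - 1)) (sphere 0 1 ∩ sectionPlane e α U w)
      (sphere 0 1 ∩ sectionPlane e α U w) := fun _ hx ↦
  ⟨inversion_smul_mem_sphere he hα hx.1, inversion_mem_affineSubspace self_mem_sectionPlane hx.2⟩

theorem isCompact_sphere_inter_sectionPlane [FiniteDimensional ℝ U] :
    IsCompact (sphere 0 1 ∩ (sectionPlane e α U w : Set E)) := by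
  have : FiniteDimensional ℝ (sectionPlane e α U w).direction := by
    rw [sectionPlane, AffineSubspace.direction_mk']
    infer_instance
  exact isCompact_inter_affineSubspace isClosed_sphere isBounded_sphere _

variable [MeasurableSpace E] [BorelSpace E] {V : Type*} [NormedAddCommGroup V]
  [InnerProductSpace ℝ V] [FiniteDimensional ℝ V] {j : V →ₗᵢ[ℝ] E}

theorem integrableOn_sphere_inter_sectionPlane (he : ‖e‖ = 1) (hα : 1 < α) (hw : ⟪w, e⟫_ℝ = 0)
    (hje : ∀ v, ⟪j v, e⟫_ℝ = 0) (hj : ∀ v, ⟪w, j v⟫_ℝ = 0) (hw₁ : ‖w‖ < 1)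
    (hg : ContinuousOn g (sphere 0 1)) :
    IntegrableOn g (sphere 0 1 ∩ sectionPlane e α (LinearMap.range j.toLinearMap) w)
      μH[finrank ℝ V] := by
  have hT := isCompact_sphere_inter_sectionPlane (e := e) (w := w) (α := α)
    (U := LinearMap.range j.toLinearMap)
  have hfin := hausdorffMeasure_ne_top_of_mapsTo_inversion (sqrt_sq_sub_one_pos hα) hT
    (fun h ↦ smul_notMem_sphere he hα h.1) (mapsTo_inversion_sphere_inter_sectionPlane he hα)
    (hausdorffMeasure_sphere_inter_sectionPlane_inter_closedBall_ne_top he hα hw hje hj hw₁)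
  obtain ⟨C, hC⟩ := hT.exists_bound_of_continuousOn (hg.mono inter_subset_left)
  exact .of_bound hfin.lt_top
    ((hg.mono inter_subset_left).aestronglyMeasurable_of_isCompact hT hT.measurableSet) C
    (ae_restrict_of_forall_mem hT.measurableSet hC)

theorem setIntegral_sphere_inter_sectionPlane [Nontrivial V] [MeasurableSpace V] [BorelSpace V]
    (he : ‖e‖ = 1) (hα : 1 < α) (hw : ⟪w, e⟫_ℝ = 0) (hje : ∀ v, ⟪j v, e⟫_ℝ = 0)
    (hj : ∀ v, ⟪w, j v⟫_ℝ = 0) (hw₁ : ‖w‖ < 1) (hg : ContinuousOn g (sphere 0 1))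
    (hK : EqOn (kelvinTransform (finrank ℝ V) (α • e) √(α ^ 2 - 1) g) g (sphere 0 1)) :
    ∫ x in sphere 0 1 ∩ sectionPlane e α (LinearMap.range j.toLinearMap) w, g x ∂μH[finrank ℝ V] =
      2 * (√(1 - ‖w‖ ^ 2) * ∫ v, sliceDensity e α (finrank ℝ V) g (w + j v) ∂μH[finrank ℝ V]) := by
  rw [setIntegral_eq_two_mul_of_kelvinTransform_eq (sqrt_sq_sub_one_pos hα) finrank_pos
    isCompact_sphere_inter_sectionPlane (fun h ↦ smul_notMem_sphere he hα h.1)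
    (mapsTo_inversion_sphere_inter_sectionPlane he hα)
    (hausdorffMeasure_sphere_inter_sectionPlane_inter_sphere he hα hw hje hj hw₁)
    (integrableOn_sphere_inter_sectionPlane he hα hw hje hj hw₁ hg) (hK.mono inter_subset_left),
    setIntegral_sphere_inter_sectionPlane_inter_closedBall he hα hw hje hj hw₁]

end Sections

section Uniqueness

open EuclideanGeometry

variable {E : Type*} [NormedAddCommGroup E] [InnerProductSpace ℝ E] [MeasurableSpace E]
  [BorelSpace E] {e w : E} {α : ℝ} {d : ℕ} {g : E → ℝ}

theorem integral_sliceDensity_eq_zero {V : Type*} [NormedAddCommGroup V] [InnerProductSpace ℝ V]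
    [FiniteDimensional ℝ V] [Nontrivial V] [MeasurableSpace V] [BorelSpace V] {j : V →ₗᵢ[ℝ] E}
    (hV : finrank ℝ V = d) (he : ‖e‖ = 1) (hα : 1 < α) (hw : ⟪w, e⟫_ℝ = 0)
    (hje : ∀ v, ⟪j v, e⟫_ℝ = 0) (hj : ∀ v, ⟪w, j v⟫_ℝ = 0) (hg : ContinuousOn g (sphere 0 1))
    (hK : EqOn (kelvinTransform d (α • e) √(α ^ 2 - 1) g) g (sphere 0 1))
    (hzero : ‖w‖ < 1 → ∫ x in sphere 0 1 ∩ sectionPlane e α (LinearMap.range j.toLinearMap) w,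
      g x ∂μH[d] = 0) :
    ∫ v, sliceDensity e α d g (w + j v) = 0 := by
  subst hV
  rcases lt_or_ge ‖w‖ 1 with hw₁ | hw₁
  · have hr : √(1 - ‖w‖ ^ 2) ≠ 0 := (sqrt_one_sub_norm_sq_pos hw₁).ne'
    have hsection := setIntegral_sphere_inter_sectionPlane he hα hw hje hj hw₁ hg hK
    rw [hzero hw₁, zero_eq_mul, or_iff_right two_ne_zero, mul_eq_zero_iff_left hr] at hsection
    rw [Measure.isAddLeftInvariant_eq_smul (volume : Measure V) μH[finrank ℝ V],
      integral_smul_nnreal_measure, hsection, smul_zero]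
  · refine integral_eq_zero_of_ae (.of_forall fun v ↦ indicator_of_notMem (fun hmem ↦ ?_) _)
    have hpyth := norm_add_sq_eq_norm_sq_add_norm_sq_real (hj v)
    nlinarith [mem_ball_zero_iff.1 hmem, norm_nonneg (w + j v), norm_nonneg (j v)]

theorem integral_submodule_sliceDensity_eq_zero {H : Type*} [NormedAddCommGroup H]
    [InnerProductSpace ℝ H] [FiniteDimensional ℝ H] [MeasurableSpace H] [BorelSpace H]
    {i : H →ₗᵢ[ℝ] E} (he : ‖e‖ = 1) (hα : 1 < α) (hd : 0 < d) (hi : ∀ y, ⟪i y, e⟫_ℝ = 0)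
    (hg : ContinuousOn g (sphere 0 1))
    (hK : EqOn (kelvinTransform d (α • e) √(α ^ 2 - 1) g) g (sphere 0 1))
    (hzero : ∀ U : Submodule ℝ E, finrank ℝ U = d → (∀ u ∈ U, ⟪u, e⟫_ℝ = 0) →
      ∀ w ∈ Uᗮ, ⟪w, e⟫_ℝ = 0 → ‖w‖ < 1 →
        ∫ x in sphere 0 1 ∩ sectionPlane e α U w, g x ∂μH[d] = 0)
    {V : Submodule ℝ H} (hV : finrank ℝ V = d) {w : H} (hw : w ∈ Vᗮ) :
    ∫ v : V, sliceDensity e α d g (i (w + v)) = 0 := by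
  have : Nontrivial V := finrank_pos_iff.1 (hV ▸ hd)
  have hrange : finrank ℝ (LinearMap.range (i.comp V.subtypeₗᵢ).toLinearMap) = d :=
    (LinearMap.finrank_range_of_inj (i.comp V.subtypeₗᵢ).injective).trans hV
  have horth (v : V) : ⟪i w, i v⟫_ℝ = 0 :=
    (i.inner_map_map w v).trans (V.inner_left_of_mem_orthogonal v.2 hw)
  simp only [map_add]
  exact integral_sliceDensity_eq_zero (j := i.comp V.subtypeₗᵢ) hV he hα (hi w) (fun v ↦ hi v) horth
    hg hK (hzero _ hrange (range_inner_eq_zero fun v ↦ hi v) (i w)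
      ((Submodule.mem_orthogonal' _ _).2 (by rintro _ ⟨v, rfl⟩; exact horth v)) (hi w))

theorem sliceDensity_eq_zero {H : Type*} [NormedAddCommGroup H] [InnerProductSpace ℝ H]
    [FiniteDimensional ℝ H] [MeasurableSpace H] [BorelSpace H] {i : H →ₗᵢ[ℝ] E} (he : ‖e‖ = 1)
    (hα : 1 < α) (hd : 0 < d) (hdH : d < finrank ℝ H) (hi : ∀ y, ⟪i y, e⟫_ℝ = 0)
    (hg : ContinuousOn g (sphere 0 1))
    (hK : EqOn (kelvinTransform d (α • e) √(α ^ 2 - 1) g) g (sphere 0 1))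
    (hzero : ∀ U : Submodule ℝ E, finrank ℝ U = d → (∀ u ∈ U, ⟪u, e⟫_ℝ = 0) →
      ∀ w ∈ Uᗮ, ⟪w, e⟫_ℝ = 0 → ‖w‖ < 1 →
        ∫ x in sphere 0 1 ∩ sectionPlane e α U w, g x ∂μH[d] = 0)
    {y : H} (hy : ‖y‖ < 1) : sliceDensity e α d g (i y) = 0 := by
  refine Complex.ofReal_eq_zero.1 (eq_zero_of_integral_slices_eq_zero
    (f := fun z ↦ (sliceDensity e α d g (i z) : ℂ)) hdH (integrable_sliceDensity he hα hi hg).ofReal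
    (fun V hV w hw ↦ ?_) (continuousAt_sliceDensity he hα hi hg hy).ofReal)
  rw [integral_complex_ofReal,
    integral_submodule_sliceDensity_eq_zero he hα hd hi hg hK hzero hV hw, Complex.ofReal_zero]

theorem eqOn_zero_of_setIntegral_sectionPlane_eq_zero (he : ‖e‖ = 1) (hα : 1 < α) (hd : 0 < d)
    (hdE : ↑(d + 1) < Module.rank ℝ E) (hg : ContinuousOn g (sphere 0 1))
    (hK : EqOn (kelvinTransform d (α • e) √(α ^ 2 - 1) g) g (sphere 0 1))
    (hzero : ∀ U : Submodule ℝ E, finrank ℝ U = d → (∀ u ∈ U, ⟪u, e⟫_ℝ = 0) →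
      ∀ w ∈ Uᗮ, ⟪w, e⟫_ℝ = 0 → ‖w‖ < 1 →
        ∫ x in sphere 0 1 ∩ sectionPlane e α U w, g x ∂μH[d] = 0) :
    EqOn g 0 (sphere 0 1) := by
  have hnear {x : E} (hx : x ∈ sphere 0 1) (hdist : dist x (α • e) ≤ √(α ^ 2 - 1)) : g x = 0 := by
    obtain ⟨y, hy, hy₁, rfl⟩ := exists_nearPoint_eq he hα (mem_sphere_zero_iff_norm.1 hx) hdist
    obtain ⟨H, hH, _, hyH, hdH⟩ := exists_finiteDimensional_le_orthogonal_span_singleton hdE hy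
    have hHe (y : H) : ⟪H.subtypeₗᵢ y, e⟫_ℝ = 0 :=
      Submodule.mem_orthogonal_singleton_iff_inner_left.1 (hH y.2)
    exact eq_zero_of_sliceDensity_eq_zero (y := ⟨y, hyH⟩) he hα hHe hg
      (fun z hz ↦ sliceDensity_eq_zero he hα hd hdH hHe hg hK hzero hz) hy₁
  intro x hx
  rcases le_total (dist x (α • e)) √(α ^ 2 - 1) with h | h
  · exact hnear hx h
  · have hfar : dist (inversion (α • e) √(α ^ 2 - 1) x) (α • e) ≤ √(α ^ 2 - 1) := by
      rw [dist_inversion_center, sq]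
      exact div_le_of_le_mul₀ dist_nonneg (Real.sqrt_nonneg _) (by gcongr)
    rw [← hK hx, kelvinTransform, hnear (inversion_smul_mem_sphere he hα hx) hfar, mul_zero,
      Pi.zero_apply]

end Uniqueness

section EuclideanReflection

variable {n d : ℕ} {a x : Euc (n + 1)}

theorem tauMap_eq_inversion (ha : 1 < ‖a‖) (hx : ‖x‖ = 1) :
    tauMap a x = EuclideanGeometry.inversion a √(‖a‖ ^ 2 - 1) x := by
  have hne : ‖x - a‖ ≠ 0 := norm_ne_zero_iff.2 (sub_ne_zero.2 (by rintro rfl; exact ha.ne' hx))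
  have hinner : 2 * ⟪x, a⟫_ℝ = 1 + ‖a‖ ^ 2 - ‖x - a‖ ^ 2 := by
    rw [norm_sub_sq_real, hx]
    ring
  rw [tauMap, mul_one_sub, hinner, EuclideanGeometry.inversion, dist_eq_norm, div_pow,
    Real.sq_sqrt (by nlinarith), vsub_eq_sub, vadd_eq_add]
  match_scalars <;> field_simp
  ring

theorem Wop_succ_eq_kelvinTransform (ha : 1 < ‖a‖) (f : Euc (n + 1) → ℝ) (hx : ‖x‖ = 1) :
    Wop (d + 1) a f x = kelvinTransform d a √(‖a‖ ^ 2 - 1) f x := by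
  rw [Wop, kelvinTransform, tauMap_eq_inversion ha hx, Real.sq_sqrt (by nlinarith), dist_comm,
    dist_eq_norm, add_tsub_cancel_right]

end EuclideanReflection

theorem statement8_general {E : Type*} [NormedAddCommGroup E] [InnerProductSpace ℝ E]
    [MeasurableSpace E] [BorelSpace E] {d : ℕ} (hd : 0 < d) (hdE : ↑(d + 1) < Module.rank ℝ E)
    {a : E} (ha : 1 < ‖a‖) {f₁ f₂ : E → ℝ} (hf₁ : ContinuousOn f₁ (sphere 0 1))
    (hf₂ : ContinuousOn f₂ (sphere 0 1))
    (hK₁ : EqOn (kelvinTransform d a √(‖a‖ ^ 2 - 1) f₁) f₁ (sphere 0 1))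
    (hK₂ : EqOn (kelvinTransform d a √(‖a‖ ^ 2 - 1) f₂) f₂ (sphere 0 1))
    (heq : ∀ τ : AffineSubspace ℝ E, finrank ℝ τ.direction = d + 1 → a ∈ τ → (∃ z ∈ τ, ‖z‖ < 1) →
      ∫ x in sphere 0 1 ∩ τ, f₁ x ∂μH[d] = ∫ x in sphere 0 1 ∩ τ, f₂ x ∂μH[d]) :
    EqOn f₁ f₂ (sphere 0 1) := by
  obtain ⟨e, he, hae⟩ : ∃ e : E, ‖e‖ = 1 ∧ ‖a‖ • e = a :=
    ⟨‖a‖⁻¹ • a, norm_smul_inv_norm (𝕜 := ℝ) (norm_pos_iff.1 (by positivity)),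
      smul_inv_smul₀ (by positivity) a⟩
  have hK : EqOn (kelvinTransform d (‖a‖ • e) √(‖a‖ ^ 2 - 1) (f₁ - f₂)) (f₁ - f₂) (sphere 0 1) :=
    fun x hx ↦ by rw [hae, kelvinTransform_sub, hK₁ hx, hK₂ hx, Pi.sub_apply]
  intro x hx
  refine sub_eq_zero.1 (eqOn_zero_of_setIntegral_sectionPlane_eq_zero he ha hd hdE (hf₁.sub hf₂) hK
    (fun U hU hUe w hwU hw hw₁ ↦ ?_) hx)
  have : FiniteDimensional ℝ U := .of_finrank_pos (hU ▸ hd)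
  have hint {f : E → ℝ} (hf : ContinuousOn f (sphere 0 1)) :
      IntegrableOn f (sphere 0 1 ∩ sectionPlane e ‖a‖ U w) μH[d] := by
    have h := integrableOn_sphere_inter_sectionPlane (j := U.subtypeₗᵢ) he ha hw (fun u ↦ hUe u u.2)
      (fun u ↦ U.inner_left_of_mem_orthogonal u.2 hwU) hw₁ hf
    rwa [Submodule.subtypeₗᵢ_toLinearMap, U.range_subtype, hU] at h
  simp only [Pi.sub_apply]
  rw [integral_sub (hint hf₁) (hint hf₂), sub_eq_zero]
  have ha_mem : ‖a‖ • e ∈ sectionPlane e ‖a‖ U w := self_mem_sectionPlane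
  rw [hae] at ha_mem
  refine heq _ ?_ ha_mem (exists_mem_sectionPlane_norm_lt_one he ha hUe hw hw₁)
  rw [finrank_direction_sectionPlane he ha hUe hw, hU]

/-- Injectivity of the shifted Funk transform with exterior center
on functions satisfying `f = W_a f` : if `f₁, f₂` are continuous on `S^n`, satisfy
`fᵢ = W_a fᵢ` on `S^n`, and have equal integrals over all sections of `S^n` by
`k`-planes through `a` meeting the open unit ball, then `f₁ = f₂` on `S^n`. -/
theorem statement8 (n k : ℕ) (hn : 2 ≤ n) (hk : 1 < k) (hkn : k ≤ n)
    (a : Euc (n + 1)) (ha : 1 < ‖a‖)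
    (f₁ f₂ : Euc (n + 1) → ℝ)
    (hf₁ : ContinuousOn f₁ (sphere (0 : Euc (n + 1)) 1))
    (hf₂ : ContinuousOn f₂ (sphere (0 : Euc (n + 1)) 1))
    (hW₁ : ∀ x ∈ sphere (0 : Euc (n + 1)) 1, f₁ x = Wop k a f₁ x)
    (hW₂ : ∀ x ∈ sphere (0 : Euc (n + 1)) 1, f₂ x = Wop k a f₂ x)
    (heq : ∀ τ : AffineSubspace ℝ (Euc (n + 1)),
        Module.finrank ℝ τ.direction = k → a ∈ τ →
        (∃ z ∈ τ, ‖z‖ < 1) →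
        (∫ x in sphere (0 : Euc (n + 1)) 1 ∩ (τ : Set (Euc (n + 1))),
          f₁ x ∂μH[(k : ℝ) - 1]) =
        ∫ x in sphere (0 : Euc (n + 1)) 1 ∩ (τ : Set (Euc (n + 1))),
          f₂ x ∂μH[(k : ℝ) - 1]) :
    ∀ x ∈ sphere (0 : Euc (n + 1)) 1, f₁ x = f₂ x := by
  obtain ⟨d, rfl⟩ : ∃ d, k = d + 1 := ⟨k - 1, by lia⟩
  have hrank : ↑(d + 1) < Module.rank ℝ (Euc (n + 1)) := by
    rw [← finrank_eq_rank, finrank_euclideanSpace_fin]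
    exact_mod_cast hkn.trans_lt n.lt_succ_self
  have hK {f : Euc (n + 1) → ℝ} (hf : ∀ x ∈ sphere 0 1, f x = Wop (d + 1) a f x) :
      EqOn (kelvinTransform d a √(‖a‖ ^ 2 - 1) f) f (sphere 0 1) := fun x hx ↦
    (Wop_succ_eq_kelvinTransform ha f (mem_sphere_zero_iff_norm.1 hx)).symm.trans (hf x hx).symm
  simp only [Nat.cast_add_one, add_sub_cancel_right] at heq
  exact statement8_general (by lia) hrank ha hf₁ hf₂ (hK hW₁) (hK hW₂) heq
end

section
/- Let n ≥ 2, 1 < k ≤ n, and let a ∈ ℝ^{n+1} with |a| > 1. For a continuous function f on S^n the following are equivalent: (i) ∫_{S^n ∩ τ} f dH^{k−1} = 0 for every k-dimensional affine plane τ passing through a and meeting the open unit ball B^{n+1}; (ii) f(x) = −(W_a f)(x) for every x ∈ S^n. -/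
/-!
Write `I_b` for the inversion with centre `b`, `1 < |b|`, that preserves the unit sphere. It is
conformal and maps sections by planes through `b` to themselves, so a change of variables gives
`∫ f = ∫ W_a f` over every section through `a`; hence `f = -W_a f` makes these integrals vanish.

Conversely, `a` and the sought point `x` span at most a plane, so it suffices to work in a
`(k + 1)`-dimensional subspace, where the sections are by hyperplanes. Write `a = ((s² + 1) / 2s) e`
with `|e| = 1` and `1 < s`. Then `I_{se}` turns the hyperplane sections through `a` into the
sections by hyperplanes parallel to `e`, and conjugates `I_a` to the reflection `R` in `eᗮ`. So
the claim becomes: a continuous `G` on the sphere whose integrals over all sections parallel to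
`e` vanish is odd under `R`. Slicing the sphere by such hyperplanes, `G` is orthogonal to
`z ↦ exp (i ⟪z, u⟫)` for all `u ⊥ e`. By Fourier uniqueness it is orthogonal to every continuous
function of the projection to `eᗮ`, in particular to `G + G ∘ R`, and therefore `G + G ∘ R = 0`.
-/

open MeasureTheory Metric Matrix
open scoped InnerProductSpace ENNReal

open scoped NNReal Topology

section RpowDensity

variable {X : Type*} [MeasurableSpace X] {μ ν ν₁ ν₂ : Measure X} {d : ℝ} {f : X → ℝ≥0}

/- Both measures are compared with `μ` on the layers `q ^ n ≤ f < q ^ (n + 1)`, and then `q → 1`. -/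
theorem measure_le_of_rpow_bounds (hd : 0 ≤ d) (hf : Measurable f) (hf0 : ∀ x, f x ≠ 0)
    (h₁ : ∀ B, MeasurableSet B → ∀ c : ℝ≥0, (∀ x ∈ B, f x ≤ c) → ν₁ B ≤ (c : ℝ≥0∞) ^ d * μ B)
    (h₂ : ∀ B, MeasurableSet B → ∀ c : ℝ≥0, c ≠ 0 → (∀ x ∈ B, c ≤ f x) →
      (c : ℝ≥0∞) ^ d * μ B ≤ ν₂ B) :
    ν₁ ≤ ν₂ := by
  refine Measure.le_iff.2 fun B hB => ?_
  have layer_sum (ν : Measure X) {q : ℝ≥0} (hq : 1 < q) :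
      ν B = ∑' n : ℤ, ν (B ∩ f ⁻¹' Set.Ico (q ^ n) (q ^ (n + 1))) := by
    have hq0 : q ≠ 0 := (zero_lt_one.trans hq).ne'
    rw [measure_eq_measure_preimage_add_measure_tsum_Ico_zpow ν hf.coe_nnreal_ennreal hB hq]
    have hempty : (fun x => (f x : ℝ≥0∞)) ⁻¹' {0} = ∅ := by ext x; simp [hf0 x]
    have hempty' : (fun x => (f x : ℝ≥0∞)) ⁻¹' {⊤} = ∅ := by ext x; simp
    simp only [hempty, hempty', Set.inter_empty, measure_empty, zero_add, ← ENNReal.coe_zpow hq0]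
    refine tsum_congr fun n => congrArg (fun s => ν (B ∩ s)) ?_
    ext x
    simp
  have le_mul (q : ℝ≥0) (hq : 1 < q) : ν₁ B ≤ (q : ℝ≥0∞) ^ d * ν₂ B := by
    have hq0 : q ≠ 0 := (zero_lt_one.trans hq).ne'
    rw [layer_sum ν₁ hq, layer_sum ν₂ hq, ← ENNReal.tsum_mul_left]
    refine ENNReal.tsum_le_tsum fun n => ?_
    set L := B ∩ f ⁻¹' Set.Ico (q ^ n) (q ^ (n + 1))
    have hL : MeasurableSet L := hB.inter (hf measurableSet_Ico)
    calc ν₁ L ≤ ((q ^ (n + 1) : ℝ≥0) : ℝ≥0∞) ^ d * μ L := h₁ L hL _ fun x hx => hx.2.2.le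
      _ = (q : ℝ≥0∞) ^ d * (((q ^ n : ℝ≥0) : ℝ≥0∞) ^ d * μ L) := by
        rw [zpow_add_one₀ hq0, mul_comm (q ^ n), ENNReal.coe_mul,
          ENNReal.mul_rpow_of_nonneg _ _ hd, mul_assoc]
      _ ≤ (q : ℝ≥0∞) ^ d * ν₂ L :=
        mul_le_mul_right (h₂ L hL _ (zpow_ne_zero n hq0) fun x hx => hx.2.1) _
  have limit : Filter.Tendsto (fun q : ℝ≥0 => (q : ℝ≥0∞) ^ d * ν₂ B) (𝓝[>] 1) (𝓝 (ν₂ B)) := by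
    have hcont : Filter.Tendsto (fun q : ℝ≥0 => (q : ℝ≥0∞) ^ d) (𝓝[>] 1) (𝓝 1) :=
      ((ENNReal.continuous_rpow_const.comp ENNReal.continuous_coe).tendsto' 1 1
        (by simp)).mono_left nhdsWithin_le_nhds
    simpa using ENNReal.Tendsto.mul_const hcont (Or.inl one_ne_zero)
  exact ge_of_tendsto limit (eventually_mem_nhdsWithin.mono le_mul)

theorem eq_withDensity_rpow (hd : 0 ≤ d) (hf : Measurable f) (hf0 : ∀ x, f x ≠ 0)
    (hle : ∀ B, MeasurableSet B → ∀ c : ℝ≥0, (∀ x ∈ B, f x ≤ c) → ν B ≤ (c : ℝ≥0∞) ^ d * μ B)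
    (hge : ∀ B, MeasurableSet B → ∀ c : ℝ≥0, c ≠ 0 → (∀ x ∈ B, c ≤ f x) →
      (c : ℝ≥0∞) ^ d * μ B ≤ ν B) :
    ν = μ.withDensity fun x => ((f x ^ d : ℝ≥0) : ℝ≥0∞) := by
  simp_rw [ENNReal.coe_rpow_of_nonneg _ hd]
  refine le_antisymm (measure_le_of_rpow_bounds hd hf hf0 hle fun B hB c _ hc => ?_)
    (measure_le_of_rpow_bounds hd hf hf0 (fun B hB c hc => ?_) hge)
  · rw [withDensity_apply _ hB, ← setLIntegral_const]
    exact setLIntegral_mono' hB fun x hx => by gcongr; exact hc x hx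
  · rw [withDensity_apply _ hB, ← setLIntegral_const]
    exact setLIntegral_mono' hB fun x hx => by gcongr; exact hc x hx

end RpowDensity

section Moebius

variable {X Y : Type*} [MetricSpace X] [MetricSpace Y]

/-- `φ` behaves on `s` like a Möbius transformation with conformal factor `κ`:
`|φ x - φ y|² = κ x * κ y * |x - y|²`. -/
structure IsMoebiusOn (φ : X → Y) (κ : X → ℝ) (s : Set X) : Prop where
  pos : ∀ x ∈ s, 0 < κ x
  dist_sq : ∀ x ∈ s, ∀ y ∈ s, dist (φ x) (φ y) ^ 2 = κ x * κ y * dist x y ^ 2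

namespace IsMoebiusOn

variable {φ : X → Y} {κ : X → ℝ} {s t : Set X} {d : ℝ}

theorem mono (h : IsMoebiusOn φ κ s) (hts : t ⊆ s) : IsMoebiusOn φ κ t :=
  ⟨fun x hx => h.pos x (hts hx), fun x hx y hy => h.dist_sq x (hts hx) y (hts hy)⟩

theorem injOn (h : IsMoebiusOn φ κ s) : Set.InjOn φ s := by
  intro x hx y hy hxy
  have hdist := h.dist_sq x hx y hy
  rw [hxy, dist_self] at hdist
  simpa [(h.pos x hx).ne', (h.pos y hy).ne'] using hdist.symm

theorem lipschitzOnWith (h : IsMoebiusOn φ κ s) {c : ℝ≥0} (hc : ∀ x ∈ s, κ x ≤ c) :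
    LipschitzOnWith c φ s := by
  refine LipschitzOnWith.of_dist_le_mul fun x hx y hy => ?_
  refine (sq_le_sq₀ dist_nonneg (by positivity)).1 ?_
  rw [h.dist_sq x hx y hy, mul_pow, sq (c : ℝ)]
  gcongr
  exacts [(h.pos y hy).le, hc x hx, hc y hy]

theorem antilipschitzWith_domRestrict (h : IsMoebiusOn φ κ s) {c : ℝ≥0} (hc0 : c ≠ 0)
    (hc : ∀ x ∈ s, c ≤ κ x) : AntilipschitzWith c⁻¹ (s.domRestrict φ) := by
  refine AntilipschitzWith.of_le_mul_dist fun x y => ?_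
  rw [NNReal.coe_inv, ← div_eq_inv_mul, le_div_iff₀' (by positivity)]
  refine (sq_le_sq₀ (by positivity) dist_nonneg).1 ?_
  rw [Set.domRestrict_apply, Set.domRestrict_apply, h.dist_sq x x.2 y y.2, mul_pow, sq (c : ℝ)]
  have hx := h.pos x x.2
  have hy := h.pos y y.2
  gcongr
  exacts [hc x x.2, hc y y.2, le_rfl]

variable [MeasurableSpace X] [BorelSpace X] [MeasurableSpace Y] [BorelSpace Y]

theorem hausdorffMeasure_image_le (h : IsMoebiusOn φ κ s) (hd : 0 ≤ d) {c : ℝ≥0}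
    (hc : ∀ x ∈ s, κ x ≤ c) : μH[d] (φ '' s) ≤ (c : ℝ≥0∞) ^ d * μH[d] s :=
  (h.lipschitzOnWith hc).hausdorffMeasure_image_le hd

theorem le_hausdorffMeasure_image (h : IsMoebiusOn φ κ s) (hd : 0 ≤ d) {c : ℝ≥0} (hc0 : c ≠ 0)
    (hc : ∀ x ∈ s, c ≤ κ x) : (c : ℝ≥0∞) ^ d * μH[d] s ≤ μH[d] (φ '' s) := by
  have hle := (h.antilipschitzWith_domRestrict hc0 hc).le_hausdorffMeasure_image hd Set.univ
  rw [← isometry_subtype_coe.hausdorffMeasure_image (Or.inl hd), Set.image_univ, Set.image_univ,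
    Subtype.range_coe, Set.range_domRestrict, ENNReal.coe_inv hc0, ENNReal.inv_rpow,
    ← ENNReal.div_eq_inv_mul] at hle
  rw [mul_comm]
  exact ENNReal.mul_le_of_le_div hle

variable [CompleteSpace X] [SecondCountableTopology X] [SecondCountableTopology Y]

theorem measurableEmbedding_domRestrict (h : IsMoebiusOn φ κ s) (hφ : Measurable φ)
    (hs : MeasurableSet s) : MeasurableEmbedding (s.domRestrict φ) :=
  have := hs.standardBorel
  (hφ.comp measurable_subtype_coe).measurableEmbedding h.injOn.injective

theorem comap_hausdorffMeasure (h : IsMoebiusOn φ κ s) (hd : 0 ≤ d) (hφ : Measurable φ)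
    (hκ : Measurable κ) (hs : MeasurableSet s) :
    (μH[d] : Measure Y).comap (s.domRestrict φ) =
      ((μH[d] : Measure X).comap ((↑) : s → X)).withDensity
        fun x => ((κ x).toNNReal ^ d : ℝ≥0) := by
  have hi := h.measurableEmbedding_domRestrict hφ hs
  have himage (B : Set s) : s.domRestrict φ '' B = φ '' ((↑) '' B) := (Set.image_image φ _ B).symm
  have hmono (B : Set s) : IsMoebiusOn φ κ ((↑) '' B) :=
    h.mono (Set.image_subset_iff.2 fun x _ => x.2)
  refine eq_withDensity_rpow hd (hκ.comp measurable_subtype_coe).real_toNNReal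
    (fun x => (Real.toNNReal_pos.2 (h.pos x x.2)).ne') (fun B _ c hc => ?_) fun B _ c hc0 hc => ?_
  · rw [hi.comap_apply, (MeasurableEmbedding.subtype_coe hs).comap_apply, himage]
    refine (hmono B).hausdorffMeasure_image_le hd ?_
    rintro _ ⟨x, hx, rfl⟩
    exact Real.toNNReal_le_iff_le_coe.1 (hc x hx)
  · rw [hi.comap_apply, (MeasurableEmbedding.subtype_coe hs).comap_apply, himage]
    refine (hmono B).le_hausdorffMeasure_image hd hc0 ?_
    rintro _ ⟨x, hx, rfl⟩
    exact (Real.le_toNNReal_iff_coe_le (h.pos x x.2).le).1 (hc x hx)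

theorem setIntegral_image {F : Type*} [NormedAddCommGroup F] [NormedSpace ℝ F]
    (h : IsMoebiusOn φ κ s) (hd : 0 ≤ d) (hφ : Measurable φ) (hκ : Measurable κ)
    (hs : MeasurableSet s) (g : Y → F) :
    ∫ y in φ '' s, g y ∂μH[d] = ∫ x in s, κ x ^ d • g (φ x) ∂μH[d] := by
  have hi := h.measurableEmbedding_domRestrict hφ hs
  calc ∫ y in φ '' s, g y ∂μH[d]
      = ∫ y, g y ∂((μH[d] : Measure Y).comap (s.domRestrict φ)).map (s.domRestrict φ) := by
        rw [hi.map_comap, Set.range_domRestrict]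
    _ = ∫ x : s, (κ x).toNNReal ^ d • g (φ x) ∂(μH[d] : Measure X).comap (↑) := by
        rw [hi.integral_map, h.comap_hausdorffMeasure hd hφ hκ hs,
          integral_withDensity_eq_integral_smul (by fun_prop)]
        rfl
    _ = ∫ x in s, (κ x).toNNReal ^ d • g (φ x) ∂μH[d] := integral_subtype_comap hs
        fun x => (κ x).toNNReal ^ d • g (φ x)
    _ = ∫ x in s, κ x ^ d • g (φ x) ∂μH[d] := setIntegral_congr_fun hs fun x hx => by
        simp only [NNReal.smul_def, NNReal.coe_rpow, Real.coe_toNNReal _ (h.pos x hx).le]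

end IsMoebiusOn

end Moebius

section SphereMeasure

open EuclideanGeometry (inversion dist_inversion_inversion inversion_inversion)
open Module (finrank)

variable {E : Type*} [NormedAddCommGroup E] [InnerProductSpace ℝ E] {e x : E}

theorem norm_sq_add_smul_of_inner_eq_zero (he : ‖e‖ = 1) (hx : ⟪x, e⟫_ℝ = 0) (c : ℝ) :
    ‖x + c • e‖ ^ 2 = ‖x‖ ^ 2 + c ^ 2 := by
  rw [norm_add_sq_real, inner_smul_right, hx, norm_smul, he, mul_one, Real.norm_eq_abs, sq_abs]
  ring

theorem inner_inversion_sqrt_two_eq_zero (he : ‖e‖ = 1) (hx : ‖x‖ = 1) (hxe : x ≠ e) :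
    ⟪inversion e √2 x, e⟫_ℝ = 0 := by
  have hinner : ⟪x, e⟫_ℝ < 1 := (inner_lt_one_iff_real_of_norm_eq_one hx he).2 hxe
  have hdist : dist x e ^ 2 = 2 * (1 - ⟪x, e⟫_ℝ) := by
    rw [dist_eq_norm, norm_sub_sq_real, hx, he]; ring
  rw [inversion, div_pow, hdist, Real.sq_sqrt zero_le_two, vsub_eq_sub, vadd_eq_add,
    inner_add_left, real_inner_smul_left, inner_sub_left, real_inner_self_eq_norm_sq, he]
  field_simp [(sub_pos.2 hinner).ne']
  ring

theorem norm_inversion_sqrt_two_sq (he : ‖e‖ = 1) (hx : ‖x‖ = 1) (hxe : x ≠ e) :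
    ‖inversion e √2 x‖ ^ 2 = (1 + ⟪x, e⟫_ℝ) / (1 - ⟪x, e⟫_ℝ) := by
  have hinner : ⟪x, e⟫_ℝ < 1 := (inner_lt_one_iff_real_of_norm_eq_one hx he).2 hxe
  have hdist : dist x e ^ 2 = 2 * (1 - ⟪x, e⟫_ℝ) := by
    rw [dist_eq_norm, norm_sub_sq_real, hx, he]; ring
  rw [inversion, div_pow, hdist, Real.sq_sqrt zero_le_two, vsub_eq_sub, vadd_eq_add,
    norm_add_sq_real, real_inner_smul_left, inner_sub_left, real_inner_self_eq_norm_sq, norm_smul,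
    mul_pow, ← dist_eq_norm, hdist, Real.norm_eq_abs, sq_abs, he]
  field_simp [(sub_pos.2 hinner).ne']
  ring

theorem exists_linearIsometryEquiv_apply_eq {x y : E} (h : ‖x‖ = ‖y‖) :
    ∃ A : E ≃ₗᵢ[ℝ] E, A x = y :=
  ⟨_, Submodule.reflection_sub h⟩

theorem finrank_orthogonal_span_singleton_of_norm_eq_one [FiniteDimensional ℝ E] (he : ‖e‖ = 1) :
    (finrank ℝ (ℝ ∙ e)ᗮ : ℝ) = finrank ℝ E - 1 := by
  rw [← (ℝ ∙ e).finrank_add_finrank_orthogonal,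
    finrank_span_singleton (norm_ne_zero_iff.1 (he ▸ one_ne_zero))]
  push_cast
  ring

theorem nontrivial_orthogonal_span_singleton [FiniteDimensional ℝ E]
    (hE : 2 ≤ finrank ℝ E) (he : ‖e‖ = 1) : Nontrivial (ℝ ∙ e)ᗮ := by
  refine Module.nontrivial_of_finrank_pos (R := ℝ) ?_
  rw [← Nat.cast_pos (α := ℝ), finrank_orthogonal_span_singleton_of_norm_eq_one he, sub_pos]
  exact_mod_cast hE

variable [MeasurableSpace E] [BorelSpace E]

variable (E) in
/-- The surface measure of the unit sphere of `E`. -/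
noncomputable def sphereMeasure : Measure E := μH[finrank ℝ E - 1].restrict (sphere 0 1)

theorem measurePreserving_sphereMeasure (A : E ≃ₗᵢ[ℝ] E) :
    MeasurePreserving A (sphereMeasure E) (sphereMeasure E) := by
  have h := (A.toIsometryEquiv.measurePreserving_hausdorffMeasure
    (finrank ℝ E - 1)).restrict_preimage (isClosed_sphere (x := (0 : E)) (ε := 1)).measurableSet
  have hpre : A.toIsometryEquiv ⁻¹' sphere 0 1 = sphere 0 1 := by ext; simp
  rwa [hpre] at h

theorem charFun_sphereMeasure_eq_of_norm_eq {ξ η : E} (h : ‖ξ‖ = ‖η‖) :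
    charFun (sphereMeasure E) ξ = charFun (sphereMeasure E) η := by
  obtain ⟨A, rfl⟩ := exists_linearIsometryEquiv_apply_eq h
  have hcomp := (measurePreserving_sphereMeasure A).integral_comp A.toHomeomorph.measurableEmbedding
    fun x => Complex.exp (⟪x, A ξ⟫_ℝ * Complex.I)
  simpa only [charFun_apply, A.inner_map_map] using hcomp

variable [FiniteDimensional ℝ E]

/-- Stereographic projection from `e` exhibits a hemisphere as a Lipschitz image of a ball. -/
theorem hausdorffMeasure_hemisphere_lt_top (he : ‖e‖ = 1) :
    μH[finrank ℝ E - 1] (sphere (0 : E) 1 ∩ {x | ⟪x, e⟫_ℝ ≤ 0}) < ∞ := by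
  set K := (ℝ ∙ e)ᗮ
  have hcover : sphere (0 : E) 1 ∩ {x | ⟪x, e⟫_ℝ ≤ 0} ⊆
      (fun v : K => inversion e √2 v) '' closedBall 0 1 := by
    rintro x ⟨hx, hxe : ⟪x, e⟫_ℝ ≤ 0⟩
    rw [mem_sphere_zero_iff_norm] at hx
    have hne : x ≠ e := by rintro rfl; rw [real_inner_self_eq_norm_sq, he] at hxe; linarith
    refine ⟨⟨inversion e √2 x, Submodule.mem_orthogonal_singleton_iff_inner_left.2
      (inner_inversion_sqrt_two_eq_zero he hx hne)⟩, ?_, inversion_inversion _ (by simp) _⟩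
    rw [mem_closedBall_zero_iff, ← sq_le_one_iff₀ (norm_nonneg _), Submodule.coe_norm,
      norm_inversion_sqrt_two_sq he hx hne, div_le_one (by linarith)]
    linarith
  have one_le_dist (v : K) : 1 ≤ dist (v : E) e := by
    have hv := norm_sq_add_smul_of_inner_eq_zero he
      (Submodule.mem_orthogonal_singleton_iff_inner_left.1 v.2) (-1)
    rw [neg_one_smul, ← sub_eq_add_neg] at hv
    rw [dist_eq_norm, ← one_le_sq_iff₀ (norm_nonneg _), hv]
    nlinarith
  have hlip : LipschitzWith 2 fun v : K => inversion e √2 v := by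
    refine LipschitzWith.of_dist_le_mul fun v w => ?_
    have hv := one_le_dist v
    have hw := one_le_dist w
    rw [dist_inversion_inversion (dist_pos.1 (by linarith)) (dist_pos.1 (by linarith)),
      Real.sq_sqrt zero_le_two]
    refine mul_le_mul_of_nonneg_right ?_ dist_nonneg
    exact div_le_self zero_le_two (one_le_mul_of_one_le_of_one_le hv hw)
  rw [← finrank_orthogonal_span_singleton_of_norm_eq_one he]
  calc _ ≤ _ := measure_mono hcover
    _ ≤ _ := hlip.hausdorffMeasure_image_le (Nat.cast_nonneg _) _
    _ < ∞ := by
      refine ENNReal.mul_lt_top (by finiteness) measure_closedBall_lt_top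

theorem hausdorffMeasure_sphere_pos [Nontrivial E] :
    0 < μH[finrank ℝ E - 1] (sphere (0 : E) 1) := by
  obtain ⟨e, he⟩ := exists_norm_eq E zero_le_one
  set K := (ℝ ∙ e)ᗮ
  have hlip : LipschitzWith 1 K.orthogonalProjectionOnto := K.lipschitzWith_orthogonalProjectionOnto
  have hcover : closedBall 0 1 ⊆ K.orthogonalProjectionOnto '' sphere (0 : E) 1 := by
    intro v hv
    rw [mem_closedBall_zero_iff, ← sq_le_one_iff₀ (norm_nonneg _)] at hv
    refine ⟨v + √(1 - ‖v‖ ^ 2) • e, ?_, ?_⟩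
    · rw [mem_sphere_zero_iff_norm, ← pow_eq_one_iff_of_nonneg (norm_nonneg _) two_ne_zero,
        norm_sq_add_smul_of_inner_eq_zero he
          (Submodule.mem_orthogonal_singleton_iff_inner_left.1 v.2),
        Real.sq_sqrt (sub_nonneg.2 hv), Submodule.coe_norm]
      ring
    · rw [map_add, map_smul, Submodule.orthogonalProjectionOnto_mem_subspace_eq_self,
        Submodule.orthogonalProjectionOnto_orthogonalComplement_singleton_eq_zero, smul_zero,
        add_zero]
  rw [← finrank_orthogonal_span_singleton_of_norm_eq_one he]
  calc 0 < μH[finrank ℝ K] (closedBall (0 : K) 1) := measure_closedBall_pos _ _ one_pos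
    _ ≤ _ := measure_mono hcover
    _ ≤ _ := hlip.hausdorffMeasure_image_le (Nat.cast_nonneg _) _
    _ = _ := by rw [ENNReal.coe_one, ENNReal.one_rpow, one_mul]

instance : IsFiniteMeasure (sphereMeasure E) where
  measure_univ_lt_top := by
    rw [sphereMeasure, Measure.restrict_apply_univ]
    rcases (sphere (0 : E) 1).eq_empty_or_nonempty with hempty | ⟨e, he⟩
    · simp [hempty]
    rw [mem_sphere_zero_iff_norm] at he
    have hcover : sphere (0 : E) 1 ⊆ (sphere (0 : E) 1 ∩ {x | ⟪x, e⟫_ℝ ≤ 0}) ∪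
        (sphere (0 : E) 1 ∩ {x | ⟪x, -e⟫_ℝ ≤ 0}) := fun x hx => by
      simpa [hx, mem_sphere_zero_iff_norm.1 hx] using le_total ⟪x, e⟫_ℝ 0
    exact (measure_mono hcover).trans_lt <| (measure_union_le _ _).trans_lt <|
      ENNReal.add_lt_top.2 ⟨hausdorffMeasure_hemisphere_lt_top he,
        hausdorffMeasure_hemisphere_lt_top (by rwa [norm_neg])⟩

theorem sphereMeasure_pos_of_isOpen {U : Set E} (hU : IsOpen U) (hx : ‖x‖ = 1) (hxU : x ∈ U) :
    0 < sphereMeasure E U := by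
  have : Nontrivial E := nontrivial_of_ne x 0 (norm_ne_zero_iff.1 (hx ▸ one_ne_zero))
  refine pos_iff_ne_zero.2 fun h0 => (hausdorffMeasure_sphere_pos (E := E)).ne' ?_
  rw [← Measure.restrict_apply_self, ← sphereMeasure]
  refine (isCompact_sphere (0 : E) 1).measure_zero_of_nhdsWithin fun y hy => ?_
  obtain ⟨A, hA⟩ := exists_linearIsometryEquiv_apply_eq
    ((mem_sphere_zero_iff_norm.1 hy).trans hx.symm)
  refine ⟨A ⁻¹' U, mem_nhdsWithin_of_mem_nhds ?_, ?_⟩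
  · exact (hU.preimage A.continuous).mem_nhds (by rwa [Set.mem_preimage, hA])
  · rw [(measurePreserving_sphereMeasure A).measure_preimage hU.measurableSet.nullMeasurableSet, h0]

end SphereMeasure

section Disintegration

open Module (finrank)

variable {E : Type*} [NormedAddCommGroup E] [InnerProductSpace ℝ E] {u x : E}

/-- The point of the unit sphere at height `t` over the hyperplane `uᗮ` in the direction of the unit
vector `v` of `uᗮ`. -/
noncomputable def latitude (u : E) (t : ℝ) (v : (ℝ ∙ u)ᗮ) : E := t • u + √(1 - t ^ 2) • (v : E)

@[fun_prop]
theorem continuous_latitude (u : E) :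
    Continuous fun p : ℝ × (ℝ ∙ u)ᗮ => latitude u p.1 p.2 := by
  unfold latitude
  fun_prop

theorem inner_latitude (hu : ‖u‖ = 1) (t : ℝ) (v : (ℝ ∙ u)ᗮ) : ⟪latitude u t v, u⟫_ℝ = t := by
  rw [latitude, inner_add_left, real_inner_smul_left, real_inner_smul_left,
    real_inner_self_eq_norm_sq, hu, Submodule.mem_orthogonal_singleton_iff_inner_left.1 v.2]
  ring

theorem norm_smul_add_sq (hu : ‖u‖ = 1) (α : ℝ) (v : (ℝ ∙ u)ᗮ) :
    ‖α • u + v‖ ^ 2 = α ^ 2 + ‖v‖ ^ 2 := by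
  rw [add_comm, norm_sq_add_smul_of_inner_eq_zero hu
    (Submodule.mem_orthogonal_singleton_iff_inner_left.1 v.2), Submodule.coe_norm, add_comm]

theorem inner_smul_add_orthogonalProjectionOnto (hu : ‖u‖ = 1) (x : E) :
    ⟪x, u⟫_ℝ • u + (ℝ ∙ u)ᗮ.orthogonalProjectionOnto x = x := by
  rw [Submodule.coe_orthogonalProjectionOnto_apply, Submodule.starProjection_orthogonal_val,
    Submodule.starProjection_unit_singleton ℝ hu, real_inner_comm, add_sub_cancel]

theorem norm_orthogonalProjectionOnto_sq (hu : ‖u‖ = 1) (x : E) :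
    ‖(ℝ ∙ u)ᗮ.orthogonalProjectionOnto x‖ ^ 2 = ‖x‖ ^ 2 - ⟪x, u⟫_ℝ ^ 2 := by
  have hsum := norm_smul_add_sq hu ⟪x, u⟫_ℝ ((ℝ ∙ u)ᗮ.orthogonalProjectionOnto x)
  rw [inner_smul_add_orthogonalProjectionOnto hu] at hsum
  linarith

theorem norm_orthogonalProjectionOnto_of_norm_eq_one (hu : ‖u‖ = 1) (hx : ‖x‖ = 1) :
    ‖(ℝ ∙ u)ᗮ.orthogonalProjectionOnto x‖ = √(1 - ⟪x, u⟫_ℝ ^ 2) := by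
  rw [← one_pow 2, ← hx, ← norm_orthogonalProjectionOnto_sq hu, Real.sqrt_sq (norm_nonneg _)]

theorem integral_exp_inner_smul_add [MeasurableSpace E] (x : E) (α r : ℝ)
    (μ : Measure (ℝ ∙ u)ᗮ) :
    ∫ v, Complex.exp (⟪x, α • u + r • (v : E)⟫_ℝ * Complex.I) ∂μ =
      Complex.exp ((α * ⟪x, u⟫_ℝ : ℝ) * Complex.I) *
        charFun μ (r • (ℝ ∙ u)ᗮ.orthogonalProjectionOnto x) := by
  rw [charFun_apply, ← integral_const_mul]
  refine integral_congr_ae (.of_forall fun v => ?_)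
  dsimp only
  rw [← Complex.exp_add, ← add_mul, inner_add_right, inner_smul_right, inner_smul_right,
    inner_smul_right, Submodule.inner_orthogonalProjectionOnto_eq_of_mem_left, real_inner_comm x]
  push_cast
  rfl

variable [MeasurableSpace E] [BorelSpace E]

theorem ae_norm_eq_one_sphereMeasure : ∀ᵐ x ∂sphereMeasure E, ‖x‖ = 1 := by
  filter_upwards [ae_restrict_mem isClosed_sphere.measurableSet] with x hx
  exact mem_sphere_zero_iff_norm.1 hx

variable [FiniteDimensional ℝ E]

/-- Both sides have the same characteristic function, since those of the two sphere measures are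
radial. -/
theorem smul_sphereMeasure_eq_map_latitude (hu : ‖u‖ = 1) :
    sphereMeasure (ℝ ∙ u)ᗮ Set.univ • sphereMeasure E =
      ((sphereMeasure E).prod (sphereMeasure (ℝ ∙ u)ᗮ)).map
        fun p => latitude u ⟪p.1, u⟫_ℝ p.2 := by
  set K := (ℝ ∙ u)ᗮ
  have : IsFiniteMeasure (sphereMeasure K Set.univ • sphereMeasure E) :=
    Measure.smul_finite _ (measure_ne_top _ _)
  refine Measure.ext_of_charFun (funext fun ξ => ?_)
  have hint (g : E × K → ℝ) (hg : Continuous g) : Integrable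
      (fun p => Complex.exp (g p * Complex.I)) ((sphereMeasure E).prod (sphereMeasure K)) :=
    Integrable.of_bound (by fun_prop) 1 (.of_forall fun p => (Complex.norm_exp_ofReal_mul_I _).le)
  set r := ‖K.orthogonalProjectionOnto ξ‖
  calc charFun (sphereMeasure K Set.univ • sphereMeasure E) ξ
      = ∫ _, charFun (sphereMeasure E) ξ ∂sphereMeasure K := by
        rw [charFun_apply, integral_smul_measure, integral_const, charFun_apply, Measure.real]
    _ = ∫ v : K, charFun (sphereMeasure E) (⟪ξ, u⟫_ℝ • u + r • (v : E)) ∂sphereMeasure K := by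
        refine integral_congr_ae (ae_norm_eq_one_sphereMeasure.mono fun v hv => ?_)
        refine charFun_sphereMeasure_eq_of_norm_eq ?_
        rw [← pow_left_inj₀ (norm_nonneg _) (norm_nonneg _) two_ne_zero, ← Submodule.coe_smul,
          norm_smul_add_sq hu, norm_smul, hv, mul_one, norm_norm,
          norm_orthogonalProjectionOnto_sq hu, add_sub_cancel]
    _ = ∫ x, ∫ v : K, Complex.exp (⟪x, ⟪ξ, u⟫_ℝ • u + r • (v : E)⟫_ℝ * Complex.I)
          ∂sphereMeasure K ∂sphereMeasure E := by
        simp_rw [charFun_apply]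
        exact (integral_integral_swap (hint _ (by fun_prop))).symm
    _ = ∫ x, ∫ v, Complex.exp (⟪latitude u ⟪x, u⟫_ℝ v, ξ⟫_ℝ * Complex.I)
          ∂sphereMeasure K ∂sphereMeasure E := by
        refine integral_congr_ae (ae_norm_eq_one_sphereMeasure.mono fun x hx => ?_)
        have hcomm (v : K) : ⟪latitude u ⟪x, u⟫_ℝ v, ξ⟫_ℝ =
            ⟪ξ, ⟪x, u⟫_ℝ • u + √(1 - ⟪x, u⟫_ℝ ^ 2) • (v : E)⟫_ℝ := real_inner_comm _ _
        simp_rw [hcomm]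
        rw [integral_exp_inner_smul_add, integral_exp_inner_smul_add, mul_comm ⟪ξ, u⟫_ℝ]
        congr 1
        refine charFun_sphereMeasure_eq_of_norm_eq ?_
        rw [norm_smul, norm_smul, norm_norm, Real.norm_of_nonneg (Real.sqrt_nonneg _),
          norm_orthogonalProjectionOnto_of_norm_eq_one hu hx, mul_comm]
    _ = charFun (((sphereMeasure E).prod (sphereMeasure K)).map
          fun p => latitude u ⟪p.1, u⟫_ℝ p.2) ξ := by
        rw [charFun_apply, integral_map (Continuous.aemeasurable (by fun_prop)) (by fun_prop),
          integral_prod _ (hint _ (by fun_prop))]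

end Disintegration

section Slices

open Module (finrank)

variable {E : Type*} [NormedAddCommGroup E] [InnerProductSpace ℝ E] {u : E} {t : ℝ}

theorem isMoebiusOn_latitude (ht : t ^ 2 < 1) (s : Set (ℝ ∙ u)ᗮ) :
    IsMoebiusOn (latitude u t) (fun _ => √(1 - t ^ 2)) s where
  pos _ _ := Real.sqrt_pos.2 (sub_pos.2 ht)
  dist_sq v _ w _ := by
    simp only [latitude, dist_add_left, dist_smul₀, Subtype.dist_eq v w,
      Real.norm_of_nonneg (Real.sqrt_nonneg _)]
    ring

theorem norm_latitude (hu : ‖u‖ = 1) (ht : t ^ 2 ≤ 1) {v : (ℝ ∙ u)ᗮ} (hv : ‖v‖ = 1) :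
    ‖latitude u t v‖ = 1 := by
  rw [← pow_eq_one_iff_of_nonneg (norm_nonneg _) two_ne_zero, latitude, ← Submodule.coe_smul,
    norm_smul_add_sq hu, norm_smul, hv, mul_one, Real.norm_eq_abs, sq_abs,
    Real.sq_sqrt (sub_nonneg.2 ht)]
  ring

theorem image_latitude_sphere (hu : ‖u‖ = 1) (ht : t ^ 2 < 1) :
    latitude u t '' sphere 0 1 = sphere 0 1 ∩ {z | ⟪z, u⟫_ℝ = t} := by
  ext z
  simp only [Set.mem_image, Set.mem_inter_iff, mem_sphere_zero_iff_norm, Set.mem_ofPred_eq]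
  constructor
  · rintro ⟨v, hv, rfl⟩
    exact ⟨norm_latitude hu ht.le hv, inner_latitude hu t v⟩
  · rintro ⟨hz, rfl⟩
    have hpos : √(1 - ⟪z, u⟫_ℝ ^ 2) ≠ 0 := (Real.sqrt_pos.2 (sub_pos.2 ht)).ne'
    refine ⟨(√(1 - ⟪z, u⟫_ℝ ^ 2))⁻¹ • (ℝ ∙ u)ᗮ.orthogonalProjectionOnto z, ?_, ?_⟩
    · rw [norm_smul, norm_orthogonalProjectionOnto_of_norm_eq_one hu hz, norm_inv,
        Real.norm_of_nonneg (Real.sqrt_nonneg _), inv_mul_cancel₀ hpos]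
    · rw [latitude, ← Submodule.coe_smul, smul_inv_smul₀ hpos,
        inner_smul_add_orthogonalProjectionOnto hu]

variable [MeasurableSpace E] [BorelSpace E]

theorem ae_inner_sq_lt_one (hE : 2 ≤ finrank ℝ E) (hu : ‖u‖ = 1) :
    ∀ᵐ x ∂sphereMeasure E, ⟪x, u⟫_ℝ ^ 2 < 1 := by
  have hd : (2 : ℝ) ≤ finrank ℝ E := by exact_mod_cast hE
  have : NullSingletonClass (μH[finrank ℝ E - 1] : Measure E) :=
    Measure.nullSingletonClass_hausdorff E (by linarith)
  filter_upwards [ae_norm_eq_one_sphereMeasure, ae_restrict_of_ae (Measure.ae_ne _ u),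
    ae_restrict_of_ae (Measure.ae_ne _ (-u))] with x hx hxu hxu'
  have hlt := (inner_lt_one_iff_real_of_norm_eq_one hx hu).2 hxu
  have hgt := (inner_lt_one_iff_real_of_norm_eq_one hx (by rwa [norm_neg])).2 hxu'
  rw [inner_neg_right] at hgt
  nlinarith

variable [FiniteDimensional ℝ E]

theorem setIntegral_slice {F : Type*} [NormedAddCommGroup F] [NormedSpace ℝ F]
    (hE : 2 ≤ finrank ℝ E) (hu : ‖u‖ = 1) (ht : t ^ 2 < 1) (g : E → F) :
    ∫ z in sphere 0 1 ∩ {z | ⟪z, u⟫_ℝ = t}, g z ∂μH[finrank ℝ E - 2] =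
      √(1 - t ^ 2) ^ ((finrank ℝ E : ℝ) - 2) •
        ∫ v, g (latitude u t v) ∂sphereMeasure (ℝ ∙ u)ᗮ := by
  have hd : (0 : ℝ) ≤ finrank ℝ E - 2 := sub_nonneg.2 (by exact_mod_cast hE)
  rw [← image_latitude_sphere hu ht, (isMoebiusOn_latitude ht _).setIntegral_image hd
    (Continuous.measurable (by fun_prop)) measurable_const isClosed_sphere.measurableSet,
    integral_smul, sphereMeasure, finrank_orthogonal_span_singleton_of_norm_eq_one hu, sub_sub,
    one_add_one_eq_two]

theorem smul_integral_sphereMeasure {F : Type*} [NormedAddCommGroup F] [NormedSpace ℝ F]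
    (hu : ‖u‖ = 1) {g : E → F} (hg : Integrable g (sphereMeasure E)) :
    (sphereMeasure (ℝ ∙ u)ᗮ).real Set.univ • ∫ z, g z ∂sphereMeasure E =
      ∫ x, ∫ v, g (latitude u ⟪x, u⟫_ℝ v) ∂sphereMeasure (ℝ ∙ u)ᗮ ∂sphereMeasure E := by
  have hmeas : Measurable fun p : E × (ℝ ∙ u)ᗮ => latitude u ⟪p.1, u⟫_ℝ p.2 :=
    Continuous.measurable (by fun_prop)
  have hg' := hg.smul_measure (measure_ne_top (sphereMeasure (ℝ ∙ u)ᗮ) Set.univ)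
  rw [smul_sphereMeasure_eq_map_latitude hu] at hg'
  rw [Measure.real, ← integral_smul_measure, smul_sphereMeasure_eq_map_latitude hu,
    integral_map hmeas.aemeasurable hg'.aestronglyMeasurable,
    integral_prod (fun p : E × (ℝ ∙ u)ᗮ => g (latitude u ⟪p.1, u⟫_ℝ p.2))
      (hg'.comp_measurable hmeas)]

theorem integral_smul_comp_inner_eq_zero
    (hE : 2 ≤ finrank ℝ E) (hu : ‖u‖ = 1) {g : E → ℝ} {h : ℝ → ℂ}
    (hgh : Integrable (fun z => g z • h ⟪z, u⟫_ℝ) (sphereMeasure E))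
    (hg : ∀ t : ℝ, t ^ 2 < 1 →
      ∫ z in sphere 0 1 ∩ {z | ⟪z, u⟫_ℝ = t}, g z ∂μH[finrank ℝ E - 2] = 0) :
    ∫ z, g z • h ⟪z, u⟫_ℝ ∂sphereMeasure E = 0 := by
  have hK : 0 < (sphereMeasure (ℝ ∙ u)ᗮ).real Set.univ := by
    have := nontrivial_orthogonal_span_singleton hE hu
    refine ENNReal.toReal_pos ?_ (measure_ne_top _ _)
    rw [sphereMeasure, Measure.restrict_apply_univ]
    exact hausdorffMeasure_sphere_pos.ne'
  refine (smul_eq_zero_iff_right hK.ne').1 ?_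
  rw [smul_integral_sphereMeasure hu hgh]
  refine integral_eq_zero_of_ae ((ae_inner_sq_lt_one hE hu).mono fun x hx => ?_)
  have hslice := hg _ hx
  rw [setIntegral_slice hE hu hx] at hslice
  simp only [inner_latitude hu, Pi.zero_apply]
  rw [integral_smul_const, (smul_eq_zero_iff_right (by positivity)).1 hslice, zero_smul]

end Slices

section ProjectedDensity

variable {Ω : Type*} [MeasurableSpace Ω] {μ : Measure Ω} {V : Type*} [MeasurableSpace V]
  {G : Ω → ℝ} {P : Ω → V}

theorem integral_map_withDensity_ofReal_sub [TopologicalSpace V] [BorelSpace V] {F : Type*}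
    [NormedAddCommGroup F] [NormedSpace ℝ F] (hG : AEMeasurable G μ) (hP : Measurable P)
    {h : V → F} (hh : StronglyMeasurable h) (hGh : Integrable (fun z => G z • h (P z)) μ) :
    ∫ y, h y ∂(μ.withDensity fun z => .ofReal (G z)).map P -
        ∫ y, h y ∂(μ.withDensity fun z => .ofReal (-G z)).map P = ∫ z, G z • h (P z) ∂μ := by
  have hint (g : Ω → ℝ) (hg : AEMeasurable g μ) (hle : ∀ z, max (g z) 0 ≤ |G z|) :
      Integrable (fun z => max (g z) 0 • h (P z)) μ := by
    refine hGh.mono (((hg.max aemeasurable_const).aestronglyMeasurable).smul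
      (hh.comp_measurable hP).aestronglyMeasurable) (.of_forall fun z => ?_)
    rw [norm_smul, norm_smul, Real.norm_of_nonneg (le_max_right _ _), Real.norm_eq_abs]
    exact mul_le_mul_of_nonneg_right (hle z) (norm_nonneg _)
  have hmap (g : Ω → ℝ) (hg : AEMeasurable g μ) :
      ∫ y, h y ∂(μ.withDensity fun z => .ofReal (g z)).map P =
        ∫ z, max (g z) 0 • h (P z) ∂μ := by
    rw [integral_map hP.aemeasurable hh.aestronglyMeasurable,
      integral_withDensity_eq_integral_toReal_smul₀ hg.ennreal_ofReal
        (.of_forall fun z => ENNReal.ofReal_lt_top)]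
    simp only [ENNReal.toReal_ofReal']
  rw [hmap _ hG, hmap (fun z => -G z) hG.neg, ← integral_sub
    (hint _ hG fun z => max_le (le_abs_self _) (abs_nonneg _))
    (hint (fun z => -G z) hG.neg fun z => max_le (neg_le_abs _) (abs_nonneg _))]
  simp only [← sub_smul, max_zero_sub_max_neg_zero_eq_self]

variable [NormedAddCommGroup V] [InnerProductSpace ℝ V] [CompleteSpace V]
  [SecondCountableTopology V] [BorelSpace V]

/- The positive and negative parts of `G • μ` have push-forwards under `P` with the same
characteristic function. -/
theorem integral_mul_comp_eq_zero_of_integral_exp (hG : Integrable G μ) (hP : Measurable P)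
    (hexp : ∀ ξ, ∫ z, G z • Complex.exp (⟪P z, ξ⟫_ℝ * Complex.I) ∂μ = 0) {h : V → ℝ}
    (hh : StronglyMeasurable h) (hGh : Integrable (fun z => G z • h (P z)) μ) :
    ∫ z, G z • h (P z) ∂μ = 0 := by
  have hfin (g : Ω → ℝ) (hg : Integrable g μ) :
      IsFiniteMeasure ((μ.withDensity fun z => .ofReal (g z)).map P) := by
    have := isFiniteMeasure_withDensity_ofReal hg.2
    infer_instance
  have := hfin _ hG
  have := hfin _ hG.neg
  have heq : (μ.withDensity fun z => .ofReal (G z)).map P =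
      (μ.withDensity fun z => .ofReal (-G z)).map P := by
    refine Measure.ext_of_charFun (funext fun ξ => sub_eq_zero.1 ?_)
    have hmeas : StronglyMeasurable fun y : V => Complex.exp (⟪y, ξ⟫_ℝ * Complex.I) :=
      Continuous.stronglyMeasurable (by fun_prop)
    rw [charFun_apply, charFun_apply, integral_map_withDensity_ofReal_sub hG.aemeasurable hP hmeas,
      hexp]
    exact hG.smul_bdd 1 (hmeas.comp_measurable hP).aestronglyMeasurable
      (.of_forall fun z => (Complex.norm_exp_ofReal_mul_I _).le)
  rw [← integral_map_withDensity_ofReal_sub hG.aemeasurable hP hh hGh, heq, sub_self]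

end ProjectedDensity

section OddSlices

open Module (finrank)

variable {E : Type*} [NormedAddCommGroup E] [InnerProductSpace ℝ E]
  {e : E} {G F : E → ℝ}

theorem orthogonalProjectionOnto_reflection (K : Submodule ℝ E) [K.HasOrthogonalProjection]
    (z : E) :
    K.orthogonalProjectionOnto (K.reflection z) = K.orthogonalProjectionOnto z := by
  rw [Submodule.reflection_apply, map_sub, map_nsmul,
    ← Submodule.coe_orthogonalProjectionOnto_apply,
    Submodule.orthogonalProjectionOnto_mem_subspace_eq_self, two_nsmul, add_sub_cancel_right]

theorem exists_continuous_comp_orthogonalProjectionOnto_eq (he : ‖e‖ = 1)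
    (hF : ContinuousOn F (sphere 0 1))
    (heven : ∀ z, ‖z‖ = 1 → F ((ℝ ∙ e)ᗮ.reflection z) = F z) :
    ∃ h : (ℝ ∙ e)ᗮ → ℝ, Continuous h ∧
      ∀ z, ‖z‖ = 1 → h ((ℝ ∙ e)ᗮ.orthogonalProjectionOnto z) = F z := by
  obtain ⟨F', hF'⟩ := ContinuousMap.exists_restrict_eq isClosed_sphere
    ⟨(sphere (0 : E) 1).domRestrict F, hF.domRestrict⟩
  have hFF' (z : E) (hz : ‖z‖ = 1) : F' z = F z :=
    DFunLike.congr_fun hF' ⟨z, mem_sphere_zero_iff_norm.2 hz⟩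
  refine ⟨fun v => F' (√(1 - ‖v‖ ^ 2) • e + v), by fun_prop, fun z hz => ?_⟩
  have hz' := inner_smul_add_orthogonalProjectionOnto he z
  dsimp only
  rw [norm_orthogonalProjectionOnto_sq he, hz, one_pow, sub_sub_cancel, Real.sqrt_sq_eq_abs]
  rcases abs_choice ⟪z, e⟫_ℝ with habs | habs
  · rw [habs, hz', hFF' z hz]
  · have hreflection : (ℝ ∙ e)ᗮ.reflection z =
        -⟪z, e⟫_ℝ • e + (ℝ ∙ e)ᗮ.orthogonalProjectionOnto z := by
      rw [Submodule.reflection_apply, ← Submodule.coe_orthogonalProjectionOnto_apply]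
      nth_rw 2 [← hz']
      module
    rw [habs, ← hreflection, hFF' _ (by rwa [LinearIsometryEquiv.norm_map]), heven z hz]

variable [FiniteDimensional ℝ E] [MeasurableSpace E] [BorelSpace E]

theorem integrable_sphereMeasure_of_continuousOn (hG : ContinuousOn G (sphere 0 1)) :
    Integrable G (sphereMeasure E) := by
  have hint : IntegrableOn G (sphere 0 1) (sphereMeasure E) :=
    hG.integrableOn_compact (isCompact_sphere 0 1)
  rwa [IntegrableOn, sphereMeasure, Measure.restrict_restrict isClosed_sphere.measurableSet,
    Set.inter_self] at hint

theorem eq_zero_of_ae_sphereMeasure (hG : ContinuousOn G (sphere 0 1))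
    (hae : ∀ᵐ z ∂sphereMeasure E, G z = 0) {z : E} (hz : ‖z‖ = 1) : G z = 0 := by
  by_contra hne
  obtain ⟨U, hU, hGU⟩ := continuousOn_iff'.1 hG {0}ᶜ isOpen_compl_singleton
  have hzU : z ∈ U ∩ sphere 0 1 := hGU ▸ ⟨hne, mem_sphere_zero_iff_norm.2 hz⟩
  refine (sphereMeasure_pos_of_isOpen hU hz hzU.1).ne' (measure_mono_null_ae ?_ hae)
  filter_upwards [ae_norm_eq_one_sphereMeasure] with x hx hxU
  exact (hGU.superset ⟨hxU, mem_sphere_zero_iff_norm.2 hx⟩).1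

/-- All integrals of `G` over the sections of the unit sphere by hyperplanes parallel to `e` that
meet the open unit ball vanish. -/
def HasZeroSlicesAlong (e : E) (G : E → ℝ) : Prop :=
  ∀ u : E, ‖u‖ = 1 → ⟪u, e⟫_ℝ = 0 → ∀ t : ℝ, t ^ 2 < 1 →
    ∫ z in sphere 0 1 ∩ {z | ⟪z, u⟫_ℝ = t}, G z ∂μH[finrank ℝ E - 2] = 0

namespace HasZeroSlicesAlong

theorem integral_smul_exp_eq_zero (h : HasZeroSlicesAlong e G) (hE : 2 ≤ finrank ℝ E)
    (he : ‖e‖ = 1) (hG : Integrable G (sphereMeasure E)) (ξ : (ℝ ∙ e)ᗮ) :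
    ∫ z, G z • Complex.exp (⟪(ℝ ∙ e)ᗮ.orthogonalProjectionOnto z, ξ⟫_ℝ * Complex.I)
      ∂sphereMeasure E = 0 := by
  have := nontrivial_orthogonal_span_singleton hE he
  obtain ⟨u, hu, hξ⟩ : ∃ u : (ℝ ∙ e)ᗮ, ‖u‖ = 1 ∧ ξ = ‖ξ‖ • u := by
    rcases eq_or_ne ξ 0 with rfl | hξ
    · obtain ⟨u, hu⟩ := exists_norm_eq (ℝ ∙ e)ᗮ zero_le_one
      exact ⟨u, hu, by simp⟩
    · exact ⟨‖ξ‖⁻¹ • ξ, norm_smul_inv_norm hξ, (smul_inv_smul₀ (norm_ne_zero_iff.2 hξ) ξ).symm⟩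
  have hinner (z : E) :
      ⟪(ℝ ∙ e)ᗮ.orthogonalProjectionOnto z, ξ⟫_ℝ = ‖ξ‖ * ⟪z, (u : E)⟫_ℝ := by
    rw [Submodule.inner_orthogonalProjectionOnto_eq_of_mem_right, hξ, Submodule.coe_smul,
      real_inner_smul_right, ← hξ]
  simp_rw [hinner]
  refine integral_smul_comp_inner_eq_zero
    (h := fun t => Complex.exp ((‖ξ‖ * t : ℝ) * Complex.I)) hE hu ?_
    (h u hu (Submodule.mem_orthogonal_singleton_iff_inner_left.1 u.2))
  exact hG.smul_bdd 1 (Continuous.aestronglyMeasurable (by fun_prop))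
    (.of_forall fun z => (Complex.norm_exp_ofReal_mul_I _).le)

theorem integral_smul_comp_orthogonalProjectionOnto_eq_zero (h : HasZeroSlicesAlong e G)
    (hE : 2 ≤ finrank ℝ E) (he : ‖e‖ = 1) (hG : ContinuousOn G (sphere 0 1)) {H : (ℝ ∙ e)ᗮ → ℝ}
    (hH : Continuous H) :
    ∫ z, G z • H ((ℝ ∙ e)ᗮ.orthogonalProjectionOnto z) ∂sphereMeasure E = 0 :=
  have hGi := integrable_sphereMeasure_of_continuousOn hG
  integral_mul_comp_eq_zero_of_integral_exp hGi (ContinuousLinearMap.continuous _).measurable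
    (h.integral_smul_exp_eq_zero hE he hGi) hH.stronglyMeasurable
    (integrable_sphereMeasure_of_continuousOn (hG.smul (by fun_prop)))

/- The symmetrization `F = G + G ∘ R` is a function of the projection to `eᗮ`, so it is orthogonal
to `G` and, by invariance under `R`, to itself. -/
theorem reflection_eq_neg (h : HasZeroSlicesAlong e G) (hE : 2 ≤ finrank ℝ E) (he : ‖e‖ = 1)
    (hG : ContinuousOn G (sphere 0 1)) {z : E} (hz : ‖z‖ = 1) :
    G ((ℝ ∙ e)ᗮ.reflection z) = -G z := by
  set R := (ℝ ∙ e)ᗮ.reflection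
  set P := (ℝ ∙ e)ᗮ.orthogonalProjectionOnto
  set F : E → ℝ := fun z => G z + G (R z)
  have hGR : ContinuousOn (fun z => G (R z)) (sphere 0 1) :=
    hG.comp R.continuous.continuousOn fun z hz => by
      rwa [mem_sphere_zero_iff_norm, R.norm_map, ← mem_sphere_zero_iff_norm]
  have hF : ContinuousOn F (sphere 0 1) := hG.add hGR
  obtain ⟨H, hH, hHF⟩ := exists_continuous_comp_orthogonalProjectionOnto_eq he hF fun z _ => by
    simp only [F, R, Submodule.reflection_reflection, add_comm]
  have hHP : ContinuousOn (fun z => H (P z)) (sphere 0 1) := by fun_prop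
  have hiGH : Integrable (fun z => G z • H (P z)) (sphereMeasure E) :=
    integrable_sphereMeasure_of_continuousOn (hG.smul hHP)
  have hiGRH : Integrable (fun z => G (R z) • H (P z)) (sphereMeasure E) :=
    integrable_sphereMeasure_of_continuousOn (hGR.smul hHP)
  have hGH : ∫ z, G z • H (P z) ∂sphereMeasure E = 0 :=
    h.integral_smul_comp_orthogonalProjectionOnto_eq_zero hE he hG hH
  have hGRH : ∫ z, G (R z) • H (P z) ∂sphereMeasure E = 0 := by
    rw [← hGH, ← (measurePreserving_sphereMeasure R).integral_comp
      R.toHomeomorph.measurableEmbedding]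
    simp only [P, R, orthogonalProjectionOnto_reflection, Submodule.reflection_reflection]
  have hFF : ∫ z, F z ^ 2 ∂sphereMeasure E = 0 := calc
    _ = ∫ z, (G z • H (P z) + G (R z) • H (P z)) ∂sphereMeasure E := by
      refine integral_congr_ae (ae_norm_eq_one_sphereMeasure.mono fun z hz => ?_)
      dsimp only
      rw [hHF z hz, ← add_smul, smul_eq_mul, ← sq]
    _ = 0 := by
      rw [integral_add hiGH hiGRH, hGH, hGRH, add_zero]
  rw [integral_eq_zero_iff_of_nonneg (fun z => sq_nonneg _)
    (integrable_sphereMeasure_of_continuousOn (hF.pow 2))] at hFF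
  refine eq_neg_of_add_eq_zero_right (eq_zero_of_ae_sphereMeasure hF ?_ hz)
  exact hFF.mono fun z hz => sq_eq_zero_iff.1 hz

end HasZeroSlicesAlong

end OddSlices

section SphereInversion

open EuclideanGeometry (inversion inversion_inversion dist_inversion_inversion)

variable {E : Type*} [NormedAddCommGroup E] {a x : E} {d : ℝ}

/-- The conformal factor at `x` of the inversion centred at `a` that preserves the unit sphere. -/
noncomputable def conformalFactor (a x : E) : ℝ := (‖a‖ ^ 2 - 1) / ‖x - a‖ ^ 2

theorem ne_of_norm_eq_one (ha : 1 < ‖a‖) (hx : ‖x‖ = 1) : x ≠ a := by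
  rintro rfl
  exact ha.ne' hx

theorem conformalFactor_pos (ha : 1 < ‖a‖) (hx : x ≠ a) : 0 < conformalFactor a x :=
  div_pos (sub_pos.2 (one_lt_pow₀ ha two_ne_zero)) (pow_pos (norm_sub_pos_iff.2 hx) 2)

theorem continuousOn_conformalFactor (ha : 1 < ‖a‖) :
    ContinuousOn (conformalFactor a) (sphere 0 1) := by
  refine continuousOn_const.div (by fun_prop) fun x hx => ?_
  exact pow_ne_zero 2 (norm_sub_pos_iff.2
    (ne_of_norm_eq_one ha (mem_sphere_zero_iff_norm.1 hx))).ne'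

variable [InnerProductSpace ℝ E]

/-- The inversion centred at `a`, `1 < ‖a‖`, that preserves the unit sphere; it swaps the two
intersection points of the sphere with a line through `a`. -/
noncomputable def sphereInversion (a x : E) : E := inversion a √(‖a‖ ^ 2 - 1) x

/-- The operator `f ↦ κ_a ^ d * (f ∘ I_a)` on functions on the unit sphere, where `I_a` is
`sphereInversion a` and `κ_a` is its conformal factor; for `d = k - 1` it is the operator `W_a`. -/
noncomputable def inversionOp (d : ℝ) (a : E) (f : E → ℝ) (x : E) : ℝ :=
  conformalFactor a x ^ d * f (sphereInversion a x)

theorem sphereInversion_eq (ha : 1 ≤ ‖a‖) (x : E) :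
    sphereInversion a x = conformalFactor a x • (x - a) + a := by
  rw [sphereInversion, inversion, div_pow, Real.sq_sqrt (sub_nonneg.2 (one_le_pow₀ ha)),
    dist_eq_norm, conformalFactor, vsub_eq_sub, vadd_eq_add]

theorem sphereInversion_sphereInversion (ha : 1 < ‖a‖) (x : E) :
    sphereInversion a (sphereInversion a x) = x :=
  inversion_inversion a (Real.sqrt_pos.2 (sub_pos.2 (one_lt_pow₀ ha two_ne_zero))).ne' x

theorem isMoebiusOn_sphereInversion (ha : 1 < ‖a‖) :
    IsMoebiusOn (sphereInversion a) (conformalFactor a) {a}ᶜ where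
  pos _ hx := conformalFactor_pos ha hx
  dist_sq x hx y hy := by
    rw [sphereInversion, sphereInversion, dist_inversion_inversion hx hy,
      Real.sq_sqrt (sub_nonneg.2 (one_le_pow₀ ha.le)), conformalFactor, conformalFactor,
      dist_eq_norm x a, dist_eq_norm y a]
    ring

theorem norm_sphereInversion (ha : 1 < ‖a‖) (hx : ‖x‖ = 1) : ‖sphereInversion a x‖ = 1 := by
  have hxa : ‖x - a‖ ≠ 0 := (norm_sub_pos_iff.2 (ne_of_norm_eq_one ha hx)).ne'
  have hinner : ⟪x - a, a⟫_ℝ = (1 - ‖a‖ ^ 2 - ‖x - a‖ ^ 2) / 2 := by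
    rw [norm_sub_sq_real, inner_sub_left, real_inner_self_eq_norm_sq, hx]
    ring
  rw [← pow_eq_one_iff_of_nonneg (norm_nonneg _) two_ne_zero, sphereInversion_eq ha.le,
    norm_add_sq_real, real_inner_smul_left, hinner, norm_smul, mul_pow, Real.norm_eq_abs, sq_abs,
    conformalFactor]
  field_simp
  ring

theorem mapsTo_sphereInversion (ha : 1 < ‖a‖) :
    Set.MapsTo (sphereInversion a) (sphere 0 1) (sphere 0 1) := fun x hx => by
  rw [mem_sphere_zero_iff_norm] at hx ⊢
  exact norm_sphereInversion ha hx

theorem image_sphereInversion_sphere_inter (ha : 1 < ‖a‖) {τ : AffineSubspace ℝ E} (haτ : a ∈ τ) :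
    sphereInversion a '' (sphere 0 1 ∩ τ) = sphere 0 1 ∩ τ := by
  have hmaps : Set.MapsTo (sphereInversion a) (sphere 0 1 ∩ τ) (sphere 0 1 ∩ τ) := by
    refine fun x hx => ⟨mapsTo_sphereInversion ha hx.1, ?_⟩
    have := AffineMap.lineMap_mem (conformalFactor a x) haτ hx.2
    rwa [AffineMap.lineMap_apply, vsub_eq_sub, vadd_eq_add, ← sphereInversion_eq ha.le] at this
  exact hmaps.image_subset.antisymm fun x hx =>
    ⟨_, hmaps hx, sphereInversion_sphereInversion ha x⟩

theorem continuousOn_inversionOp (ha : 1 < ‖a‖) (hd : 0 ≤ d) {f : E → ℝ}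
    (hf : ContinuousOn f (sphere 0 1)) : ContinuousOn (inversionOp d a f) (sphere 0 1) := by
  refine ((continuousOn_conformalFactor ha).rpow_const fun _ _ => .inr hd).mul
    (hf.comp ?_ (mapsTo_sphereInversion ha))
  exact continuousOn_const.inversion continuousOn_const continuousOn_id fun x hx =>
    ne_of_norm_eq_one ha (mem_sphere_zero_iff_norm.1 hx)

theorem setIntegral_image_sphereInversion [FiniteDimensional ℝ E] [MeasurableSpace E]
    [BorelSpace E] (ha : 1 < ‖a‖) (hd : 0 ≤ d) {s : Set E} (hs : MeasurableSet s) (hsa : a ∉ s)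
    (f : E → ℝ) :
    ∫ x in sphereInversion a '' s, f x ∂μH[d] = ∫ x in s, inversionOp d a f x ∂μH[d] := by
  refine ((isMoebiusOn_sphereInversion ha).mono fun x hx => ?_).setIntegral_image hd
    ?_ ?_ hs f
  · exact ne_of_mem_of_not_mem hx hsa
  · simp_rw [funext (sphereInversion_eq ha.le)]
    unfold conformalFactor
    fun_prop
  · unfold conformalFactor
    fun_prop

end SphereInversion

section Conjugation

variable {E : Type*} [NormedAddCommGroup E] [InnerProductSpace ℝ E] {a e u z : E} {s t : ℝ}

/- `s` solves `s ^ 2 + 1 = 2 * ‖a‖ * s`. -/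
theorem exists_eq_smul_of_one_lt_norm (ha : 1 < ‖a‖) :
    ∃ (e : E) (s : ℝ), ‖e‖ = 1 ∧ 1 < s ∧ a = ((s ^ 2 + 1) / (2 * s)) • e := by
  have ha0 : a ≠ 0 := norm_pos_iff.1 (one_pos.trans ha)
  have hs : 1 < ‖a‖ + √(‖a‖ ^ 2 - 1) := lt_add_of_lt_of_nonneg ha (Real.sqrt_nonneg _)
  have hsq : √(‖a‖ ^ 2 - 1) ^ 2 = ‖a‖ ^ 2 - 1 := Real.sq_sqrt (sub_nonneg.2 (one_le_pow₀ ha.le))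
  refine ⟨‖a‖⁻¹ • a, ‖a‖ + √(‖a‖ ^ 2 - 1), norm_smul_inv_norm ha0, hs, ?_⟩
  have hcoeff : ((‖a‖ + √(‖a‖ ^ 2 - 1)) ^ 2 + 1) / (2 * (‖a‖ + √(‖a‖ ^ 2 - 1))) = ‖a‖ := by
    rw [div_eq_iff (by positivity)]
    linear_combination hsq
  rw [hcoeff, smul_inv_smul₀ (norm_ne_zero_iff.2 ha0)]

theorem reflection_orthogonal_span_singleton_apply (he : ‖e‖ = 1) (z : E) :
    (ℝ ∙ e)ᗮ.reflection z = z - (2 * ⟪z, e⟫_ℝ) • e := by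
  rw [Submodule.reflection_orthogonal_apply, Submodule.reflection_apply,
    Submodule.starProjection_unit_singleton ℝ he, real_inner_comm]
  module

theorem norm_smul_of_norm_eq_one (he : ‖e‖ = 1) (hs : 0 ≤ s) : ‖s • e‖ = s := by
  rw [norm_smul, he, mul_one, Real.norm_of_nonneg hs]

theorem norm_sub_smul_sq (he : ‖e‖ = 1) (hz : ‖z‖ = 1) :
    ‖z - s • e‖ ^ 2 = s ^ 2 + 1 - 2 * s * ⟪z, e⟫_ℝ := by
  rw [norm_sub_sq_real, real_inner_smul_right, norm_smul, he, hz, Real.norm_eq_abs, mul_one, sq_abs]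
  ring

theorem norm_sub_smul_pos (he : ‖e‖ = 1) (hs : 1 < s) (hz : ‖z‖ = 1) : 0 < ‖z - s • e‖ := by
  refine norm_sub_pos_iff.2 (ne_of_norm_eq_one ?_ hz)
  rwa [norm_smul_of_norm_eq_one he (one_pos.trans hs).le]

theorem inner_eq_of_norm_eq_one (he : ‖e‖ = 1) (hs : s ≠ 0) (hz : ‖z‖ = 1) :
    ⟪z, e⟫_ℝ = (s ^ 2 + 1 - ‖z - s • e‖ ^ 2) / (2 * s) := by
  rw [norm_sub_smul_sq he hz]
  field_simp
  ring

theorem norm_reflection_sub_smul_sq (he : ‖e‖ = 1) (hz : ‖z‖ = 1) :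
    ‖(ℝ ∙ e)ᗮ.reflection z - s • e‖ ^ 2 = 2 * (s ^ 2 + 1) - ‖z - s • e‖ ^ 2 := by
  rw [norm_sub_smul_sq he hz, norm_sub_smul_sq he (by rwa [LinearIsometryEquiv.norm_map]),
    reflection_orthogonal_span_singleton_apply he, inner_sub_left, real_inner_smul_left,
    real_inner_self_eq_norm_sq, he]
  ring

theorem sphereInversion_smul_sub (he : ‖e‖ = 1) (hs : 1 < s) (z : E) :
    sphereInversion (s • e) z - ((s ^ 2 + 1) / (2 * s)) • e =
      conformalFactor (s • e) z • (z - s • e) + ((s ^ 2 - 1) / (2 * s)) • e := by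
  have hcoeff : (s ^ 2 - 1) / (2 * s) = s - (s ^ 2 + 1) / (2 * s) := by
    have := one_pos.trans hs
    field_simp
    ring
  rw [sphereInversion_eq (by rw [norm_smul_of_norm_eq_one he (by linarith)]; exact hs.le), hcoeff]
  module

theorem conformalFactor_sphereInversion_smul (he : ‖e‖ = 1) (hs : 1 < s) (hz : ‖z‖ = 1) :
    conformalFactor (((s ^ 2 + 1) / (2 * s)) • e) (sphereInversion (s • e) z) =
      conformalFactor (s • e) ((ℝ ∙ e)ᗮ.reflection z) / conformalFactor (s • e) z := by
  have hs0 : 0 < s := one_pos.trans hs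
  have hs1 : 0 < s ^ 2 - 1 := by nlinarith
  have hnorm : ‖s • e‖ = s := norm_smul_of_norm_eq_one he hs0.le
  have hD : 0 < ‖z - s • e‖ := norm_sub_smul_pos he hs hz
  have hdist : ‖sphereInversion (s • e) z - ((s ^ 2 + 1) / (2 * s)) • e‖ ^ 2 =
      (s ^ 2 - 1) ^ 2 / (4 * s ^ 2) *
        (‖(ℝ ∙ e)ᗮ.reflection z - s • e‖ ^ 2 / ‖z - s • e‖ ^ 2) := by
    rw [sphereInversion_smul_sub he hs, norm_add_sq_real, norm_reflection_sub_smul_sq he hz,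
      real_inner_smul_left, real_inner_smul_right, inner_sub_left, real_inner_smul_left,
      real_inner_self_eq_norm_sq, norm_smul, norm_smul, mul_pow, mul_pow, Real.norm_eq_abs,
      Real.norm_eq_abs, sq_abs, sq_abs, he, conformalFactor, hnorm]
    rw [inner_eq_of_norm_eq_one he hs0.ne' hz]
    field_simp
    ring
  rw [conformalFactor, hdist, conformalFactor, conformalFactor, hnorm,
    norm_smul_of_norm_eq_one he (by positivity)]
  field_simp
  ring

theorem sphereInversion_sphereInversion_smul (he : ‖e‖ = 1) (hs : 1 < s) (hz : ‖z‖ = 1) :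
    sphereInversion (((s ^ 2 + 1) / (2 * s)) • e) (sphereInversion (s • e) z) =
      sphereInversion (s • e) ((ℝ ∙ e)ᗮ.reflection z) := by
  have hs0 : 0 < s := one_pos.trans hs
  have : 0 < s ^ 2 - 1 := by nlinarith
  have hnorm : ‖s • e‖ = s := norm_smul_of_norm_eq_one he hs0.le
  have hcenter : 1 ≤ ‖((s ^ 2 + 1) / (2 * s)) • e‖ := by
    rw [norm_smul_of_norm_eq_one he (by positivity), le_div_iff₀ (by positivity)]
    linarith [sq_nonneg (s - 1)]
  have : 0 < ‖z - s • e‖ := norm_sub_smul_pos he hs hz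
  have : 0 < ‖(ℝ ∙ e)ᗮ.reflection z - s • e‖ :=
    norm_sub_smul_pos he hs (by rwa [LinearIsometryEquiv.norm_map])
  have hcoeff : conformalFactor (s • e) ((ℝ ∙ e)ᗮ.reflection z) / conformalFactor (s • e) z *
        ((s ^ 2 - 1) / (2 * s)) + (s ^ 2 + 1) / (2 * s) =
      s - conformalFactor (s • e) ((ℝ ∙ e)ᗮ.reflection z) * (2 * ⟪z, e⟫_ℝ) := by
    rw [inner_eq_of_norm_eq_one he hs0.ne' hz, conformalFactor, conformalFactor, hnorm]
    field_simp
    linear_combination (1 - s ^ 2) * norm_reflection_sub_smul_sq (s := s) he hz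
  rw [sphereInversion_eq hcenter, conformalFactor_sphereInversion_smul he hs hz,
    sphereInversion_smul_sub he hs, sphereInversion_eq (hnorm.symm ▸ hs.le)]
  have hfactor : conformalFactor (s • e) z ≠ 0 := (conformalFactor_pos (hnorm.symm ▸ hs)
    (ne_of_norm_eq_one (hnorm.symm ▸ hs) hz)).ne'
  have hreflection := reflection_orthogonal_span_singleton_apply he z
  generalize conformalFactor (s • e) ((ℝ ∙ e)ᗮ.reflection z) = κ' at hcoeff ⊢
  generalize conformalFactor (s • e) z = κ at hcoeff hfactor ⊢
  rw [hreflection, smul_add, smul_smul, div_mul_cancel₀ _ hfactor, smul_smul, add_assoc, ← add_smul,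
    hcoeff]
  module

theorem inversionOp_inversionOp_smul (he : ‖e‖ = 1) (hs : 1 < s) (hz : ‖z‖ = 1) (d : ℝ)
    (f : E → ℝ) :
    inversionOp d (s • e) (inversionOp d (((s ^ 2 + 1) / (2 * s)) • e) f) z =
      inversionOp d (s • e) f ((ℝ ∙ e)ᗮ.reflection z) := by
  have hcenter : 1 < ‖s • e‖ := by rwa [norm_smul_of_norm_eq_one he (one_pos.trans hs).le]
  have hpos : ∀ y : E, ‖y‖ = 1 → 0 < conformalFactor (s • e) y := fun y hy =>
    conformalFactor_pos hcenter (ne_of_norm_eq_one hcenter hy)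
  have hRz : ‖(ℝ ∙ e)ᗮ.reflection z‖ = 1 := by rwa [LinearIsometryEquiv.norm_map]
  rw [inversionOp, inversionOp, inversionOp, sphereInversion_sphereInversion_smul he hs hz,
    conformalFactor_sphereInversion_smul he hs hz, Real.div_rpow (hpos _ hRz).le (hpos _ hz).le,
    ← mul_assoc, mul_div_cancel₀ _ (Real.rpow_pos_of_pos (hpos _ hz) d).ne']

theorem inner_sphereInversion_smul_sub (he : ‖e‖ = 1) (hs : 1 < s) (hz : ‖z‖ = 1)
    (hue : ⟪u, e⟫_ℝ = 0) (t : ℝ) :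
    ⟪sphereInversion (s • e) z - ((s ^ 2 + 1) / (2 * s)) • e,
        (s ^ 2 - 1) • u + (2 * s * t) • e⟫_ℝ =
      (s ^ 2 - 1) * conformalFactor (s • e) z * (⟪z, u⟫_ℝ - t) := by
  have hs0 : 0 < s := one_pos.trans hs
  have hD : 0 < ‖z - s • e‖ := norm_sub_smul_pos he hs hz
  rw [sphereInversion_smul_sub he hs]
  simp only [inner_add_left, inner_add_right, inner_sub_left, real_inner_smul_left,
    real_inner_smul_right, real_inner_self_eq_norm_sq, he, real_inner_comm u e, hue,
    inner_eq_of_norm_eq_one he hs0.ne' hz, conformalFactor, norm_smul_of_norm_eq_one he hs0.le]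
  field_simp
  ring

theorem image_sphereInversion_smul_slice (he : ‖e‖ = 1) (hs : 1 < s) (hue : ⟪u, e⟫_ℝ = 0)
    (t : ℝ) :
    sphereInversion (s • e) '' (sphere 0 1 ∩ {z | ⟪z, u⟫_ℝ = t}) = sphere 0 1 ∩
      {x | ⟪x - ((s ^ 2 + 1) / (2 * s)) • e, (s ^ 2 - 1) • u + (2 * s * t) • e⟫_ℝ = 0} := by
  have hcenter : 1 < ‖s • e‖ := by rwa [norm_smul_of_norm_eq_one he (one_pos.trans hs).le]
  have hmem : ∀ z ∈ sphere (0 : E) 1, ⟪sphereInversion (s • e) z - ((s ^ 2 + 1) / (2 * s)) • e,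
      (s ^ 2 - 1) • u + (2 * s * t) • e⟫_ℝ = 0 ↔ ⟪z, u⟫_ℝ = t := fun z hz => by
    rw [mem_sphere_zero_iff_norm] at hz
    rw [inner_sphereInversion_smul_sub he hs hz hue, mul_eq_zero, sub_eq_zero, or_iff_right]
    exact mul_ne_zero (by nlinarith)
      (conformalFactor_pos hcenter (ne_of_norm_eq_one hcenter hz)).ne'
  ext x
  constructor
  · rintro ⟨z, ⟨hz, hzu⟩, rfl⟩
    exact ⟨mapsTo_sphereInversion hcenter hz, (hmem z hz).2 hzu⟩
  · rintro ⟨hx, hxw⟩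
    have hz := mapsTo_sphereInversion hcenter hx
    refine ⟨sphereInversion (s • e) x, ⟨hz, (hmem _ hz).1 ?_⟩,
      sphereInversion_sphereInversion hcenter x⟩
    rwa [sphereInversion_sphereInversion hcenter]

theorem exists_norm_lt_one_inner_sub_eq_zero {w : E} (h : ⟪a, w⟫_ℝ ^ 2 < ‖w‖ ^ 2) :
    ∃ z : E, ‖z‖ < 1 ∧ ⟪z - a, w⟫_ℝ = 0 := by
  have habs : |⟪a, w⟫_ℝ| < ‖w‖ := (sq_lt_sq.1 h).trans_eq (abs_norm w)
  have hw : 0 < ‖w‖ := (abs_nonneg _).trans_lt habs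
  refine ⟨(⟪a, w⟫_ℝ / ‖w‖ ^ 2) • w, ?_, ?_⟩
  · rw [norm_smul, Real.norm_eq_abs, abs_div, abs_pow, abs_norm, sq, ← div_div,
      div_mul_cancel₀ _ hw.ne']
    exact (div_lt_one hw).2 habs
  · rw [inner_sub_left, real_inner_smul_left, real_inner_self_eq_norm_sq,
      div_mul_cancel₀ _ (pow_pos hw 2).ne', sub_self]

end Conjugation

theorem tauMap_eq_sphereInversion {n : ℕ} {a x : Euc (n + 1)} (ha : 1 < ‖a‖) (hx : ‖x‖ = 1) :
    tauMap a x = sphereInversion a x := by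
  have hdist : ‖x - a‖ ^ 2 ≠ 0 :=
    pow_ne_zero 2 (norm_sub_pos_iff.2 (ne_of_norm_eq_one ha hx)).ne'
  have hcoeff : 2 * (1 - ⟪x, a⟫_ℝ) = ‖x - a‖ ^ 2 - (‖a‖ ^ 2 - 1) := by
    rw [norm_sub_sq_real, hx]
    ring
  rw [tauMap, sphereInversion_eq ha.le, hcoeff, conformalFactor, div_eq_inv_mul, mul_smul,
    inv_smul_eq_iff₀ hdist, smul_add, smul_inv_smul₀ hdist]
  module

theorem wop_eq_inversionOp {n k : ℕ} (hk : 1 ≤ k) {a x : Euc (n + 1)} (ha : 1 < ‖a‖)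
    (hx : ‖x‖ = 1) (f : Euc (n + 1) → ℝ) : Wop k a f x = inversionOp (k - 1) a f x := by
  rw [Wop, inversionOp, tauMap_eq_sphereInversion ha hx, conformalFactor, norm_sub_rev,
    ← Nat.cast_pred hk, Real.rpow_natCast]

section FunkTransform

open Module (finrank)

variable {E : Type*} [NormedAddCommGroup E] [InnerProductSpace ℝ E] [MeasurableSpace E]
  [BorelSpace E] {a e w x : E} {s : ℝ} {f : E → ℝ} {k : ℕ}

/-- The shifted Funk transform of `f` with centre `a` vanishes on the `k`-planes through `a` that
meet the open unit ball. -/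
def HasZeroFunkTransform (k : ℕ) (a : E) (f : E → ℝ) : Prop :=
  ∀ τ : AffineSubspace ℝ E, finrank ℝ τ.direction = k → a ∈ τ → (∃ z ∈ τ, ‖z‖ < 1) →
    ∫ x in sphere 0 1 ∩ (τ : Set E), f x ∂μH[(k : ℝ) - 1] = 0

namespace HasZeroFunkTransform

theorem comp_subtype (h : HasZeroFunkTransform k a f) (hk : 1 ≤ k) (V : Submodule ℝ E)
    [FiniteDimensional ℝ V] (ha : a ∈ V) :
    HasZeroFunkTransform k (⟨a, ha⟩ : V) fun y => f y := by
  rintro τ hτ haτ ⟨z, hz, hz1⟩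
  let τ' : AffineSubspace ℝ E := τ.map V.subtype.toAffineMap
  have hτ' : finrank ℝ τ'.direction = k := by
    rw [AffineSubspace.map_direction, LinearMap.toAffineMap_linear,
      Submodule.finrank_map_subtype_eq, hτ]
  have hpreimage : V.subtype ⁻¹' (sphere 0 1 ∩ τ') = sphere 0 1 ∩ τ := by
    ext y
    simp [τ']
  have hsubset : (sphere 0 1 ∩ τ' : Set E) ⊆ Set.range V.subtype := by
    rintro _ ⟨-, y, -, rfl⟩
    exact ⟨y, rfl⟩
  have hd : (0 : ℝ) ≤ k - 1 := sub_nonneg.2 (mod_cast hk)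
  have hembedding : MeasurableEmbedding V.subtype :=
    .subtype_coe V.closed_of_finiteDimensional.measurableSet
  have hisometry : Isometry V.subtype := isometry_subtype_coe
  rw [← h τ' hτ' ⟨_, haτ, rfl⟩ ⟨z, ⟨z, hz, rfl⟩, hz1⟩, ← hpreimage,
    ← Measure.restrict_restrict_of_subset hsubset, ← hisometry.map_hausdorffMeasure (.inl hd),
    hembedding.setIntegral_map]
  rfl

theorem setIntegral_hyperplane (h : HasZeroFunkTransform k a f) (hE : finrank ℝ E = k + 1)
    (hw : w ≠ 0) (hz : ∃ z : E, ‖z‖ < 1 ∧ ⟪z - a, w⟫_ℝ = 0) :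
    ∫ x in sphere 0 1 ∩ {x | ⟪x - a, w⟫_ℝ = 0}, f x ∂μH[(k : ℝ) - 1] = 0 := by
  have : Fact (finrank ℝ E = k + 1) := ⟨hE⟩
  have hmem : ∀ x, x ∈ AffineSubspace.mk' a (ℝ ∙ w)ᗮ ↔ ⟪x - a, w⟫_ℝ = 0 := fun x => by
    rw [AffineSubspace.mem_mk', vsub_eq_sub, Submodule.mem_orthogonal_singleton_iff_inner_left]
  obtain ⟨z, hz1, hzw⟩ := hz
  have hset : {x | ⟪x - a, w⟫_ℝ = 0} = (AffineSubspace.mk' a (ℝ ∙ w)ᗮ : Set E) :=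
    Set.ext fun x => (hmem x).symm
  rw [hset]
  exact h _ (by rw [AffineSubspace.direction_mk',
      Submodule.finrank_orthogonal_span_singleton (n := k) hw])
    (AffineSubspace.self_mem_mk' a _) ⟨z, (hmem z).2 hzw, hz1⟩

variable [FiniteDimensional ℝ E]

theorem hasZeroSlicesAlong (h : HasZeroFunkTransform k (((s ^ 2 + 1) / (2 * s)) • e) f)
    (hk : 1 ≤ k) (hE : finrank ℝ E = k + 1) (he : ‖e‖ = 1) (hs : 1 < s) :
    HasZeroSlicesAlong e (inversionOp (k - 1) (s • e) f) := by
  intro u hu hue t ht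
  have hs0 : 0 < s := one_pos.trans hs
  have hs1 : 0 < s ^ 2 - 1 := by nlinarith
  have hcenter : 1 < ‖s • e‖ := by rwa [norm_smul_of_norm_eq_one he hs0.le]
  have hnorm : ‖(s ^ 2 - 1) • u + (2 * s * t) • e‖ ^ 2 = (s ^ 2 - 1) ^ 2 + (2 * s * t) ^ 2 := by
    rw [norm_add_sq_real, real_inner_smul_left, real_inner_smul_right, hue, norm_smul, norm_smul,
      mul_pow, mul_pow, hu, he, Real.norm_eq_abs, Real.norm_eq_abs, sq_abs, sq_abs]
    ring
  have hinner : ⟪((s ^ 2 + 1) / (2 * s)) • e, (s ^ 2 - 1) • u + (2 * s * t) • e⟫_ℝ =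
      (s ^ 2 + 1) * t := by
    rw [inner_add_right, real_inner_smul_left, real_inner_smul_left, real_inner_smul_right,
      real_inner_smul_right, real_inner_comm, hue, real_inner_self_eq_norm_sq, he]
    field_simp
    ring
  have hlt : ⟪((s ^ 2 + 1) / (2 * s)) • e, (s ^ 2 - 1) • u + (2 * s * t) • e⟫_ℝ ^ 2 <
      ‖(s ^ 2 - 1) • u + (2 * s * t) • e‖ ^ 2 := by
    rw [hinner, hnorm]
    linarith [mul_pos (pow_pos hs1 2) (sub_pos.2 ht)]
  have hw : (s ^ 2 - 1) • u + (2 * s * t) • e ≠ 0 :=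
    norm_pos_iff.1 ((abs_nonneg _).trans_lt ((sq_lt_sq.1 hlt).trans_eq (abs_norm _)))
  have hdim : (finrank ℝ E : ℝ) - 2 = k - 1 := by
    rw [hE]
    push_cast
    ring
  rw [hdim, ← setIntegral_image_sphereInversion hcenter (sub_nonneg.2 (mod_cast hk)),
    image_sphereInversion_smul_slice he hs hue]
  · exact h.setIntegral_hyperplane hE hw (exists_norm_lt_one_inner_sub_eq_zero hlt)
  · exact (isClosed_sphere.inter (isClosed_eq (by fun_prop) continuous_const)).measurableSet
  · exact fun hmem => hcenter.ne' (mem_sphere_zero_iff_norm.1 hmem.1)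

theorem eq_neg_inversionOp_of_finrank_eq (h : HasZeroFunkTransform k a f) (hk : 1 ≤ k)
    (hE : finrank ℝ E = k + 1) (ha : 1 < ‖a‖) (hf : ContinuousOn f (sphere 0 1)) (hx : ‖x‖ = 1) :
    f x = -inversionOp (k - 1) a f x := by
  obtain ⟨e, s, he, hs, rfl⟩ := exists_eq_smul_of_one_lt_norm ha
  have hcenter : 1 < ‖s • e‖ := by rwa [norm_smul_of_norm_eq_one he (one_pos.trans hs).le]
  have hz := norm_sphereInversion hcenter hx
  have hodd := (h.hasZeroSlicesAlong hk hE he hs).reflection_eq_neg (by omega) he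
    (continuousOn_inversionOp hcenter (sub_nonneg.2 (mod_cast hk)) hf) hz
  rw [← inversionOp_inversionOp_smul he hs hz, inversionOp, inversionOp.eq_1 _ (s • e) f,
    sphereInversion_sphereInversion hcenter, ← mul_neg] at hodd
  have hfactor := Real.rpow_pos_of_pos
    (conformalFactor_pos hcenter (ne_of_norm_eq_one hcenter hz)) ((k : ℝ) - 1)
  rw [mul_left_cancel₀ hfactor.ne' hodd, neg_neg]

end HasZeroFunkTransform

theorem exists_le_finrank_eq {K M : Type*} [DivisionRing K] [AddCommGroup M] [Module K M]
    [FiniteDimensional K M] (N : Submodule K M) {j : ℕ} (hN : finrank K N ≤ j)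
    (hj : j ≤ finrank K M) : ∃ P : Submodule K M, N ≤ P ∧ finrank K P = j := by
  induction j, hN using Nat.le_induction with
  | base => exact ⟨N, le_rfl, rfl⟩
  | succ j _ ih =>
    obtain ⟨P, hNP, rfl⟩ := ih (Nat.le_of_succ_le hj)
    obtain ⟨v, hv⟩ := P.exists_of_finrank_lt hj
    have hvP : v ∉ P := fun h => hv 1 one_ne_zero (P.smul_mem 1 h)
    refine ⟨P ⊔ K ∙ v, hNP.trans le_sup_left, le_antisymm ?_ ?_⟩
    · exact (Submodule.finrank_add_le_finrank_add_finrank P _).trans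
        (Nat.add_le_add_left (finrank_span_le_card {v}) _)
    · exact Submodule.finrank_lt_finrank_of_lt (left_lt_sup.2 fun h =>
        hvP (h (Submodule.mem_span_singleton_self v)))

variable [FiniteDimensional ℝ E]

theorem HasZeroFunkTransform.eq_neg_inversionOp (h : HasZeroFunkTransform k a f) (hk : 1 ≤ k)
    (hE : k < finrank ℝ E) (ha : 1 < ‖a‖) (hf : ContinuousOn f (sphere 0 1)) (hx : ‖x‖ = 1) :
    f x = -inversionOp (k - 1) a f x := by
  have hspan : finrank ℝ (Submodule.span ℝ (Set.range ![a, x])) ≤ k + 1 :=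
    (finrank_range_le_card _).trans (Nat.add_le_add_right hk 1)
  obtain ⟨V, hV, hdim⟩ := exists_le_finrank_eq _ hspan hE
  have haV : a ∈ V := hV (Submodule.subset_span ⟨0, rfl⟩)
  have hxV : x ∈ V := hV (Submodule.subset_span ⟨1, rfl⟩)
  have hfV : ContinuousOn (fun y : V => f y) (sphere 0 1) :=
    hf.comp continuous_subtype_val.continuousOn fun y hy =>
      mem_sphere_zero_iff_norm.2 (mem_sphere_zero_iff_norm.1 hy)
  exact (h.comp_subtype hk V haV).eq_neg_inversionOp_of_finrank_eq hk hdim ha hfV (x := ⟨x, hxV⟩) hx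

theorem hasZeroFunkTransform_of_eq_neg_inversionOp (hk : 1 ≤ k) (ha : 1 < ‖a‖)
    (h : ∀ x ∈ sphere (0 : E) 1, f x = -inversionOp (k - 1) a f x) :
    HasZeroFunkTransform k a f := by
  intro τ _ haτ _
  have hmeas : MeasurableSet (sphere 0 1 ∩ τ : Set E) :=
    (isClosed_sphere.inter τ.closed_of_finiteDimensional).measurableSet
  have hneg : ∫ x in sphere 0 1 ∩ τ, f x ∂μH[(k : ℝ) - 1] =
      -∫ x in sphere 0 1 ∩ τ, f x ∂μH[(k : ℝ) - 1] :=
    calc ∫ x in sphere 0 1 ∩ τ, f x ∂μH[(k : ℝ) - 1]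
        = ∫ x in sphere 0 1 ∩ τ, -inversionOp (k - 1) a f x ∂μH[(k : ℝ) - 1] :=
          setIntegral_congr_fun hmeas fun x hx => h x hx.1
      _ = -∫ x in sphereInversion a '' (sphere 0 1 ∩ τ), f x ∂μH[(k : ℝ) - 1] := by
          rw [integral_neg, setIntegral_image_sphereInversion ha (sub_nonneg.2 (mod_cast hk)) hmeas
            fun hmem => ha.ne' (mem_sphere_zero_iff_norm.1 hmem.1)]
      _ = -∫ x in sphere 0 1 ∩ τ, f x ∂μH[(k : ℝ) - 1] := by
          rw [image_sphereInversion_sphere_inter ha haτ]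
  exact self_eq_neg.1 hneg

theorem statement9_general (hk : 1 ≤ k) (hE : k < finrank ℝ E) (ha : 1 < ‖a‖)
    (hf : ContinuousOn f (sphere 0 1)) :
    HasZeroFunkTransform k a f ↔ ∀ x ∈ sphere (0 : E) 1, f x = -inversionOp (k - 1) a f x :=
  ⟨fun h _ hx => h.eq_neg_inversionOp hk hE ha hf (mem_sphere_zero_iff_norm.1 hx),
    hasZeroFunkTransform_of_eq_neg_inversionOp hk ha⟩

end FunkTransform

/-- Kernel of the shifted Funk transform with exterior center:
for `f` continuous on `S^n`, the integrals of `f` over all sections of `S^n` by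
`k`-planes through `a` meeting the open unit ball vanish iff `f = −W_a f` on `S^n`. -/
theorem statement9 (n k : ℕ) (hn : 2 ≤ n) (hk : 1 < k) (hkn : k ≤ n)
    (a : Euc (n + 1)) (ha : 1 < ‖a‖)
    (f : Euc (n + 1) → ℝ)
    (hf : ContinuousOn f (sphere (0 : Euc (n + 1)) 1)) :
    (∀ τ : AffineSubspace ℝ (Euc (n + 1)),
        Module.finrank ℝ τ.direction = k → a ∈ τ →
        (∃ z ∈ τ, ‖z‖ < 1) →
        (∫ x in sphere (0 : Euc (n + 1)) 1 ∩ (τ : Set (Euc (n + 1))),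
          f x ∂μH[(k : ℝ) - 1]) = 0) ↔
      ∀ x ∈ sphere (0 : Euc (n + 1)) 1, f x = -Wop k a f x :=
  (statement9_general hk.le (by rw [finrank_euclideanSpace_fin]; omega) ha hf).trans
    (forall₂_congr fun x hx => by rw [wop_eq_inversionOp hk.le ha (mem_sphere_zero_iff_norm.1 hx)])
end

section
/- Let n ≥ 1 and let b ∈ ℝ^{n+1} with 0 < |b| < 1. Then for every x ∈ ℝ^{n+1} with x·b ≠ 1, (1 − b·(φ_b x)) (1 − b·x) = 1 − |b|². -/
open MeasureTheory Metric Matrix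
open scoped InnerProductSpace ENNReal

section ScaledMoebius

open Submodule

variable {𝕜 E : Type*} [RCLike 𝕜] [NormedAddCommGroup E] [InnerProductSpace 𝕜 E]

theorem inner_starProjection_of_mem_left {K : Submodule 𝕜 E} [K.HasOrthogonalProjection] {u : E}
    (hu : u ∈ K) (v : E) : ⟪u, K.starProjection v⟫_𝕜 = ⟪u, v⟫_𝕜 :=
  inner_orthogonalProjectionOnto_eq_of_mem_left ⟨u, hu⟩ v

theorem inner_starProjection_orthogonal_of_mem_left {K : Submodule 𝕜 E}
    [Kᗮ.HasOrthogonalProjection] {u : E} (hu : u ∈ K) (v : E) :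
    ⟪u, Kᗮ.starProjection v⟫_𝕜 = 0 :=
  inner_right_of_mem_orthogonal hu (starProjection_apply_mem _ v)

/-- The Möbius transformation `x ↦ (b - P x - s Q x) / (1 - ⟪b, x⟫)` of a real or complex inner
product space, where `P` and `Q` are the orthogonal projections onto the line spanned by `b` and
onto its orthogonal complement. The scale `s` is left free; for `‖b‖ < 1`, the choice
`s = √(1 - ‖b‖ ^ 2)` gives the involution of the unit ball exchanging `0` and `b`. -/
noncomputable def scaledMoebius (s : 𝕜) (b x : E) : E :=
  (1 - ⟪b, x⟫_𝕜)⁻¹ • (b - (𝕜 ∙ b).starProjection x - s • (𝕜 ∙ b)ᗮ.starProjection x)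

-- `Q x` is orthogonal to `b`, so the scale `s` drops out.
theorem inner_scaledMoebius_right (s : 𝕜) (b x : E) :
    ⟪b, scaledMoebius s b x⟫_𝕜 = ((‖b‖ : 𝕜) ^ 2 - ⟪b, x⟫_𝕜) / (1 - ⟪b, x⟫_𝕜) := by
  have hb : b ∈ 𝕜 ∙ b := mem_span_singleton_self b
  rw [scaledMoebius, inner_smul_right, inner_sub_right, inner_sub_right, inner_smul_right,
    inner_starProjection_of_mem_left hb, inner_starProjection_orthogonal_of_mem_left hb,
    inner_self_eq_norm_sq_to_K, mul_zero, sub_zero, inv_mul_eq_div]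

theorem statement13_general (s : 𝕜) (b x : E) (hx : ⟪b, x⟫_𝕜 ≠ 1) :
    (1 - ⟪b, scaledMoebius s b x⟫_𝕜) * (1 - ⟪b, x⟫_𝕜) = 1 - (‖b‖ : 𝕜) ^ 2 := by
  have hden : 1 - ⟪b, x⟫_𝕜 ≠ 0 := sub_ne_zero.mpr hx.symm
  rw [inner_scaledMoebius_right, sub_mul, one_mul, div_mul_cancel₀ _ hden,
    sub_sub_sub_cancel_right]

end ScaledMoebius

theorem phiMap_eq_scaledMoebius {n : ℕ} (b x : Euc (n + 1)) :
    phiMap b x = scaledMoebius √(1 - ‖b‖ ^ 2) b x := by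
  simp only [phiMap, scaledMoebius, Submodule.starProjection_orthogonal_val,
    Submodule.starProjection_singleton, RCLike.ofReal_real_eq_id, id_eq, real_inner_comm x b]

/-- For `0 < |b| < 1` and `x·b ≠ 1`,
`(1 − b·(φ_b x))(1 − b·x) = 1 − |b|²`. -/
theorem statement13 (n : ℕ) (hn : 1 ≤ n)
    (b : Euc (n + 1)) (hb0 : 0 < ‖b‖) (hb1 : ‖b‖ < 1) :
    ∀ x : Euc (n + 1), ⟪x, b⟫_ℝ ≠ 1 →
      (1 - ⟪b, phiMap b x⟫_ℝ) * (1 - ⟪b, x⟫_ℝ) = 1 - ‖b‖ ^ 2 := by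
  intro x hx
  rw [phiMap_eq_scaledMoebius]
  exact statement13_general _ b x (real_inner_comm x b ▸ hx)
end

section
/- Let n ≥ 1 and let a ∈ ℝ^{n+1} with |a| > 1. Then for every y ∈ ℝ^{n+1} with y·a* ≠ 1, φ_{a*} y − a = −( s_{a*}/(1 − y·a*) ) ( Q_{a*} y + s_{a*} a ), where Q_{a*} y = y − ((y·a)/|a|²) a. -/
/-! The points `b = a*` and `a` span the same line, so `P_b y = (y·b) a` and `Q_b = Q_a`. Moreover
`|b| = 1/|a|` gives `b = |b|² a = (1 - s²) a` with `s = s_b`. Subtracting `(1 - y·b) a` from the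
numerator `b - P_b y - s Q_b y` of `φ_b y` therefore leaves `-s² a - s Q_a y = -s (Q_a y + s a)`. -/

open MeasureTheory Metric Matrix
open scoped InnerProductSpace ENNReal

section InnerProductSpace

open EuclideanGeometry

variable {E : Type*} [NormedAddCommGroup E] [InnerProductSpace ℝ E]

/-- The Möbius transformation `φ_b` in an arbitrary real inner product space, with `P_b` and `Q_b`
encoded as the orthogonal projections onto the line `ℝ ∙ b` and onto its orthogonal complement.
For `‖b‖ < 1` it maps the unit ball to itself and exchanges `0` and `b`. -/
noncomputable def ballMobius (b x : E) : E :=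
  (1 - ⟪x, b⟫_ℝ)⁻¹ •
    (b - (ℝ ∙ b).starProjection x - √(1 - ‖b‖ ^ 2) • (ℝ ∙ b)ᗮ.starProjection x)

theorem starProjection_orthogonal_span_singleton (a y : E) :
    (ℝ ∙ a)ᗮ.starProjection y = y - (⟪y, a⟫_ℝ / ‖a‖ ^ 2) • a := by
  rw [Submodule.starProjection_orthogonal_val, Submodule.starProjection_singleton, real_inner_comm,
    RCLike.ofReal_real_eq_id, id_eq]

theorem inversion_zero_one_eq_smul (a : E) : inversion 0 1 a = (‖a‖ ^ 2)⁻¹ • a := by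
  simp [inversion]

theorem norm_inversion_zero_one (a : E) : ‖inversion 0 1 a‖ = ‖a‖⁻¹ := by
  simpa using dist_inversion_center (0 : E) a 1

theorem span_singleton_inversion_zero_one (a : E) : ℝ ∙ inversion 0 1 a = ℝ ∙ a := by
  obtain rfl | ha := eq_or_ne a 0
  · rw [inversion_self]
  · rw [inversion_zero_one_eq_smul]
    exact Submodule.span_singleton_smul_eq (by simpa using ha) a

theorem starProjection_span_singleton_eq_inner_inversion_smul (a y : E) :
    (ℝ ∙ a).starProjection y = ⟪y, inversion 0 1 a⟫_ℝ • a := by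
  rw [Submodule.starProjection_singleton, inversion_zero_one_eq_smul, real_inner_smul_right,
    real_inner_comm, div_eq_inv_mul, RCLike.ofReal_real_eq_id, id_eq]

theorem inversion_zero_one_eq_one_sub_sqrt_sq_smul {a : E} (ha : 1 ≤ ‖a‖) :
    inversion 0 1 a = (1 - √(1 - ‖inversion 0 1 a‖ ^ 2) ^ 2) • a := by
  have norm_le_one : ‖inversion 0 1 a‖ ≤ 1 := by
    rw [norm_inversion_zero_one]
    exact inv_le_one_of_one_le₀ ha
  rw [Real.sq_sqrt (sub_nonneg.2 (pow_le_one₀ (norm_nonneg _) norm_le_one)), sub_sub_cancel,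
    norm_inversion_zero_one, inv_pow, inversion_zero_one_eq_smul]

theorem statement16_general {a : E} (ha : 1 ≤ ‖a‖) {y : E} (hy : ⟪y, inversion 0 1 a⟫_ℝ ≠ 1) :
    ballMobius (inversion 0 1 a) y - a =
      (-(√(1 - ‖inversion 0 1 a‖ ^ 2) / (1 - ⟪y, inversion 0 1 a⟫_ℝ))) •
        ((ℝ ∙ a)ᗮ.starProjection y + √(1 - ‖inversion 0 1 a‖ ^ 2) • a) := by
  set b := inversion 0 1 a
  set s := √(1 - ‖b‖ ^ 2)
  set t := ⟪y, b⟫_ℝ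
  set q := (ℝ ∙ a)ᗮ.starProjection y
  have ht : 1 - t ≠ 0 := sub_ne_zero.2 hy.symm
  have hb_smul : b = (1 - s ^ 2) • a := inversion_zero_one_eq_one_sub_sqrt_sq_smul ha
  have mobius_eq : ballMobius b y = (1 - t)⁻¹ • (b - t • a - s • q) := by
    simp only [ballMobius, b, t, q, s, span_singleton_inversion_zero_one,
      starProjection_span_singleton_eq_inner_inversion_smul]
  calc ballMobius b y - a
      = (1 - t)⁻¹ • (b - t • a - s • q - (1 - t) • a) := by
        rw [mobius_eq, smul_sub _ _ ((1 - t) • a), inv_smul_smul₀ ht]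
    _ = (1 - t)⁻¹ • ((1 - s ^ 2) • a - t • a - s • q - (1 - t) • a) := by rw [← hb_smul]
    _ = (-(s / (1 - t))) • (q + s • a) := by module

end InnerProductSpace

theorem phiMap_eq_ballMobius {n : ℕ} (b x : Euc (n + 1)) : phiMap b x = ballMobius b x := by
  rw [phiMap, ballMobius, starProjection_orthogonal_span_singleton,
    Submodule.starProjection_singleton, real_inner_comm b x, RCLike.ofReal_real_eq_id, id_eq]

theorem aStar_eq_inversion {n : ℕ} (a : Euc (n + 1)) :
    aStar a = EuclideanGeometry.inversion 0 1 a :=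
  (inversion_zero_one_eq_smul a).symm

/-- Formula (4.8): for `|a| > 1` and `y·a* ≠ 1`,
`φ_{a*} y − a = −(s_{a*}/(1 − y·a*)) (Q_{a*} y + s_{a*} a)`,
where `Q_{a*} y = y − ((y·a)/|a|²) a`. -/
theorem statement16 (n : ℕ) (hn : 1 ≤ n)
    (a : Euc (n + 1)) (ha : 1 < ‖a‖) :
    ∀ y : Euc (n + 1), ⟪y, aStar a⟫_ℝ ≠ 1 →
      phiMap (aStar a) y - a =
        (-(sStar a / (1 - ⟪y, aStar a⟫_ℝ))) •
          ((y - (⟪y, a⟫_ℝ / ‖a‖ ^ 2) • a) + sStar a • a) := by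
  intro y hy
  rw [sStar, phiMap_eq_ballMobius, aStar_eq_inversion, ← starProjection_orthogonal_span_singleton]
  exact statement16_general ha.le (aStar_eq_inversion a ▸ hy)
end
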